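/- arXiv:1106.3653 — 4 statements merged into one kernel-verified Lean document; each statement's English description precedes it below -/
import Mathlib

section
/- The patterns 12345 and 23451 are even-Wilf-equivalent: for all n ≥ 0, eav_n(12345) = eav_n(23451). -/
/-!
The proof exchanges the two patterns by rotating values, in the manner of Backelin, West and Xin. If
`π` has an occurrence of `12345` at positions `p 0 < … < p 4`, then composing `π` with the 5-cycle `rot p`
shifts its five values one place to the left cyclically and produces an occurrence of `23451` at the
same positions. A 5-cycle is even, so the sign does not change.

Occurrences are compared colexicographically by position (last position first). Call `π` *good* if each of
its `23451`s is smaller than each of its `12345`s; permutations avoiding one of the patterns are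
vacuously good. If a good permutation contains `12345`, rotate at the least occurrence. The result is
good again, and the greatest occurrence of `23451` in it is at the rotated positions (`phi_main`).
Symmetrically, if a good permutation contains `23451`, rotate back at the greatest occurrence: the result is good
and its least `12345` is at the same positions (`psi_main`). Either map can therefore be undone, hence
is injective, and equally many even good permutations contain `12345` as contain `23451`
(`card_contains_eq`). Taking complements among the even good permutations gives the theorem.

The work lies in `phi_main` and `psi_main`, whose ingredients are proved for patterns of any length
`T + 1`. Extremality of `p` is used mainly through `greedyI` and `greedyF`: an increasing subsequence cannot replace
an initial segment of `p` and make it smaller (respectively greater). This allows an increasing subsequence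
of the rotated permutation to be turned, one ascent at a time, into an increasing subsequence of the
original one that is at least as long (`step_up`, `step_dn`, `stepF_dn`, `stepF_up`). Occurrences that the
rotation should not create would then yield forbidden occurrences in the original permutation.
-/

/-- A permutation `π` contains the pattern `σ` if some subsequence of `π`
(given by a strictly increasing choice of indices) is order-isomorphic to `σ`. -/
def Pattern.Contains {k n : ℕ} (σ : Equiv.Perm (Fin k)) (π : Equiv.Perm (Fin n)) : Prop :=
  ∃ f : Fin k → Fin n, StrictMono f ∧ ∀ a b : Fin k, π (f a) < π (f b) ↔ σ a < σ b

/-- `π` avoids the pattern `σ`. -/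
def Pattern.Avoids {k n : ℕ} (σ : Equiv.Perm (Fin k)) (π : Equiv.Perm (Fin n)) : Prop :=
  ¬ Pattern.Contains σ π

/-- `eav n σ`: the number of even permutations of length `n` avoiding `σ`. -/
noncomputable def eav (n : ℕ) {k : ℕ} (σ : Equiv.Perm (Fin k)) : ℕ :=
  Nat.card {π : Equiv.Perm (Fin n) // Equiv.Perm.sign π = 1 ∧ Pattern.Avoids σ π}

/-- Even-Wilf-equivalence: the same number of even avoiders of every length. -/
def EvenWilfEquiv {k l : ℕ} (σ : Equiv.Perm (Fin k)) (τ : Equiv.Perm (Fin l)) : Prop :=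
  ∀ n : ℕ, eav n σ = eav n τ

/-- The pattern `12345` (one-line notation, 1-indexed). -/
def p12345 : Equiv.Perm (Fin 5) :=
  ⟨![0,1,2,3,4], ![0,1,2,3,4], by decide, by decide⟩

/-- The pattern `23451` (one-line notation, 1-indexed). -/
def p23451 : Equiv.Perm (Fin 5) :=
  ⟨![1,2,3,4,0], ![4,0,1,2,3], by decide, by decide⟩

namespace RotWilf

variable {n : ℕ}

/-! ### Chains, occurrences and the colexicographic order -/

/-- `Up π S m x`: some subsequence of `π` that increases in position and in value has `m + 1` terms and
ends at position `x`, its first `m` positions all satisfying `S` (nothing is asked of `x`). -/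
def Up (π : Equiv.Perm (Fin n)) (S : Fin n → Prop) : ℕ → Fin n → Prop
  | 0, _ => True
  | m + 1, x => ∃ y, y < x ∧ π y < π x ∧ S y ∧ Up π S m y

/-- `Dn π b m x`: some subsequence of `π` that increases in position and in value has `m + 1` terms and
starts at position `x`, its last `m` positions all lying before `b` (nothing is asked of `x`). -/
def Dn (π : Equiv.Perm (Fin n)) (b : Fin n) : ℕ → Fin n → Prop
  | 0, _ => True
  | m + 1, x => ∃ y, x < y ∧ π x < π y ∧ y < b ∧ Dn π b m y

theorem Up.pred {π : Equiv.Perm (Fin n)} {S : Fin n → Prop} {m : ℕ} :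
    ∀ {x : Fin n}, Up π S (m + 1) x → Up π S m x := by
  induction m with
  | zero => intro x _; trivial
  | succ m ih =>
    rintro x ⟨y, h1, h2, h3, h4⟩
    exact ⟨y, h1, h2, h3, ih h4⟩

theorem Up.mono {π : Equiv.Perm (Fin n)} {S : Fin n → Prop} {m k : ℕ} {x : Fin n}
    (h : Up π S m x) (hk : k ≤ m) : Up π S k x := by
  induction m, hk using Nat.le_induction with
  | base => exact h
  | succ m _ ih => exact ih h.pred

theorem Dn.pred {π : Equiv.Perm (Fin n)} {b : Fin n} {m : ℕ} :
    ∀ {x : Fin n}, Dn π b (m + 1) x → Dn π b m x := by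
  induction m with
  | zero => intro x _; trivial
  | succ m ih =>
    rintro x ⟨y, h1, h2, h3, h4⟩
    exact ⟨y, h1, h2, h3, ih h4⟩

theorem Up.exists_chain {π : Equiv.Perm (Fin n)} {S : Fin n → Prop} {m : ℕ} :
    ∀ {x : Fin n}, Up π S m x → ∃ z : ℕ → Fin n, z m = x ∧
      (∀ i j, i < j → j ≤ m → z i < z j ∧ π (z i) < π (z j)) ∧ ∀ i, i < m → S (z i) := by
  induction m with
  | zero => intro x _; exact ⟨fun _ => x, rfl, by omega, by omega⟩
  | succ m ih =>
    rintro x ⟨y, h1, h2, h3, h4⟩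
    obtain ⟨z, rfl, hz, hS⟩ := ih h4
    refine ⟨fun i => if i ≤ m then z i else x, by simp, ?_, ?_⟩
    · intro i j hij hj
      have hi : i ≤ m := by omega
      by_cases hj' : j ≤ m
      · simpa [hi, hj'] using hz i j hij hj'
      · simp only [hi, hj', if_true, if_false]
        rcases hi.lt_or_eq with hi | rfl
        · exact ⟨(hz i m hi le_rfl).1.trans h1, (hz i m hi le_rfl).2.trans h2⟩
        · exact ⟨h1, h2⟩
    · intro i hi
      have hi' : i ≤ m := by omega
      simp only [hi', if_true]
      rcases hi'.lt_or_eq with hi | rfl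
      · exact hS i hi
      · exact h3

theorem Dn.exists_chain {π : Equiv.Perm (Fin n)} {b : Fin n} {m : ℕ} :
    ∀ {x : Fin n}, Dn π b m x → ∃ z : ℕ → Fin n, z 0 = x ∧
      (∀ i j, i < j → j ≤ m → z i < z j ∧ π (z i) < π (z j)) ∧
        ∀ i, 0 < i → i ≤ m → z i < b := by
  induction m with
  | zero => intro x _; exact ⟨fun _ => x, rfl, by omega, by omega⟩
  | succ m ih =>
    rintro x ⟨y, h1, h2, h3, h4⟩
    obtain ⟨z, rfl, hz, hb⟩ := ih h4
    refine ⟨fun i => if i = 0 then x else z (i - 1), by simp, ?_, ?_⟩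
    · intro i j hij hj
      have hj0 : j ≠ 0 := by omega
      by_cases hi : i = 0
      · simp only [hi, hj0, if_true, if_false]
        rcases Nat.eq_zero_or_pos (j - 1) with h | h
        · rw [h]; exact ⟨h1, h2⟩
        · exact ⟨h1.trans (hz 0 _ h (by omega)).1, h2.trans (hz 0 _ h (by omega)).2⟩
      · simp only [hi, hj0, if_false]
        exact hz _ _ (by omega) (by omega)
    · intro i hi hi'
      have hj0 : i ≠ 0 := by omega
      simp only [hj0, if_false]
      rcases Nat.eq_zero_or_pos (i - 1) with h | h
      · rw [h]; exact h3
      · exact hb _ h (by omega)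

/-- The positions `p 0 < … < p T` carry an occurrence of `1 2 … (T+1)` in `π`. Positions are indexed
by `ℕ`, and `p i` is irrelevant for `i > T`. -/
def IOcc (T : ℕ) (π : Equiv.Perm (Fin n)) (p : ℕ → Fin n) : Prop :=
  ∀ i j, i < j → j ≤ T → p i < p j ∧ π (p i) < π (p j)

/-- The positions `p 0 < … < p T` carry an occurrence of `2 3 … (T+1) 1` in `π`. -/
structure FOcc (T : ℕ) (π : Equiv.Perm (Fin n)) (p : ℕ → Fin n) : Prop where
  pos : ∀ i j, i < j → j ≤ T → p i < p j
  val : ∀ i j, i < j → j < T → π (p i) < π (p j)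
  last : ∀ i, i < T → π (p T) < π (p i)

/-- Strict colexicographic order on position tuples: the last index `≤ T` where `q` and `p` differ has
`q j < p j`. -/
def CLt (T : ℕ) (q p : ℕ → Fin n) : Prop :=
  ∃ j ≤ T, q j < p j ∧ ∀ l, j < l → l ≤ T → q l = p l

/-- `c` is the `(T+1)`-cycle `p 0 ↦ p 1 ↦ … ↦ p T ↦ p 0`. If `p` is an increasing occurrence in `π`,
then `π * c` has an occurrence of `2 3 … (T+1) 1` at the same positions. -/
structure IsRot (T : ℕ) (p : ℕ → Fin n) (c : Equiv.Perm (Fin n)) : Prop where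
  step : ∀ i, i < T → c (p i) = p (i + 1)
  last : c (p T) = p 0
  fix : ∀ x, (∀ i, i ≤ T → x ≠ p i) → c x = x

theorem IOcc.up {T : ℕ} {π : Equiv.Perm (Fin n)} {p : ℕ → Fin n} (h : IOcc T π p)
    {S : Fin n → Prop} : ∀ i, i ≤ T → (∀ j, j < i → S (p j)) → Up π S i (p i) := by
  intro i
  induction i with
  | zero => intros; trivial
  | succ i ih =>
    intro hi hS
    exact ⟨p i, (h i (i+1) (by omega) hi).1, (h i (i+1) (by omega) hi).2, hS i (by omega),
      ih (by omega) fun j hj => hS j (by omega)⟩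

/-! ### Rotating the colexicographically least increasing occurrence -/

section phi

variable {T : ℕ} {π c : Equiv.Perm (Fin n)} {p : ℕ → Fin n}

/-- Greediness of the colex-least increasing occurrence `p`: an increasing subsequence with `i + 1` terms
that ends to the left of `p i` and below the value at `p (i + 1)` could replace `p 0, …, p i`,
giving a smaller occurrence. -/
theorem greedyI (hI : IOcc T π p) (hmin : ∀ q, IOcc T π q → ¬ CLt T q p) {i : ℕ} (hi : i ≤ T)
    {x : Fin n} (hx : x < p i) (hv : i < T → π x < π (p (i + 1))) :
    ¬ Up π (fun _ => True) i x := by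
  intro hU
  obtain ⟨z, rfl, hz, -⟩ := hU.exists_chain
  refine hmin (fun l => if l ≤ i then z l else p l) ?_ ⟨i, hi, by simpa using hx, ?_⟩
  · intro a b hab hb
    by_cases hbi : b ≤ i
    · have hai : a ≤ i := by omega
      simpa [hbi, hai] using hz a b hab hbi
    · by_cases hai : a ≤ i
      · simp only [hbi, hai, if_true, if_false]
        have h1 : z a ≤ z i ∧ π (z a) ≤ π (z i) := by
          rcases hai.lt_or_eq with h | rfl
          · exact ⟨(hz a i h le_rfl).1.le, (hz a i h le_rfl).2.le⟩
          · exact ⟨le_rfl, le_rfl⟩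
        have h2 : π (p (i+1)) ≤ π (p b) := by
          rcases (show i + 1 ≤ b by omega).lt_or_eq with h | rfl
          · exact (hI _ b h hb).2.le
          · exact le_rfl
        exact ⟨h1.1.trans_lt (hx.trans (hI i b (by omega) hb).1),
          h1.2.trans_lt ((hv (by omega)).trans_le h2)⟩
      · simpa [hbi, hai] using hI a b hab hb
  · intro l hl _
    have : ¬ l ≤ i := by omega
    simp [this]

theorem IOcc.lt_iff (hI : IOcc T π p) {i j : ℕ} (hi : i ≤ T) (hj : j ≤ T) :
    (p i < p j ↔ i < j) ∧ (π (p i) < π (p j) ↔ i < j) := by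
  rcases lt_trichotomy i j with h | rfl | h
  · simp [h, hI i j h hj]
  · simp
  · have := hI j i h hi
    exact ⟨⟨fun h' => absurd h' this.1.not_gt, fun h' => absurd h' h.not_gt⟩,
      ⟨fun h' => absurd h' this.2.not_gt, fun h' => absurd h' h.not_gt⟩⟩

/-- To the left of `p T`, an ascent of the rotated permutation extends increasing subsequences of `π`
itself, although it need not be an ascent of `π`. -/
theorem step_up (hI : IOcc T π p) (hmin : ∀ q, IOcc T π q → ¬ CLt T q p) (hc : IsRot T p c)
    {x y : Fin n} (hxy : x < y) (hyT : y < p T) (hv : π (c x) < π (c y)) {m : ℕ}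
    (hU : Up π (fun _ => True) m x) : Up π (fun _ => True) (m + 1) y := by
  by_cases hy : ∃ i, i ≤ T ∧ y = p i
  · obtain ⟨i, hi, rfl⟩ := hy
    have hiT : i < T := ((hI.lt_iff hi le_rfl).1).1 hyT
    by_cases hx : ∃ j, j ≤ T ∧ x = p j
    · obtain ⟨j, hj, rfl⟩ := hx
      have hji := ((hI.lt_iff hj hi).1).1 hxy
      exact ⟨p j, hxy, (hI j i hji hi).2, trivial, hU⟩
    · push Not at hx
      rw [hc.fix x hx, hc.step i hiT] at hv
      have h := greedyI hI hmin hi hxy (fun _ => hv)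
      have hm : m < i := by
        by_contra hcon
        exact h (hU.mono (by omega))
      exact (hI.up i hi (fun _ _ => trivial)).mono hm
  · push Not at hy
    rw [hc.fix y hy] at hv
    by_cases hx : ∃ j, j ≤ T ∧ x = p j
    · obtain ⟨j, hj, rfl⟩ := hx
      have hjT := ((hI.lt_iff hj le_rfl).1).1 (hxy.trans hyT)
      rw [hc.step j hjT] at hv
      exact ⟨p j, hxy, (hI j (j+1) (by omega) hjT).2.trans hv, trivial, hU⟩
    · push Not at hx
      rw [hc.fix x hx] at hv
      exact ⟨x, hxy, hv, trivial, hU⟩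

/-- Along an increasing subsequence `q` of the rotated permutation ending to the left of `p T`, the position
`q i` is the end of an increasing subsequence of `π` with `i + 1` terms. -/
theorem chain_up (hI : IOcc T π p) (hmin : ∀ q, IOcc T π q → ¬ CLt T q p) (hc : IsRot T p c)
    {q : ℕ → Fin n} {k : ℕ} (hq : ∀ i j, i < j → j ≤ k → q i < q j ∧ π (c (q i)) < π (c (q j)))
    (hk : q k < p T) : ∀ i, i ≤ k → Up π (fun _ => True) i (q i) := by
  intro i
  induction i with
  | zero => intros; trivial
  | succ i ih =>
    intro hi
    refine step_up hI hmin hc (hq i (i+1) (by omega) hi).1 ?_ (hq i (i+1) (by omega) hi).2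
      (ih (by omega))
    rcases hi.lt_or_eq with h | h
    · exact (hq _ _ h le_rfl).1.trans hk
    · rwa [h]

/-- Rotation does not lower any value to the left of `p T`. -/
theorem le_rot (hI : IOcc T π p) (hc : IsRot T p c) {x : Fin n} (hx : x < p T) :
    π x ≤ π (c x) := by
  by_cases h : ∃ j, j ≤ T ∧ x = p j
  · obtain ⟨j, hj, rfl⟩ := h
    have hjT := ((hI.lt_iff hj le_rfl).1).1 hx
    rw [hc.step j hjT]
    exact (hI j (j+1) (by omega) hjT).2.le
  · push Not at h
    rw [hc.fix x h]

/-- After rotating the colex-least increasing occurrence `p`, every increasing occurrence is colex-greater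
than `p`. -/
theorem phi_I (hT : 0 < T) (hI : IOcc T π p) (hmin : ∀ q, IOcc T π q → ¬ CLt T q p)
    (hc : IsRot T p c) {q : ℕ → Fin n} (hq : IOcc T (π * c) q) :
    ¬ CLt T q p ∧ ¬ ∀ i, i ≤ T → q i = p i := by
  have hq' : ∀ i j, i < j → j ≤ T → q i < q j ∧ π (c (q i)) < π (c (q j)) := hq
  constructor
  · rintro ⟨j, hj, hlt, heq⟩
    rcases hj.lt_or_eq with hjT | rfl
    · have hqT := heq T hjT le_rfl
      have h2 := hq' j T hjT le_rfl
      rw [hqT, hc.last] at h2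
      rcases Nat.lt_or_ge (j + 1) T with h1 | h1
      · have h3 := (hq' (j+1) T h1 le_rfl).2
        rw [hqT, hc.last, heq (j+1) (by omega) (by omega), hc.step _ h1] at h3
        have := ((hI.lt_iff (by omega) (by omega)).2).1 h3
        omega
      · have hU := chain_up hI hmin hc (q := q) (k := j)
          (fun a b hab hb => hq' a b hab (by omega)) h2.1 j le_rfl
        refine greedyI hI hmin hj hlt (fun _ => ?_) hU
        refine (le_rot hI hc h2.1).trans_lt (h2.2.trans (hI _ _ (by omega) hjT).2)
    · have hU := chain_up hI hmin hc (q := q) (k := j) hq' hlt j le_rfl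
      exact greedyI hI hmin le_rfl hlt (fun h => absurd h (lt_irrefl _)) hU
  · intro heq
    have h := (hq' 0 T hT le_rfl).2
    rw [heq 0 (by omega), heq T le_rfl, hc.step 0 hT, hc.last] at h
    have := ((hI.lt_iff (by omega) (by omega)).2).1 h
    omega

/-- After rotating the colex-least increasing occurrence `p`, an occurrence of `2 3 … (T+1) 1` ending at
`p T` is not colex-greater than `p`. -/
theorem phi_F_eq (hI : IOcc T π p) (hmin : ∀ q, IOcc T π q → ¬ CLt T q p)
    (hc : IsRot T p c) {q : ℕ → Fin n} (hq : FOcc T (π * c) q) (hqT : q T = p T) :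
    ¬ CLt T p q := by
  rintro ⟨j, hj, hlt, heq⟩
  have hjT : j < T := by
    rcases hj.lt_or_eq with h | rfl
    · exact h
    · rw [hqT] at hlt; exact absurd hlt (lt_irrefl _)
  have hval : ∀ a b, a < b → b < T → π (c (q a)) < π (c (q b)) := hq.val
  have hpT : ∀ i, i < T → q i < p T := fun i hi => hqT ▸ hq.pos i T hi le_rfl
  -- A position `x` of rank `l` with large rotated value is either weakly left of `p l` with a value at
  -- least that at `p (l + 1)`, or already has rank `l + 1` in `π`.
  have key : ∀ l, l < T → ∀ x, x < p T → Up π (fun _ => True) l x → π (p l) < π (c x) →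
      (x ≤ p l ∧ π (p (l+1)) ≤ π (c x)) ∨ Up π (fun _ => True) (l+1) x := by
    intro l hl x hx hU hv
    by_cases h : ∃ m, m ≤ T ∧ x = p m
    · obtain ⟨m, hm, rfl⟩ := h
      have hmT := ((hI.lt_iff hm le_rfl).1).1 hx
      rw [hc.step m hmT] at hv ⊢
      have := ((hI.lt_iff hl.le hmT).2).1 hv
      rcases (show l ≤ m by omega).lt_or_eq with h | rfl
      · exact Or.inr ((hI.up m hm (fun _ _ => trivial)).mono h)
      · exact Or.inl ⟨le_rfl, le_rfl⟩
    · push Not at h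
      rw [hc.fix x h] at hv ⊢
      rcases lt_trichotomy x (p l) with h1 | h1 | h1
      · left
        refine ⟨h1.le, ?_⟩
        by_contra hcon
        exact greedyI hI hmin hl.le h1 (fun _ => not_le.1 hcon) hU
      · exact absurd h1 (h l hl.le)
      · right
        exact ⟨p l, h1, hv, trivial, hI.up l hl.le (fun _ _ => trivial)⟩
  have hchain := chain_up hI hmin hc (q := q) (k := T - 1)
    (fun a b hab hb => ⟨hq.pos a b hab (by omega), hval a b hab (by omega)⟩)
    (hpT _ (by omega))
  -- The second alternative, once reached, persists along `q`; at `j` it contradicts greediness.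
  have main : ∀ l, l < T → (q l ≤ p l ∧ π (p (l+1)) ≤ π (c (q l))) ∨
      Up π (fun _ => True) (l+1) (q l) := by
    intro l
    induction l with
    | zero =>
      intro h0
      refine key 0 h0 _ (hpT _ h0) trivial ?_
      have h : π (c (q T)) < π (c (q 0)) := hq.last 0 h0
      rwa [hqT, hc.last] at h
    | succ l ih =>
      intro hl
      have hs := hval l (l+1) (by omega) hl
      rcases ih (by omega) with h | h
      · exact key (l+1) hl _ (hpT _ hl) (hchain _ (by omega)) (h.2.trans_lt hs)
      · exact Or.inr (step_up hI hmin hc (hq.pos l (l+1) (by omega) hl.le) (hpT _ hl) hs h)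
  rcases main j hjT with h | h
  · exact absurd hlt (not_lt.2 h.1)
  · have hs : q j < p (j+1) := (heq (j+1) (by omega) hjT).symm ▸ hq.pos j (j+1) (by omega) hjT
    refine greedyI hI hmin hjT hs (fun hjT' => ?_) h
    have := hval j (j+1) (by omega) hjT'
    rw [← heq (j+1) (by omega) hjT, hc.step _ hjT'] at this
    exact (le_rot hI hc (hpT _ hjT)).trans_lt this

/-- Let `z` end an increasing subsequence with `k + 1` terms and lie above the value at `p k`. An increasing
subsequence of `π` starting at `z` can be traded for one starting at `p k` with one more term:
if `z` is left of `p k`, greediness puts `z` weakly above `p (k + 1)`, and the trade is repeated from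
`p (k + 1)` with the next term. -/
theorem shift_dn (hI : IOcc T π p) (hmin : ∀ q, IOcc T π q → ¬ CLt T q p) {b : Fin n}
    (hb : p T < b) (m : ℕ) : ∀ k, k ≤ T → ∀ z, Up π (fun _ => True) k z → π (p k) < π z → z < b →
      Dn π b m z → Dn π b (m + 1) (p k) := by
  induction m with
  | zero =>
    intro k hk z hU hv hzb _
    rcases lt_trichotomy z (p k) with h | h | h
    · have hkT : k < T := by
        by_contra hcon
        exact greedyI hI hmin hk h (fun h' => absurd h' hcon) hU
      refine ⟨p (k+1), (hI k (k+1) (by omega) hkT).1, (hI k (k+1) (by omega) hkT).2, ?_, trivial⟩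
      refine lt_of_le_of_lt ?_ hb
      rcases (show k + 1 ≤ T from hkT).lt_or_eq with h | h
      · exact (hI _ _ h le_rfl).1.le
      · rw [h]
    · rw [h] at hv; exact absurd hv (lt_irrefl _)
    · exact ⟨z, h, hv, hzb, trivial⟩
  | succ m ih =>
    intro k hk z hU hv hzb hD
    rcases lt_trichotomy z (p k) with h | h | h
    · have hkT : k < T := by
        by_contra hcon
        exact greedyI hI hmin hk h (fun h' => absurd h' hcon) hU
      have hkk := hI k (k+1) (by omega) hkT
      have hv' : π (p (k+1)) ≤ π z := by
        by_contra hcon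
        exact greedyI hI hmin hk h (fun h' => not_le.1 hcon) hU
      obtain ⟨z', h1, h2, h3, h4⟩ := hD
      refine ⟨p (k+1), hkk.1, hkk.2, ?_, ih (k+1) hkT z' ⟨z, h1, h2, trivial, hU⟩
        (hv'.trans_lt h2) h3 h4⟩
      refine lt_of_le_of_lt ?_ hb
      rcases (show k + 1 ≤ T from hkT).lt_or_eq with h | h
      · exact (hI _ _ h le_rfl).1.le
      · rw [h]
    · rw [h] at hv; exact absurd hv (lt_irrefl _)
    · exact ⟨z, h, hv, hzb, hD⟩

theorem IOcc.le_last (hI : IOcc T π p) {i : ℕ} (hi : i ≤ T) : p i ≤ p T := by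
  rcases hi.lt_or_eq with h | rfl
  · exact (hI _ _ h le_rfl).1.le
  · exact le_rfl

/-- An ascent of the rotated permutation from `x` to `y` extends increasing subsequences of `π` to the
left, when positions are followed through `c`, so that the values are kept. -/
theorem step_dn (hI : IOcc T π p) (hmin : ∀ q, IOcc T π q → ¬ CLt T q p) (hc : IsRot T p c)
    {b : Fin n} (hb : p T < b) {x y : Fin n} (hxy : x < y) (hyT : y ≠ p T) (hyb : y < b)
    (hv : π (c x) < π (c y)) {m : ℕ} (hD : Dn π b m (c y)) : Dn π b (m + 1) (c x) := by
  by_cases hy : ∃ i, i ≤ T ∧ y = p i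
  · obtain ⟨i, hi, rfl⟩ := hy
    have hiT : i < T := by
      rcases hi.lt_or_eq with h | rfl
      · exact h
      · exact absurd rfl hyT
    rw [hc.step i hiT] at hv hD
    have hb' : p (i+1) < b := (hI.le_last hiT).trans_lt hb
    have hii := (hI i (i+1) (by omega) hiT).1
    by_cases hx : ∃ j, j ≤ T ∧ x = p j
    · obtain ⟨j, hj, rfl⟩ := hx
      have hji := ((hI.lt_iff hj hi).1).1 hxy
      rw [hc.step j (by omega)] at hv ⊢
      exact ⟨_, (hI (j+1) (i+1) (by omega) (by omega)).1, hv, hb', hD⟩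
    · push Not at hx
      rw [hc.fix x hx] at hv ⊢
      exact ⟨_, hxy.trans hii, hv, hb', hD⟩
  · push Not at hy
    rw [hc.fix y hy] at hv hD
    by_cases hx : ∃ j, j ≤ T ∧ x = p j
    · obtain ⟨j, hj, rfl⟩ := hx
      rcases hj.lt_or_eq with hjT | rfl
      · rw [hc.step j hjT] at hv ⊢
        refine shift_dn hI hmin hb m (j+1) hjT y ?_ hv hyb hD
        exact ⟨p j, hxy, (hI j (j+1) (by omega) hjT).2.trans hv, trivial,
          hI.up j hj (fun _ _ => trivial)⟩
      · rw [hc.last] at hv ⊢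
        exact ⟨y, (hI.le_last (Nat.zero_le _)).trans_lt hxy, hv, hyb, hD⟩
    · push Not at hx
      rw [hc.fix x hx] at hv ⊢
      exact ⟨y, hxy, hv, hyb, hD⟩

/-- If no `2 3 … (T+1) 1` of `π` ends after `p T`, then none does so after rotating the colex-least increasing
occurrence `p`. -/
theorem phi_F_gt (hT : 0 < T) (hI : IOcc T π p) (hmin : ∀ q, IOcc T π q → ¬ CLt T q p)
    (hF : ∀ q, FOcc T π q → ¬ p T < q T)
    (hc : IsRot T p c) {q : ℕ → Fin n} (hq : FOcc T (π * c) q) : ¬ p T < q T := by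
  intro hlt
  have hfix : c (q T) = q T := hc.fix _ fun i hi h =>
    absurd (h ▸ hlt) (not_lt.2 (hI.le_last hi))
  have hval : ∀ a b, a < b → b < T → π (c (q a)) < π (c (q b)) := hq.val
  have hlast : ∀ i, i < T → π (q T) < π (c (q i)) := fun i hi => by
    have h : π (c (q T)) < π (c (q i)) := hq.last i hi
    rwa [hfix] at h
  -- If the final value is below that at `p 0`, then `p 0, …, p (T-1), q T` is such an occurrence in `π`;
  -- otherwise a chain through `c (q 0)` takes the place of `q 0, …, q (T-1)`.
  rcases lt_trichotomy (π (q T)) (π (p 0)) with h | h | h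
  · refine hF (fun i => if i < T then p i else q T) ⟨?_, ?_, ?_⟩ (by simpa using hlt)
    · intro i j hij hj
      have hi : i < T := by omega
      by_cases hjT : j < T
      · simpa [hi, hjT] using (hI i j hij hj).1
      · simpa [hi, hjT] using (hI.le_last hi.le).trans_lt hlt
    · intro i j hij hj
      have hi : i < T := by omega
      simpa [hi, hj] using (hI i j hij hj.le).2
    · intro i hi
      have h0 : π (p 0) ≤ π (p i) := by
        rcases Nat.eq_zero_or_pos i with rfl | h
        · exact le_rfl
        · exact (hI 0 i h hi.le).2.le
      simpa [hi] using h.trans_le h0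
  · have := π.injective h
    exact absurd (this ▸ hlt) (not_lt.2 (hI.le_last (Nat.zero_le _)))
  · have hne : ∀ i, i < T → q i ≠ p T := by
      intro i hi heq
      have := hlast i hi
      rw [heq, hc.last] at this
      exact absurd (this.trans h) (lt_irrefl _)
    have hD : ∀ k, k < T → Dn π (q T) k (c (q (T - 1 - k))) := by
      intro k
      induction k with
      | zero => intros; trivial
      | succ k ih =>
        intro hk
        have e : T - 1 - k = T - 1 - (k+1) + 1 := by omega
        exact step_dn hI hmin hc hlt (hq.pos _ _ (by omega) (by omega)) (hne _ (by omega))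
          (hq.pos _ _ (by omega) le_rfl) (hval _ _ (by omega) (by omega)) (ih (by omega))
    have hD0 := hD (T - 1) (by omega)
    rw [Nat.sub_self] at hD0
    obtain ⟨z, hz0, hz, hzb⟩ := hD0.exists_chain
    have hz0b : z 0 < q T := by
      rw [hz0]
      by_cases hx : ∃ j, j ≤ T ∧ q 0 = p j
      · obtain ⟨j, hj, hj'⟩ := hx
        have hjT : j < T := by
          rcases hj.lt_or_eq with h | rfl
          · exact h
          · exact absurd hj' (hne 0 hT)
        rw [hj', hc.step j hjT]
        exact (hI.le_last hjT).trans_lt hlt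
      · push Not at hx
        rw [hc.fix _ hx]
        exact hq.pos _ _ hT le_rfl
    have hzv : π (q T) < π (z 0) := hz0 ▸ hlast 0 hT
    refine hF (fun i => if i < T then z i else q T) ⟨?_, ?_, ?_⟩ (by simpa using hlt)
    · intro i j hij hj
      have hi : i < T := by omega
      by_cases hjT : j < T
      · simpa [hi, hjT] using (hz i j hij (by omega)).1
      · simp only [hi, hjT, if_true, if_false]
        rcases Nat.eq_zero_or_pos i with rfl | h
        · exact hz0b
        · exact hzb i h (by omega)
    · intro i j hij hj
      have hi : i < T := by omega
      simpa [hi, hj] using (hz i j hij (by omega)).2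
    · intro i hi
      have h0 : π (z 0) ≤ π (z i) := by
        rcases Nat.eq_zero_or_pos i with rfl | h
        · exact le_rfl
        · exact (hz 0 i h (by omega)).2.le
      simpa [hi] using hzv.trans_le h0

end phi

/-! ### Rotating back the colexicographically greatest `2 3 … (T+1) 1` -/

section psi

variable {T : ℕ} {π c d : Equiv.Perm (Fin n)} {p : ℕ → Fin n}

/-- `d` is the cycle `p T ↦ … ↦ p 1 ↦ p 0 ↦ p T`, inverse to the one of `IsRot`. -/
structure IsRotInv (T : ℕ) (p : ℕ → Fin n) (d : Equiv.Perm (Fin n)) : Prop where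
  step : ∀ i, i < T → d (p (i + 1)) = p i
  first : d (p 0) = p T
  fix : ∀ x, (∀ i, i ≤ T → x ≠ p i) → d x = x

theorem IsRot.inv (hc : IsRot T p c) : IsRotInv T p c⁻¹ where
  step i hi := Equiv.Perm.inv_eq_iff_eq.2 (hc.step i hi).symm
  first := Equiv.Perm.inv_eq_iff_eq.2 hc.last.symm
  fix x hx := Equiv.Perm.inv_eq_iff_eq.2 (hc.fix x hx).symm

theorem FOcc.pos_iff (hF : FOcc T π p) {i j : ℕ} (hi : i ≤ T) (hj : j ≤ T) :
    p i < p j ↔ i < j := by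
  rcases lt_trichotomy i j with h | rfl | h
  · exact ⟨fun _ => h, fun _ => hF.pos i j h hj⟩
  · simp
  · exact ⟨fun h' => absurd h' (hF.pos j i h hi).not_gt, fun h' => absurd h' h.not_gt⟩

theorem FOcc.val_iff (hF : FOcc T π p) {i j : ℕ} (hi : i < T) (hj : j < T) :
    π (p i) < π (p j) ↔ i < j := by
  rcases lt_trichotomy i j with h | rfl | h
  · exact ⟨fun _ => h, fun _ => hF.val i j h hj⟩
  · simp
  · exact ⟨fun h' => absurd h' (hF.val j i h hi).not_gt, fun h' => absurd h' h.not_gt⟩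

theorem FOcc.le_last (hF : FOcc T π p) {i : ℕ} (hi : i ≤ T) : p i ≤ p T := by
  rcases hi.lt_or_eq with h | rfl
  · exact (hF.pos _ _ h le_rfl).le
  · exact le_rfl

theorem FOcc.up (hF : FOcc T π p) {v : Fin n} (hv : v ≤ π (p T)) :
    ∀ i, i < T → Up π (fun y => v < π y) i (p i) := by
  intro i
  induction i with
  | zero => intros; trivial
  | succ i ih =>
    intro hi
    exact ⟨p i, hF.pos i (i+1) (by omega) hi.le, hF.val i (i+1) (by omega) hi,
      hv.trans_lt (hF.last i (by omega)), ih (by omega)⟩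

/-- Greediness of the colex-greatest occurrence `p` of `2 3 … (T+1) 1`: an increasing subsequence with
`i + 1` terms, all above the value at `p T`, ending strictly between `p i` and `p (i + 1)` and below the
value at `p (i + 1)` when `i + 1 < T`, could replace `p 0, …, p i`, giving a greater occurrence. -/
theorem greedyF (hF : FOcc T π p) (hmax : ∀ q, FOcc T π q → ¬ CLt T p q) {i : ℕ} (hi : i < T)
    {x : Fin n} (hx : p i < x) (hx' : x < p (i + 1)) (hw : π (p T) < π x)
    (hv : i + 1 < T → π x < π (p (i + 1))) :
    ¬ Up π (fun y => π (p T) < π y) i x := by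
  intro hU
  obtain ⟨z, rfl, hz, hS⟩ := hU.exists_chain
  have hle : ∀ a, a ≤ i → z a ≤ z i ∧ π (z a) ≤ π (z i) ∧ π (p T) < π (z a) := by
    intro a ha
    rcases ha.lt_or_eq with h | rfl
    · exact ⟨(hz a i h le_rfl).1.le, (hz a i h le_rfl).2.le, hS a h⟩
    · exact ⟨le_rfl, le_rfl, hw⟩
  have hTi : ¬ T ≤ i := by omega
  refine hmax (fun l => if l ≤ i then z l else p l) ⟨?_, ?_, ?_⟩ ⟨i, hi.le, by simpa using hx, ?_⟩
  · intro a b hab hb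
    by_cases hbi : b ≤ i
    · have hai : a ≤ i := by omega
      simpa [hbi, hai] using (hz a b hab hbi).1
    · by_cases hai : a ≤ i
      · simp only [hbi, hai, if_true, if_false]
        have h2 : p (i+1) ≤ p b := by
          rcases (show i + 1 ≤ b by omega).lt_or_eq with h | rfl
          · exact (hF.pos _ b h hb).le
          · exact le_rfl
        exact (hle a hai).1.trans_lt (hx'.trans_le h2)
      · simpa [hbi, hai] using hF.pos a b hab hb
  · intro a b hab hb
    by_cases hbi : b ≤ i
    · have hai : a ≤ i := by omega
      simpa [hbi, hai] using (hz a b hab hbi).2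
    · by_cases hai : a ≤ i
      · simp only [hbi, hai, if_true, if_false]
        have h2 : π (p (i+1)) ≤ π (p b) := by
          rcases (show i + 1 ≤ b by omega).lt_or_eq with h | rfl
          · exact (hF.val _ b h hb).le
          · exact le_rfl
        exact (hle a hai).2.1.trans_lt ((hv (by omega)).trans_le h2)
      · simpa [hbi, hai] using hF.val a b hab hb
  · intro a ha
    by_cases hai : a ≤ i
    · simpa [hai, hTi] using (hle a hai).2.2
    · simpa [hai, hTi] using hF.last a ha
  · intro l hl _
    have : ¬ l ≤ i := by omega
    simp [this]

/-- Let `y`, strictly between `p i` and `p T`, end an increasing subsequence with `i + 1` terms above the value at `p T`.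
An increasing subsequence of `π` starting at `y` and staying before `p T` can be traded for one starting
at `p i` with one more term. -/
theorem shiftF_dn (hF : FOcc T π p) (hmax : ∀ q, FOcc T π q → ¬ CLt T p q) (m : ℕ) :
    ∀ i, i < T → ∀ y, p i < y → y < p T → π (p T) < π y →
      Up π (fun y => π (p T) < π y) i y → Dn π (p T) m y → Dn π (p T) (m + 1) (p i) := by
  induction m with
  | zero =>
    intro i hi y hy hyT hw hU _
    rcases lt_trichotomy (π y) (π (p i)) with h | h | h
    · have hgr := greedyF hF hmax hi hy
      have h1 : i + 1 < T := by
        by_contra hcon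
        have e : i + 1 = T := by omega
        exact hgr (e ▸ hyT) hw (fun h' => absurd h' hcon) hU
      exact ⟨p (i+1), hF.pos _ _ (by omega) h1.le, hF.val _ _ (by omega) h1,
        hF.pos _ _ h1 le_rfl, trivial⟩
    · exact absurd (π.injective h) hy.ne'
    · exact ⟨y, hy, h, hyT, trivial⟩
  | succ m ih =>
    intro i hi y hy hyT hw hU hD
    rcases lt_trichotomy (π y) (π (p i)) with h | h | h
    · have hgr := greedyF hF hmax hi hy
      have h1 : i + 1 < T := by
        by_contra hcon
        have e : i + 1 = T := by omega
        exact hgr (e ▸ hyT) hw (fun h' => absurd h' hcon) hU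
      have hv := hF.val i (i+1) (by omega) h1
      have hy' : p (i+1) ≤ y := by
        by_contra hcon
        exact hgr (not_le.1 hcon) hw (fun _ => h.trans hv) hU
      obtain ⟨y', h2, h3, h4, h5⟩ := hD
      exact ⟨p (i+1), hF.pos _ _ (by omega) h1.le, hv, hF.pos _ _ h1 le_rfl,
        ih (i+1) h1 y' (hy'.trans_lt h2) h4 (hw.trans h3) ⟨y, h2, h3, hw, hU⟩ h5⟩
    · exact absurd (π.injective h) hy.ne'
    · exact ⟨y, hy, h, hyT, hD⟩

/-- Rotating back does not raise any value to the left of `p T`. -/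
theorem rotInv_le (hF : FOcc T π p) (hd : IsRotInv T p d) {x : Fin n} (hx : x < p T) :
    π (d x) ≤ π x := by
  by_cases h : ∃ j, j ≤ T ∧ x = p j
  · obtain ⟨j, hj, rfl⟩ := h
    have hjT := (hF.pos_iff hj le_rfl).1 hx
    rcases j with _ | j
    · rw [hd.first]; exact (hF.last 0 hjT).le
    · rw [hd.step j (by omega)]; exact (hF.val _ _ (by omega) hjT).le
  · push Not at h
    rw [hd.fix x h]

/-- To the left of `p T`, an ascent from `x` to `y` after rotating back extends increasing subsequences of `π`
starting at `y` to ones starting at `x`. -/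
theorem stepF_dn (hF : FOcc T π p) (hmax : ∀ q, FOcc T π q → ¬ CLt T p q)
    (hd : IsRotInv T p d) {x y : Fin n} (hxy : x < y) (hy : y < p T) (hv : π (d x) < π (d y))
    {m : ℕ} (hD : Dn π (p T) m y) : Dn π (p T) (m + 1) x := by
  by_cases hx : ∃ i, i ≤ T ∧ x = p i
  · obtain ⟨i, hi, rfl⟩ := hx
    have hiT := (hF.pos_iff hi le_rfl).1 (hxy.trans hy)
    by_cases hy' : ∃ j, j ≤ T ∧ y = p j
    · obtain ⟨j, hj, rfl⟩ := hy'
      have hij := (hF.pos_iff hi hj).1 hxy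
      have hjT := (hF.pos_iff hj le_rfl).1 hy
      exact ⟨_, hxy, hF.val i j hij hjT, hy, hD⟩
    · push Not at hy'
      rw [hd.fix y hy'] at hv
      rcases i with _ | i
      · rw [hd.first] at hv
        exact shiftF_dn hF hmax m 0 hiT y hxy hy hv trivial hD
      · rw [hd.step i (by omega)] at hv
        have hw := hF.last i (by omega)
        refine shiftF_dn hF hmax m (i+1) hiT y hxy hy (hw.trans hv) ?_ hD
        exact ⟨p i, (hF.pos i (i+1) (by omega) hi).trans hxy, hv, hw, hF.up le_rfl i (by omega)⟩
  · push Not at hx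
    rw [hd.fix x hx] at hv
    exact ⟨y, hxy, hv.trans_le (rotInv_le hF hd hy), hy, hD⟩

/-- If no increasing occurrence of `π` ends before `p T`, then rotating back the colex-greatest
`2 3 … (T+1) 1`, at `p`, leaves no increasing occurrence colex-smaller than `p`. -/
theorem psi_I (hF : FOcc T π p) (hmax : ∀ q, FOcc T π q → ¬ CLt T p q)
    (hI : ∀ q, IOcc T π q → ¬ q T < p T)
    (hd : IsRotInv T p d) {q : ℕ → Fin n} (hq : IOcc T (π * d) q) : ¬ CLt T q p := by
  have hq' : ∀ i j, i < j → j ≤ T → q i < q j ∧ π (d (q i)) < π (d (q j)) := hq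
  have hno : ∀ x, x < p T → ¬ Dn π (p T) T x := by
    intro x hx hD
    obtain ⟨z, rfl, hz, hzb⟩ := hD.exists_chain
    refine hI z hz ?_
    rcases Nat.eq_zero_or_pos T with h | h
    · simpa [h] using hx
    · exact hzb T h le_rfl
  rintro ⟨j, hj, hlt, heq⟩
  have hqj : q j < p T := hlt.trans_le (hF.le_last hj)
  have hD0 : Dn π (p T) (T - j) (q j) := by
    rcases hj.lt_or_eq with hjT | rfl
    · have hp : ∀ k, k ≤ T - 1 - j → Dn π (p T) k (p (T - 1 - k)) := by
        intro k
        induction k with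
        | zero => intros; trivial
        | succ k ih =>
          intro hk
          exact ⟨p (T - 1 - k), hF.pos _ _ (by omega) (by omega), hF.val _ _ (by omega) (by omega),
            hF.pos _ _ (by omega) le_rfl, ih (by omega)⟩
      have hpj := hp _ le_rfl
      rw [show T - 1 - (T - 1 - j) = j by omega] at hpj
      rw [show T - j = T - 1 - j + 1 by omega]
      refine ⟨p j, hlt, ?_, hF.pos _ _ hjT le_rfl, hpj⟩
      by_cases h : ∃ m, m ≤ T ∧ q j = p m
      · obtain ⟨m, hm, hm'⟩ := h
        rw [hm'] at hlt ⊢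
        exact hF.val _ _ ((hF.pos_iff hm hj).1 hlt) hjT
      · push Not at h
        have := (hq' j (j+1) (by omega) hjT).2
        rwa [hd.fix _ h, heq (j+1) (by omega) hjT, hd.step j hjT] at this
    · rw [Nat.sub_self]; trivial
  have hchain : ∀ k, k ≤ j → Dn π (p T) (T - j + k) (q (j - k)) := by
    intro k
    induction k with
    | zero => intro _; exact hD0
    | succ k ih =>
      intro hk
      have hs := hq' (j - (k+1)) (j - k) (by omega) (by omega)
      refine stepF_dn hF hmax hd hs.1 (lt_of_le_of_lt ?_ hqj) hs.2 (ih (by omega))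
      rcases Nat.eq_zero_or_pos k with rfl | h
      · exact le_rfl
      · exact (hq' (j - k) j (by omega) hj).1.le
  have h0 := hchain j le_rfl
  rw [Nat.sub_self, Nat.sub_add_cancel hj] at h0
  refine hno _ (lt_of_le_of_lt ?_ hqj) h0
  rcases Nat.eq_zero_or_pos j with rfl | h
  · exact le_rfl
  · exact (hq' 0 j h hj).1.le

/-- After rotating back the colex-greatest `2 3 … (T+1) 1`, at `p`, every such occurrence ending at `p T` is
colex-smaller than `p`; it avoids the other moved positions, hence is one of `π` as well. -/
theorem psi_F_eq (hT : 0 < T) (hF : FOcc T π p) (hmax : ∀ q, FOcc T π q → ¬ CLt T p q)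
    (hd : IsRotInv T p d) {q : ℕ → Fin n} (hq : FOcc T (π * d) q) (hqT : q T = p T) :
    CLt T q p := by
  have hval : ∀ a b, a < b → b < T → π (d (q a)) < π (d (q b)) := hq.val
  have hdT : d (p T) = p (T - 1) := by
    conv_lhs => rw [show T = T - 1 + 1 by omega]
    exact hd.step _ (by omega)
  have hlast : ∀ i, i < T → π (p (T - 1)) < π (d (q i)) := fun i hi => by
    have h : π (d (q T)) < π (d (q i)) := hq.last i hi
    rwa [hqT, hdT] at h
  have hne : ∀ i, i < T → ∀ j, j ≤ T → q i ≠ p j := by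
    intro i hi j hj heq
    have h := hlast i hi
    rw [heq] at h
    rcases j with _ | j
    · rw [hd.first] at h
      exact absurd h (hF.last _ (by omega)).not_gt
    · rw [hd.step j (by omega)] at h
      have := (hF.val_iff (by omega) (by omega)).1 h
      omega
  have hfix : ∀ i, i < T → d (q i) = q i := fun i hi => hd.fix _ (hne i hi)
  have hFq : FOcc T π q := by
    refine ⟨hq.pos, ?_, ?_⟩
    · intro i j hij hj
      have := hval i j hij hj
      rwa [hfix i (by omega), hfix j hj] at this
    · intro i hi
      have := hlast i hi
      rw [hfix i hi] at this
      rw [hqT]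
      exact (hF.last (T-1) (by omega)).trans this
  -- the last index below `T` already decides the comparison
  refine ⟨T - 1, by omega, ?_, ?_⟩
  · rcases lt_trichotomy (q (T-1)) (p (T-1)) with h | h | h
    · exact h
    · exact absurd h (hne _ (by omega) _ (by omega))
    · refine absurd ⟨T - 1, by omega, h, ?_⟩ (hmax q hFq)
      intro l hl hl'
      rw [show l = T by omega, hqT]
  · intro l hl hl'
    rw [show l = T by omega, hqT]

/-- Among the positions with values above `v`, an increasing subsequence ending at `x` can be traded for one
ending at `p k` with one more term, provided `x` is below the value at `p k` and ends no increasing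
sequence of `k + 1` terms above the value at `p T`. -/
theorem shiftF_up (hF : FOcc T π p) {v : Fin n} (hw : π (p T) < v) (m : ℕ) :
    ∀ k, k < T → ∀ x, v < π x → π x < π (p k) → ¬ Up π (fun y => π (p T) < π y) k x →
      Up π (fun y => v < π y) m x → Up π (fun y => v < π y) (m + 1) (p k) := by
  induction m with
  | zero =>
    intro k hk x hv hxk hU _
    rcases lt_trichotomy x (p k) with h | h | h
    · exact ⟨x, h, hxk, hv, trivial⟩
    · rw [h] at hxk; exact absurd hxk (lt_irrefl _)
    · rcases k with _ | k
      · exact absurd trivial hU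
      · have hkk := hF.pos k (k+1) (by omega) hk.le
        refine ⟨p k, hkk, hF.val _ _ (by omega) hk, ?_, trivial⟩
        by_contra hcon
        exact hU ⟨p k, hkk.trans h, (not_lt.1 hcon).trans_lt hv, hF.last k (by omega),
          hF.up le_rfl k (by omega)⟩
  | succ m ih =>
    intro k hk x hv hxk hU hUm
    rcases lt_trichotomy x (p k) with h | h | h
    · exact ⟨x, h, hxk, hv, hUm⟩
    · rw [h] at hxk; exact absurd hxk (lt_irrefl _)
    · rcases k with _ | k
      · exact absurd trivial hU
      · have hkk := hF.pos k (k+1) (by omega) hk.le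
        have hxk' : π x ≤ π (p k) := by
          by_contra hcon
          exact hU ⟨p k, hkk.trans h, not_le.1 hcon, hF.last k (by omega),
            hF.up le_rfl k (by omega)⟩
        obtain ⟨x', h1, h2, h3, h4⟩ := hUm
        refine ⟨p k, hkk, hF.val _ _ (by omega) hk, hv.trans_le hxk', ?_⟩
        exact ih k (by omega) x' h3 (h2.trans_le hxk')
          (fun hcon => hU ⟨x', h1, h2, hw.trans h3, hcon⟩) h4

/-- An ascent from `x` to `y` after rotating back extends increasing subsequences of `π` with values above
`v`, when positions are followed through `d`, so that the values are kept. -/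
theorem stepF_up (hF : FOcc T π p) (hmax : ∀ q, FOcc T π q → ¬ CLt T p q)
    (hd : IsRotInv T p d) {v : Fin n} (hw : π (p T) < v) {x y : Fin n} (hxy : x < y)
    (hv : v < π (d x)) (hval : π (d x) < π (d y)) {m : ℕ}
    (hU : Up π (fun y => v < π y) m (d x)) : Up π (fun y => v < π y) (m + 1) (d y) := by
  have h0 : ∀ z, v < π (d z) → z ≠ p 0 := by
    rintro z hz rfl
    rw [hd.first] at hz
    exact absurd hz hw.not_gt
  by_cases hx : ∃ i, i ≤ T ∧ x = p i
  · obtain ⟨i, hi, rfl⟩ := hx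
    rcases i with _ | i
    · exact absurd rfl (h0 _ hv)
    have hii := hF.pos i (i+1) (by omega) hi
    rw [hd.step i hi] at hv hval hU
    by_cases hy : ∃ j, j ≤ T ∧ y = p j
    · obtain ⟨j, hj, rfl⟩ := hy
      have hij := (hF.pos_iff hi hj).1 hxy
      rcases j with _ | j
      · omega
      rw [hd.step j hj] at hval ⊢
      exact ⟨p i, hF.pos _ _ (by omega) (by omega), hval, hv, hU⟩
    · push Not at hy
      rw [hd.fix y hy] at hval ⊢
      exact ⟨p i, hii.trans hxy, hval, hv, hU⟩
  · push Not at hx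
    rw [hd.fix x hx] at hv hval hU
    by_cases hy : ∃ j, j ≤ T ∧ y = p j
    · obtain ⟨j, hj, rfl⟩ := hy
      rcases j with _ | k
      · exact absurd rfl (h0 _ (hv.trans hval))
      rw [hd.step k hj] at hval ⊢
      rcases lt_trichotomy x (p k) with h | h | h
      · exact ⟨x, h, hval, hv, hU⟩
      · exact absurd h (hx k (by omega))
      · refine shiftF_up hF hw m k hj x hv hval ?_ hU
        exact greedyF hF hmax hj h hxy (hw.trans hv)
          (fun h' => hval.trans (hF.val _ _ (by omega) h'))
    · push Not at hy
      rw [hd.fix y hy] at hval ⊢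
      exact ⟨x, hxy, hval, hv, hU⟩

/-- After rotating back the colex-greatest `2 3 … (T+1) 1`, at `p`, none ends after `p T`. -/
theorem psi_F_gt (hT : 0 < T) (hF : FOcc T π p) (hmax : ∀ q, FOcc T π q → ¬ CLt T p q)
    (hd : IsRotInv T p d) {q : ℕ → Fin n} (hq : FOcc T (π * d) q) : ¬ p T < q T := by
  intro hlt
  have hfix : d (q T) = q T := hd.fix _ fun i hi h =>
    absurd (h ▸ hlt) (not_lt.2 (hF.le_last hi))
  have hval : ∀ a b, a < b → b < T → π (d (q a)) < π (d (q b)) := hq.val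
  have hlast : ∀ i, i < T → π (q T) < π (d (q i)) := fun i hi => by
    have h : π (d (q T)) < π (d (q i)) := hq.last i hi
    rwa [hfix] at h
  have hmax' : ∀ r, FOcc T π r → r T ≠ q T := by
    intro r hr hrT
    exact hmax r hr ⟨T, le_rfl, hrT ▸ hlt, by omega⟩
  rcases lt_trichotomy (π (q T)) (π (p 0)) with h | h | h
  · refine hmax' (fun i => if i < T then p i else q T) ⟨?_, ?_, ?_⟩ (by simp)
    · intro i j hij hj
      have hi : i < T := by omega
      by_cases hjT : j < T
      · simpa [hi, hjT] using hF.pos i j hij hj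
      · simpa [hi, hjT] using (hF.le_last hi.le).trans_lt hlt
    · intro i j hij hj
      have hi : i < T := by omega
      simpa [hi, hj] using hF.val i j hij hj
    · intro i hi
      have h0 : π (p 0) ≤ π (p i) := by
        rcases Nat.eq_zero_or_pos i with rfl | h
        · exact le_rfl
        · exact (hF.val 0 i h hi).le
      simpa [hi] using h.trans_le h0
  · have := π.injective h
    exact absurd (this ▸ hlt) (not_lt.2 (hF.le_last (Nat.zero_le _)))
  · have hw : π (p T) < π (q T) := (hF.last 0 hT).trans h
    have hU : ∀ i, i < T → Up π (fun y => π (q T) < π y) i (d (q i)) := by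
      intro i
      induction i with
      | zero => intros; trivial
      | succ i ih =>
        intro hi
        exact stepF_up hF hmax hd hw (hq.pos _ _ (by omega) hi.le) (hlast i (by omega))
          (hval _ _ (by omega) hi) (ih (by omega))
    obtain ⟨z, hzT, hz, hzS⟩ := (hU (T-1) (by omega)).exists_chain
    have hle : z (T-1) < q T := by
      rw [hzT]
      refine lt_of_le_of_lt ?_ (hq.pos (T-1) T (by omega) le_rfl)
      by_cases hx : ∃ j, j ≤ T ∧ q (T-1) = p j
      · obtain ⟨j, hj, hj'⟩ := hx
        rcases j with _ | j
        · have := hlast (T-1) (by omega)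
          rw [hj', hd.first] at this
          exact absurd this hw.not_gt
        · rw [hj', hd.step j hj]
          exact (hF.pos _ _ (by omega) hj).le
      · push Not at hx
        rw [hd.fix _ hx]
    refine hmax' (fun i => if i < T then z i else q T) ⟨?_, ?_, ?_⟩ (by simp)
    · intro i j hij hj
      have hi : i < T := by omega
      by_cases hjT : j < T
      · simpa [hi, hjT] using (hz i j hij (by omega)).1
      · simp only [hi, hjT, if_true, if_false]
        rcases (show i ≤ T - 1 by omega).lt_or_eq with h | h
        · exact (hz i _ h le_rfl).1.trans hle
        · rwa [h]
    · intro i j hij hj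
      have hi : i < T := by omega
      simpa [hi, hj] using (hz i j hij (by omega)).2
    · intro i hi
      have : π (q T) < π (z i) := by
        rcases (show i ≤ T - 1 by omega).lt_or_eq with h | h
        · exact hzS i h
        · rw [h, hzT]; exact hlast _ (by omega)
      simpa [hi] using this

end psi

/-! ### The bijection on even permutations -/

/-- The first five entries of a position tuple, in the linear order that `CLt 4` describes. -/
def key (p : ℕ → Fin n) : Colex (Fin 5 → Fin n) := toColex fun i => p i

theorem clt_iff {q p : ℕ → Fin n} : CLt 4 q p ↔ key q < key p := by
  constructor
  · rintro ⟨j, hj, h1, h2⟩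
    exact ⟨⟨j, by omega⟩, fun l hl => h2 l hl (by omega), h1⟩
  · rintro ⟨j, h2, h1⟩
    exact ⟨j, by omega, h1, fun l hl hl' => h2 ⟨l, by omega⟩ hl⟩

theorem key_eq_iff {q p : ℕ → Fin n} : key q = key p ↔ ∀ i, i ≤ 4 → q i = p i := by
  constructor
  · intro h i hi
    exact congrFun h (⟨i, by omega⟩ : Fin 5)
  · intro h
    exact funext fun i : Fin 5 => h i (by omega)

/-- `p` is the colex-least occurrence of `12345` in `π`. -/
structure MinI (π : Equiv.Perm (Fin n)) (p : ℕ → Fin n) : Prop where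
  occ : IOcc 4 π p
  min : ∀ q, IOcc 4 π q → ¬ CLt 4 q p

/-- `p` is the colex-greatest occurrence of `23451` in `π`. -/
structure MaxF (π : Equiv.Perm (Fin n)) (p : ℕ → Fin n) : Prop where
  occ : FOcc 4 π p
  max : ∀ q, FOcc 4 π q → ¬ CLt 4 p q

/-- Every occurrence of `23451` is colex-smaller than every occurrence of `12345`. This holds vacuously for
permutations that avoid one of the two patterns. -/
def Good (π : Equiv.Perm (Fin n)) : Prop :=
  ∀ q r, FOcc 4 π q → IOcc 4 π r → CLt 4 q r

theorem exists_minI {π : Equiv.Perm (Fin n)} (h : ∃ p, IOcc 4 π p) : ∃ p, MinI π p := by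
  obtain ⟨p, hp, hmin⟩ := exists_minimalFor_of_wellFoundedLT (IOcc 4 π) key h
  exact ⟨p, hp, fun q hq hlt => (clt_iff.1 hlt).not_ge (hmin hq (clt_iff.1 hlt).le)⟩

theorem exists_maxF {π : Equiv.Perm (Fin n)} (h : ∃ p, FOcc 4 π p) : ∃ p, MaxF π p := by
  have : Finite (Colex (Fin 5 → Fin n)) := inferInstanceAs (Finite (Fin 5 → Fin n))
  obtain ⟨p, hp, hmax⟩ := exists_maximalFor_of_wellFoundedGT (FOcc 4 π) key h
  exact ⟨p, hp, fun q hq hlt => (clt_iff.1 hlt).not_ge (hmax hq (clt_iff.1 hlt).le)⟩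

theorem MinI.key_eq {π : Equiv.Perm (Fin n)} {p q : ℕ → Fin n} (hp : MinI π p) (hq : MinI π q) :
    key p = key q :=
  le_antisymm (not_lt.1 fun h => hp.min q hq.occ (clt_iff.2 h))
    (not_lt.1 fun h => hq.min p hp.occ (clt_iff.2 h))

theorem MaxF.key_eq {π : Equiv.Perm (Fin n)} {p q : ℕ → Fin n} (hp : MaxF π p) (hq : MaxF π q) :
    key p = key q :=
  le_antisymm (not_lt.1 fun h => hq.max p hp.occ (clt_iff.2 h))
    (not_lt.1 fun h => hp.max q hq.occ (clt_iff.2 h))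

/-- The cycle `p 0 ↦ p 1 ↦ p 2 ↦ p 3 ↦ p 4 ↦ p 0`, as a product of four transpositions. -/
def rot (p : ℕ → Fin n) : Equiv.Perm (Fin n) :=
  Equiv.swap (p 0) (p 1) * Equiv.swap (p 1) (p 2) * Equiv.swap (p 2) (p 3) * Equiv.swap (p 3) (p 4)

theorem rot_congr {p q : ℕ → Fin n} (h : key p = key q) : rot p = rot q := by
  have h := key_eq_iff.1 h
  simp [rot, h]

theorem sign_rot {p : ℕ → Fin n} (hp : ∀ i j, i < j → j ≤ 4 → p i < p j) :
    Equiv.Perm.sign (rot p) = 1 := by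
  have h : ∀ i, i < 4 → p i ≠ p (i + 1) := fun i hi => (hp i (i + 1) (by omega) hi).ne
  simp [rot, Equiv.Perm.sign_swap (h 0 (by omega)), Equiv.Perm.sign_swap (h 1 (by omega)),
    Equiv.Perm.sign_swap (h 2 (by omega)), Equiv.Perm.sign_swap (h 3 (by omega))]

theorem isRot_rot {p : ℕ → Fin n} (hp : ∀ i j, i < j → j ≤ 4 → p i < p j) :
    IsRot 4 p (rot p) := by
  have h : ∀ i j, i < j → j ≤ 4 → p i ≠ p j := fun i j hi hj => (hp i j hi hj).ne
  have h' : ∀ i j, i < j → j ≤ 4 → p j ≠ p i := fun i j hi hj => (hp i j hi hj).ne'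
  refine ⟨?_, ?_, ?_⟩
  · intro i hi
    interval_cases i <;> simp [rot, Equiv.swap_apply_def, h, h']
  · simp [rot]
  · intro x hx
    simp [rot, Equiv.swap_apply_def, hx]

/-- Rotating at the colex-least `12345` of a good permutation gives a good permutation whose colex-greatest
`23451` sits at the same positions. -/
theorem phi_main {π : Equiv.Perm (Fin n)} {p : ℕ → Fin n} (hg : Good π) (hp : MinI π p) :
    Good (π * rot p) ∧ MaxF (π * rot p) p := by
  have hI := hp.occ
  have hc := isRot_rot fun i j h h' => (hI i j h h').1
  have hF : ∀ q, FOcc 4 π q → ¬ p 4 < q 4 := by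
    intro q hq hlt
    exact (clt_iff.1 (hg q p hq hI)).not_gt (clt_iff.1 ⟨4, le_rfl, hlt, by omega⟩)
  have hA : ∀ q, FOcc 4 (π * rot p) q → ¬ CLt 4 p q := by
    intro q hq
    rcases lt_trichotomy (p 4) (q 4) with h | h | h
    · exact absurd h (phi_F_gt (by omega) hI hp.min hF hc hq)
    · exact phi_F_eq hI hp.min hc hq h.symm
    · exact fun h' => (clt_iff.1 h').not_gt (clt_iff.1 ⟨4, le_rfl, h, by omega⟩)
  refine ⟨?_, ⟨?_, ?_, ?_⟩, hA⟩
  · intro q r hq hr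
    have h1 := hA q hq
    have h2 := phi_I (by omega) hI hp.min hc hr
    rw [clt_iff] at h1 h2 ⊢
    rw [← key_eq_iff] at h2
    exact (not_lt.1 h1).trans_lt (lt_of_le_of_ne (not_lt.1 h2.1) (Ne.symm h2.2))
  · exact fun i j h h' => (hI i j h h').1
  · intro i j h h'
    simp only [Equiv.Perm.mul_apply, hc.step i (by omega), hc.step j h']
    exact (hI _ _ (by omega) (by omega)).2
  · intro i h
    simp only [Equiv.Perm.mul_apply, hc.step i h, hc.last]
    exact (hI _ _ (by omega) (by omega)).2

/-- Rotating back at the colex-greatest `23451` of a good permutation gives a good permutation whose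
colex-least `12345` sits at the same positions. -/
theorem psi_main {π : Equiv.Perm (Fin n)} {p : ℕ → Fin n} (hg : Good π) (hp : MaxF π p) :
    Good (π * (rot p)⁻¹) ∧ MinI (π * (rot p)⁻¹) p := by
  have hF := hp.occ
  have hd := (isRot_rot hF.pos).inv
  have hI : ∀ q, IOcc 4 π q → ¬ q 4 < p 4 := by
    intro q hq hlt
    exact (clt_iff.1 (hg p q hF hq)).not_gt (clt_iff.1 ⟨4, le_rfl, hlt, by omega⟩)
  have hA : ∀ q, IOcc 4 (π * (rot p)⁻¹) q → ¬ CLt 4 q p := fun q hq => psi_I hF hp.max hI hd hq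
  refine ⟨?_, ?_, hA⟩
  · intro q r hq hr
    have h1 := hA r hr
    have h2 : CLt 4 q p := by
      rcases lt_trichotomy (p 4) (q 4) with h | h | h
      · exact absurd h (psi_F_gt (by omega) hF hp.max hd hq)
      · exact psi_F_eq (by omega) hF hp.max hd hq h.symm
      · exact ⟨4, le_rfl, h, by omega⟩
    rw [clt_iff] at h1 h2 ⊢
    exact h2.trans_le (not_lt.1 h1)
  · intro i j h h'
    refine ⟨hF.pos i j h h', ?_⟩
    obtain ⟨j, rfl⟩ : ∃ k, j = k + 1 := ⟨j - 1, by omega⟩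
    simp only [Equiv.Perm.mul_apply, hd.step j h']
    rcases i with _ | i
    · rw [hd.first]; exact hF.last j h'
    · rw [hd.step i (by omega)]; exact (hF.val i j (by omega) h')

/-- One implication suffices in the definition of containment, since both orders are total. -/
theorem contains_iff {k : ℕ} {σ : Equiv.Perm (Fin k)} {π : Equiv.Perm (Fin n)} :
    Pattern.Contains σ π ↔ ∃ f : Fin k → Fin n, StrictMono f ∧
      ∀ a b : Fin k, σ a < σ b → π (f a) < π (f b) := by
  refine exists_congr fun f => and_congr_right fun _ =>
    ⟨fun h a b => (h a b).2, fun h a b => ⟨fun hab => ?_, h a b⟩⟩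
  rcases lt_trichotomy (σ a) (σ b) with h1 | h1 | h1
  · exact h1
  · rw [σ.injective h1] at hab; exact absurd hab (lt_irrefl _)
  · exact absurd hab (h b a h1).not_gt

theorem exists_ext (f : Fin 5 → Fin n) : ∃ p : ℕ → Fin n, ∀ i : Fin 5, p i = f i :=
  ⟨fun i => f (Fin.ofNat 5 i), fun i => by simp⟩

theorem contains_I {π : Equiv.Perm (Fin n)} :
    Pattern.Contains p12345 π ↔ ∃ p, IOcc 4 π p := by
  rw [contains_iff]
  constructor
  · rintro ⟨f, hf, h⟩
    obtain ⟨p, hp⟩ := exists_ext f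
    refine ⟨p, fun i j hij hj => ?_⟩
    have hi := hp ⟨i, by omega⟩
    have hj := hp ⟨j, by omega⟩
    simp only at hi hj
    rw [hi, hj]
    have hσ : ∀ a b : Fin 5, a < b → p12345 a < p12345 b := by decide
    exact ⟨hf hij, h _ _ (hσ _ _ hij)⟩
  · rintro ⟨p, hp⟩
    have hσ : ∀ a b : Fin 5, p12345 a < p12345 b → a < b := by decide
    exact ⟨fun i => p i, fun a b hab => (hp a b hab (by omega)).1,
      fun a b hab => (hp a b (hσ a b hab) (by omega)).2⟩

theorem contains_F {π : Equiv.Perm (Fin n)} :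
    Pattern.Contains p23451 π ↔ ∃ p, FOcc 4 π p := by
  rw [contains_iff]
  constructor
  · rintro ⟨f, hf, h⟩
    obtain ⟨p, hp⟩ := exists_ext f
    have hp' : ∀ i (hi : i ≤ 4), p i = f ⟨i, by omega⟩ := fun i hi => hp ⟨i, by omega⟩
    refine ⟨p, fun i j hij hj => ?_, fun i j hij hj => ?_, fun i hi => ?_⟩
    · rw [hp' i (by omega), hp' j hj]
      exact hf hij
    · rw [hp' i (by omega), hp' j (by omega)]
      have hσ : ∀ a b : Fin 5, a < b → b < 4 → p23451 a < p23451 b := by decide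
      exact h _ _ (hσ _ _ hij hj)
    · rw [hp' i (by omega), hp' 4 (by omega)]
      have hσ : ∀ a : Fin 5, a < 4 → p23451 4 < p23451 a := by decide
      exact h _ _ (hσ _ hi)
  · rintro ⟨p, hp⟩
    refine ⟨fun i => p i, fun a b hab => hp.pos a b hab (by omega), fun a b hab => ?_⟩
    have hσ : ∀ a b : Fin 5, p23451 a < p23451 b → (a < b ∧ b < 4) ∨ (a = 4 ∧ b < 4) := by
      decide
    rcases hσ a b hab with ⟨h1, h2⟩ | ⟨rfl, h2⟩
    · exact hp.val a b h1 h2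
    · exact hp.last b h2

open Classical in
/-- The two rotations are injective maps between the even good permutations containing `12345` and those
containing `23451`: the image determines the rotated positions. -/
theorem card_contains_eq (n : ℕ) :
    (Finset.univ.filter fun π : Equiv.Perm (Fin n) =>
      (Equiv.Perm.sign π = 1 ∧ Good π) ∧ ∃ p, IOcc 4 π p).card =
    (Finset.univ.filter fun π : Equiv.Perm (Fin n) =>
      (Equiv.Perm.sign π = 1 ∧ Good π) ∧ ∃ p, FOcc 4 π p).card := by
  apply le_antisymm
  · refine Finset.card_le_card_of_injOn
      (fun π => if h : ∃ p, IOcc 4 π p then π * rot (exists_minI h).choose else π) ?_ ?_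
    · intro π hπ
      simp only [Finset.coe_filter, Finset.mem_univ, true_and, Set.mem_ofPred_eq] at hπ ⊢
      obtain ⟨⟨hs, hg⟩, h⟩ := hπ
      have hp := (exists_minI h).choose_spec
      have hm := phi_main hg hp
      simp only [h, dif_pos]
      refine ⟨⟨?_, hm.1⟩, _, hm.2.occ⟩
      rw [map_mul, hs, sign_rot hm.2.occ.pos, one_mul]
    · intro π hπ τ hτ heq
      simp only [Finset.coe_filter, Finset.mem_univ, true_and, Set.mem_ofPred_eq] at hπ hτ
      simp only [hπ.2, hτ.2, dif_pos] at heq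
      have h1 := (phi_main hπ.1.2 (exists_minI hπ.2).choose_spec).2
      have h2 := (phi_main hτ.1.2 (exists_minI hτ.2).choose_spec).2
      rw [← heq] at h2
      rw [rot_congr (h1.key_eq h2)] at heq
      exact mul_right_cancel heq
  · refine Finset.card_le_card_of_injOn
      (fun π => if h : ∃ p, FOcc 4 π p then π * (rot (exists_maxF h).choose)⁻¹ else π) ?_ ?_
    · intro π hπ
      simp only [Finset.coe_filter, Finset.mem_univ, true_and, Set.mem_ofPred_eq] at hπ ⊢
      obtain ⟨⟨hs, hg⟩, h⟩ := hπ
      have hp := (exists_maxF h).choose_spec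
      have hm := psi_main hg hp
      simp only [h, dif_pos]
      refine ⟨⟨?_, hm.1⟩, _, hm.2.occ⟩
      rw [map_mul, map_inv, hs, sign_rot hp.occ.pos, one_mul, inv_one]
    · intro π hπ τ hτ heq
      simp only [Finset.coe_filter, Finset.mem_univ, true_and, Set.mem_ofPred_eq] at hπ hτ
      simp only [hπ.2, hτ.2, dif_pos] at heq
      have h1 := (psi_main hπ.1.2 (exists_maxF hπ.2).choose_spec).2
      have h2 := (psi_main hτ.1.2 (exists_maxF hτ.2).choose_spec).2
      rw [← heq] at h2
      rw [rot_congr (h1.key_eq h2)] at heq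
      exact mul_right_cancel heq

end RotWilf

/-- The patterns 12345, 23451 are pairwise even-Wilf-equivalent. -/
theorem stmt13 :
    (∀ n : ℕ, eav n p12345 = eav n p23451) := by
  classical
  intro n
  have hI := Finset.card_filter_add_card_filter_not (s := Finset.univ.filter
    fun π : Equiv.Perm (Fin n) => Equiv.Perm.sign π = 1 ∧ RotWilf.Good π) (fun π => ∃ p, RotWilf.IOcc 4 π p)
  have hF := Finset.card_filter_add_card_filter_not (s := Finset.univ.filter
    fun π : Equiv.Perm (Fin n) => Equiv.Perm.sign π = 1 ∧ RotWilf.Good π) (fun π => ∃ p, RotWilf.FOcc 4 π p)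
  simp only [Finset.filter_filter] at hI hF
  have hX := RotWilf.card_contains_eq n
  simp only [eav, Nat.card_eq_fintype_card, Fintype.card_subtype, Pattern.Avoids, RotWilf.contains_I,
    RotWilf.contains_F]
  -- Avoiders of either pattern are vacuously good, so they are the complements of the sets in `hX`.
  have e1 : (Finset.univ.filter fun π : Equiv.Perm (Fin n) =>
      (Equiv.Perm.sign π = 1 ∧ RotWilf.Good π) ∧ ¬ ∃ p, RotWilf.IOcc 4 π p) =
      Finset.univ.filter fun π => Equiv.Perm.sign π = 1 ∧ ¬ ∃ p, RotWilf.IOcc 4 π p :=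
    Finset.filter_congr fun π _ =>
      ⟨fun h => ⟨h.1.1, h.2⟩, fun h => ⟨⟨h.1, fun q r _ hr => absurd ⟨r, hr⟩ h.2⟩, h.2⟩⟩
  have e2 : (Finset.univ.filter fun π : Equiv.Perm (Fin n) =>
      (Equiv.Perm.sign π = 1 ∧ RotWilf.Good π) ∧ ¬ ∃ p, RotWilf.FOcc 4 π p) =
      Finset.univ.filter fun π => Equiv.Perm.sign π = 1 ∧ ¬ ∃ p, RotWilf.FOcc 4 π p :=
    Finset.filter_congr fun π _ =>
      ⟨fun h => ⟨h.1.1, h.2⟩, fun h => ⟨⟨h.1, fun q r hq _ => absurd ⟨q, hq⟩ h.2⟩, h.2⟩⟩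
  rw [e1] at hI
  rw [e2] at hF
  convert (show (Finset.univ.filter fun π : Equiv.Perm (Fin n) =>
      Equiv.Perm.sign π = 1 ∧ ¬ ∃ p, RotWilf.IOcc 4 π p).card = (Finset.univ.filter fun π : Equiv.Perm (Fin n) =>
      Equiv.Perm.sign π = 1 ∧ ¬ ∃ p, RotWilf.FOcc 4 π p).card by omega)
end

section
/- The patterns 45312 and 34512 are even-Wilf-equivalent: for all n ≥ 0, eav_n(45312) = eav_n(34512). -/
/-- The pattern `45312` (one-line notation, 1-indexed). -/
def p45312 : Equiv.Perm (Fin 5) :=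
  ⟨![3,4,2,0,1], ![3,4,2,0,1], by decide, by decide⟩

/-- The pattern `34512` (one-line notation, 1-indexed). -/
def p34512 : Equiv.Perm (Fin 5) :=
  ⟨![2,3,4,0,1], ![3,4,0,1,2], by decide, by decide⟩

namespace EvenWilf

open Equiv

variable {n : ℕ}

/-! ### Boards -/

/-- A set `E` of cells (position, value) closed under decreasing the position and increasing
the value, i.e. a Young diagram with its corner at the upper left of the permutation matrix. -/
def IsBoard (E : Fin n → Fin n → Prop) : Prop :=
  ∀ k a k₂ a₂, E k a → k₂ ≤ k → a ≤ a₂ → E k₂ a₂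

/-- The cells `(s, v)` having a pattern `12` of `π` strictly to the right and strictly below. -/
def Board (π : Perm (Fin n)) (s v : Fin n) : Prop :=
  ∃ x y, s < x ∧ x < y ∧ π x < π y ∧ π y < v

theorem isBoard_board (π : Perm (Fin n)) : IsBoard (Board π) := by
  rintro k a k' a' ⟨x, y, h1, h2, h3, h4⟩ hk ha
  exact ⟨x, y, hk.trans_lt h1, h2, h3, h4.trans_le ha⟩

/-- Every cell of the board is witnessed by a pattern `12` whose two entries lie off the board:
take one whose lower entry is as far right as possible. -/
theorem exists_unmoved {π : Perm (Fin n)} {s v : Fin n} (h : Board π s v) :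
    ∃ x y, s < x ∧ x < y ∧ π x < π y ∧ π y < v ∧ ¬ Board π x (π x) ∧ ¬ Board π y (π y) := by
  classical
  obtain ⟨x0, y0, h0⟩ := h
  obtain ⟨x, hx, hmax⟩ := Finset.exists_max_image
    (Finset.univ.filter fun x => ∃ y, s < x ∧ x < y ∧ π x < π y ∧ π y < v) id
    ⟨x0, by simp only [Finset.mem_filter, Finset.mem_univ, true_and]; exact ⟨y0, h0⟩⟩
  simp only [Finset.mem_filter, Finset.mem_univ, true_and, id, forall_exists_index] at hx hmax
  obtain ⟨y, h1, h2, h3, h4⟩ := hx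
  refine ⟨x, y, h1, h2, h3, h4, ?_, ?_⟩
  · rintro ⟨x', y', g1, g2, g3, g4⟩
    exact (hmax x' y' ⟨h1.trans g1, g2, g3, g4.trans (h3.trans h4)⟩).not_gt g1
  · rintro ⟨x', y', g1, g2, g3, g4⟩
    exact (hmax x' y' ⟨h1.trans (h2.trans g1), g2, g3, g4.trans h4⟩).not_gt (h2.trans g1)

/-- Changing only entries that lie on the board before and after leaves the board unchanged. -/
theorem board_congr {p q : Perm (Fin n)}
    (h : ∀ m, q m ≠ p m → Board p m (p m) ∧ Board p m (q m)) : Board q = Board p := by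
  funext s v
  refine propext ⟨?_, fun hp => ?_⟩
  · rintro ⟨x, y, h1, h2, h3, h4⟩
    by_cases hx : q x = p x
    · by_cases hy : q y = p y
      · exact ⟨x, y, h1, h2, hx ▸ hy ▸ h3, hy ▸ h4⟩
      · exact isBoard_board p _ _ _ _ (h y hy).2 (h1.trans h2).le h4.le
    · exact isBoard_board p _ _ _ _ (h x hx).2 h1.le (h3.trans h4).le
  · obtain ⟨x, y, h1, h2, h3, h4, h5, h6⟩ := exists_unmoved hp
    have hx : q x = p x := by
      by_contra hne
      exact h5 (h x hne).1
    have hy : q y = p y := by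
      by_contra hne
      exact h6 (h y hne).1
    exact ⟨x, y, h1, h2, by rwa [hx, hy], by rwa [hy]⟩

/-! ### Rotating three values -/

/-- `q` arises from `p` by turning the ascending triple `p i < p j < p k` at the positions
`i < j < k` into the pattern `231`: the smallest of the three values moves to the last position.
The other entries do not change. -/
structure Move (p q : Fin n → Fin n) (i j k : Fin n) : Prop where
  hij : i < j
  hjk : j < k
  ab : p i < p j
  bc : p j < p k
  qi : q i = p j
  qj : q j = p k
  qk : q k = p i
  off : ∀ m, m ≠ i → m ≠ j → m ≠ k → q m = p m

theorem Move.eq_mul {p q : Perm (Fin n)} {i j k : Fin n} (h : Move p q i j k) :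
    q = p * (swap i j * swap j k) := by
  ext m
  have h1 := h.hij.ne
  have h2 := h.hjk.ne
  have h3 := (h.hij.trans h.hjk).ne
  congr 1
  by_cases hi : m = i
  · subst hi; simp [swap_apply_of_ne_of_ne h1 h3, h.qi]
  by_cases hj : m = j
  · subst hj; simp [swap_apply_of_ne_of_ne h3.symm h2.symm, h.qj]
  by_cases hk : m = k
  · subst hk; simp [h.qk]
  · simp [swap_apply_of_ne_of_ne, hi, hj, hk, h.off]

theorem Move.sign_eq {p q : Perm (Fin n)} {i j k : Fin n} (h : Move p q i j k) :
    Perm.sign q = Perm.sign p := by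
  rw [h.eq_mul]; simp [Perm.sign_swap h.hij.ne, Perm.sign_swap h.hjk.ne]

theorem exists_move_right (p : Perm (Fin n)) {i j k : Fin n} (hij : i < j) (hjk : j < k)
    (ab : p i < p j) (bc : p j < p k) : ∃ q : Perm (Fin n), Move p q i j k := by
  have h1 := hij.ne
  have h2 := hjk.ne
  have h3 := (hij.trans hjk).ne
  refine ⟨p * (swap i j * swap j k), hij, hjk, ab, bc, ?_, ?_, ?_, fun m hi hj hk => ?_⟩
  · simp [swap_apply_of_ne_of_ne h1 h3]
  · simp [swap_apply_of_ne_of_ne h3.symm h2.symm]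
  · simp
  · simp [swap_apply_of_ne_of_ne, hi, hj, hk]

theorem exists_move_left (q : Perm (Fin n)) {i j k : Fin n} (hij : i < j) (hjk : j < k)
    (ki : q k < q i) (ij : q i < q j) : ∃ p : Perm (Fin n), Move p q i j k := by
  have h1 := hij.ne
  have h2 := hjk.ne
  have h3 := (hij.trans hjk).ne
  have e1 : (q * (swap j k * swap i j)) i = q k := by simp
  have e2 : (q * (swap j k * swap i j)) j = q i := by
    simp [swap_apply_of_ne_of_ne h1 h3]
  have e3 : (q * (swap j k * swap i j)) k = q j := by
    simp [swap_apply_of_ne_of_ne h3.symm h2.symm]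
  refine ⟨q * (swap j k * swap i j), hij, hjk, ?_, ?_, e2.symm, e3.symm, e1.symm,
    fun m hi hj hk => ?_⟩
  · rwa [e1, e2]
  · rwa [e2, e3]
  · simp [swap_apply_of_ne_of_ne, hi, hj, hk]

theorem Move.board_right {p q : Perm (Fin n)} {i j k : Fin n} (h : Move p q i j k)
    (hx : Board p k (p i)) : Board q = Board p := by
  have H : ∀ m v, m ≤ k → p i ≤ v → Board p m v := fun m v => isBoard_board p _ _ _ _ hx
  obtain ⟨hij, hjk, ab, bc, qi, qj, qk, off⟩ := h
  have hik := hij.trans hjk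
  refine board_congr fun m hm => ?_
  by_cases hi : m = i
  · subst hi; rw [qi]; exact ⟨H _ _ hik.le le_rfl, H _ _ hik.le ab.le⟩
  by_cases hj : m = j
  · subst hj; rw [qj]; exact ⟨H _ _ hjk.le ab.le, H _ _ hjk.le (ab.trans bc).le⟩
  by_cases hk : m = k
  · subst hk; rw [qk]; exact ⟨H _ _ le_rfl (ab.trans bc).le, H _ _ le_rfl le_rfl⟩
  · exact absurd (off m hi hj hk) hm

theorem Move.board_left {p q : Perm (Fin n)} {i j k : Fin n} (h : Move p q i j k)
    (hx : Board q k (p i)) : Board p = Board q := by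
  have H : ∀ m v, m ≤ k → p i ≤ v → Board q m v := fun m v => isBoard_board q _ _ _ _ hx
  obtain ⟨hij, hjk, ab, bc, qi, qj, qk, off⟩ := h
  have hik := hij.trans hjk
  refine board_congr fun m hm => ?_
  by_cases hi : m = i
  · subst hi; rw [qi]; exact ⟨H _ _ hik.le ab.le, H _ _ hik.le le_rfl⟩
  by_cases hj : m = j
  · subst hj; rw [qj]; exact ⟨H _ _ hjk.le (ab.trans bc).le, H _ _ hjk.le ab.le⟩
  by_cases hk : m = k
  · subst hk; rw [qk]; exact ⟨H _ _ le_rfl le_rfl, H _ _ le_rfl (ab.trans bc).le⟩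
  · exact absurd (off m hi hj hk).symm hm

/-! ### The rotation respects the avoidance conditions -/

/-- If `p` has no ascending triple with corner strictly before the cell `(k, p i)`, then neither
has `q`, provided the middle position `j` of the move is the leftmost possible one. -/
theorem right_asc {E : Fin n → Fin n → Prop} (hE : IsBoard E) {p q : Fin n → Fin n}
    {i j k : Fin n} (hp : Function.Injective p) (hM : Move p q i j k) (hx : E k (p i))
    (first : ∀ m, i < m → m < j → p i < p m → p m < p k → False)
    (H1 : ∀ x y z, x < y → y < z → p x < p y → p y < p z →
      E z (p x) → (z < k ∨ z = k ∧ p i < p x) → False) :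
    ∀ x y z, x < y → y < z → q x < q y → q y < q z →
      E z (q x) → (z < k ∨ z = k ∧ p i < q x) → False := by
  obtain ⟨hij, hjk, ab, bc, qi, qj, qk, off⟩ := hM
  -- `HA` and `HB`: corners weakly to the upper left of `(k, p i)` lie on the board automatically.
  have HA : ∀ x y z, x < y → y < z → p x < p y → p y < p z → z < k → p i ≤ p x → False :=
    fun x y z h1 h2 h3 h4 h5 h6 =>
      H1 x y z h1 h2 h3 h4 (hE _ _ _ _ hx h5.le h6) (.inl h5)
  have HB : ∀ x y, x < y → y < k → p x < p y → p y < p k → p i < p x → False :=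
    fun x y h1 h2 h3 h4 h6 =>
      H1 x y k h1 h2 h3 h4 (hE _ _ _ _ hx le_rfl h6.le) (.inr ⟨rfl, h6⟩)
  have HC : ∀ x y z, x < y → y < z → p x < p y → p y < p z → z < k → E z (p x) → False :=
    fun x y z h1 h2 h3 h4 h5 h6 =>
      H1 x y z h1 h2 h3 h4 h6 (.inl h5)
  have inj : ∀ u v, p u = p v → u = v := fun u v h => hp h
  intro x y z h1 h2 h3 h4 h5 h6
  have hzk : z < k := by
    rcases h6 with h | ⟨rfl, h⟩
    · exact h
    · rw [qk] at h4
      exact absurd (h3.trans h4) h.not_gt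
  have hyk := h2.trans hzk
  have hxk := h1.trans hyk
  by_cases yj : y = j
  · subst yj
    have ez := off z (hij.trans h2).ne' h2.ne' hzk.ne
    rw [qj, ez] at h4
    exact HA i y z hij h2 ab (bc.trans h4) hzk le_rfl
  by_cases xj : x = j
  · subst xj
    have ey := off y (hij.trans h1).ne' h1.ne' hyk.ne
    have ez := off z (hij.trans (h1.trans h2)).ne' (h1.trans h2).ne' hzk.ne
    rw [qj, ey] at h3
    rw [ey, ez] at h4
    exact HA x y z h1 h2 (bc.trans h3) h4 hzk ab.le
  by_cases xi : x = i
  · subst xi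
    have ey := off y h1.ne' yj hyk.ne
    rw [qi, ey] at h3
    by_cases zj : z = j
    · subst zj
      rw [ey, qj] at h4
      exact first y h1 h2 (ab.trans h3) h4
    · have ez := off z (h1.trans h2).ne' zj hzk.ne
      rw [ey, ez] at h4
      exact HA x y z h1 h2 (ab.trans h3) h4 hzk le_rfl
  have ex := off x xi xj hxk.ne
  rw [ex] at h3 h5
  by_cases yi : y = i
  · subst yi
    rw [qi] at h3
    rcases lt_trichotomy (p x) (p y) with g | g | g
    · by_cases zj : z = j
      · subst zj
        exact HC x y z h1 h2 g ab hzk h5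
      · have ez := off z h2.ne' zj hzk.ne
        rw [qi, ez] at h4
        exact HC x y z h1 h2 g (ab.trans h4) hzk h5
    · exact xi (hp g)
    · exact HB x j (h1.trans hij) hjk h3 bc g
  have ey := off y yi yj hyk.ne
  rw [ey] at h3 h4
  by_cases zi : z = i
  · subst zi
    rw [qi] at h4
    rcases lt_trichotomy (p y) (p z) with g | g | g
    · exact HC x y z h1 h2 h3 g hzk h5
    · exact yi (hp g)
    · exact HB y j (h2.trans hij) hjk h4 bc g
  by_cases zj : z = j
  · subst zj
    rw [qj] at h4
    rcases lt_trichotomy (p y) (p z) with h | h | h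
    · exact HC x y z h1 h2 h3 h hzk h5
    · exact yj (hp h)
    · rcases lt_or_gt_of_ne yi with h' | h'
      · rcases lt_trichotomy (p x) (p i) with g | g | g
        · exact HC x i z (h1.trans h') hij g ab hzk h5
        · exact xi (hp g)
        · exact HB x y h1 hyk h3 h4 g
      · exact first y h' h2 (ab.trans h) h4
  rw [off z zi zj hzk.ne] at h4
  exact HC x y z h1 h2 h3 h4 hzk h5

/-- The move from `p` to `q` creates no pattern `231` with corner in a column after `k`. In `p`
the entries to the left of such a corner and above it are decreasing, and the move keeps them so. -/
theorem right_cyc {E : Fin n → Fin n → Prop} (hE : IsBoard E) {p q : Fin n → Fin n}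
    {i j k : Fin n} (hp : Function.Injective p) (hM : Move p q i j k) (hx : E k (p i))
    (first : ∀ m, i < m → m < j → p i < p m → p m < p k → False)
    (H1 : ∀ x y z, x < y → y < z → p x < p y → p y < p z →
      E z (p x) → (z < k ∨ z = k ∧ p i < p x) → False)
    (H2 : ∀ x y z, x < y → y < z → p z < p x → p x < p y → E z (p z) → k < z → False) :
    ∀ x y z, x < y → y < z → q z < q x → q x < q y → E z (q z) → k < z → False := by
  obtain ⟨hij, hjk, ab, bc, qi, qj, qk, off⟩ := hM
  have HA : ∀ x y z, x < y → y < z → p x < p y → p y < p z → z < k → p i ≤ p x → False :=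
    fun x y z h1 h2 h3 h4 h5 h6 =>
      H1 x y z h1 h2 h3 h4 (hE _ _ _ _ hx h5.le h6) (.inl h5)
  intro x y z h1 h2 h3 h4 h5 h6
  have hjz := hjk.trans h6
  have hiz := hij.trans hjz
  have hz : q z = p z := off z hiz.ne' hjz.ne' h6.ne'
  rw [hz] at h3 h5
  have HC : ∀ x y, x < y → y < z → p z < p x → p x < p y → False :=
    fun x y h1 h2 h3 h4 =>
      H2 x y z h1 h2 h3 h4 h5 h6
  have bz : p j < p z := by
    rcases lt_trichotomy (p z) (p j) with h | h | h
    · exact (HC j k hjk h6 h bc).elim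
    · exact absurd (hp h) hjz.ne'
    · exact h
  have big : ∀ m, p z < q m → m ≠ i ∧ m ≠ k := fun m hm =>
    ⟨fun h => by rw [h, qi] at hm; exact hm.not_gt bz,
      fun h => by rw [h, qk] at hm; exact hm.not_gt (ab.trans bz)⟩
  obtain ⟨xi, xk⟩ := big x h3
  obtain ⟨yi, yk⟩ := big y (h3.trans h4)
  by_cases xj : x = j
  · subst xj
    rw [qj, off y yi h1.ne' yk] at h4
    rcases lt_or_gt_of_ne yk with h | h
    · exact HA i x y hij h1 ab (bc.trans h4) h le_rfl
    · exact HC k y h h2 (by rwa [qj] at h3) h4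
  rw [off x xi xj xk] at h3 h4
  by_cases yj : y = j
  · subst yj
    rw [qj] at h4
    exact HC x k (h1.trans hjk) h6 h3 h4
  rw [off y yi yj yk] at h4
  exact HC x y h1 h2 h3 h4

/-- Converse of `right_asc`: if `(i, j)` is the last ascending pair of `q` to the upper left of
the cell `(k, p i)`, then undoing the move creates no ascending triple with corner strictly
before that cell. -/
theorem left_asc {E : Fin n → Fin n → Prop} (hE : IsBoard E) {p q : Fin n → Fin n}
    {i j k : Fin n} (hp : Function.Injective p) (hM : Move p q i j k) (hx : E k (p i))
    (last : ∀ x y, x < y → y < k → p i < q x → q x < q y → x < i ∨ x = i ∧ y ≤ j)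
    (H1 : ∀ x y z, x < y → y < z → q x < q y → q y < q z →
      E z (q x) → (z < k ∨ z = k ∧ p i < q x) → False) :
    ∀ x y z, x < y → y < z → p x < p y → p y < p z →
      E z (p x) → (z < k ∨ z = k ∧ p i < p x) → False := by
  obtain ⟨hij, hjk, ab, bc, qi, qj, qk, off⟩ := hM
  have HA : ∀ x y z, x < y → y < z → q x < q y → q y < q z → z < k → p i ≤ q x → False :=
    fun x y z h1 h2 h3 h4 h5 h6 =>
      H1 x y z h1 h2 h3 h4 (hE _ _ _ _ hx h5.le h6) (.inl h5)
  have HC : ∀ x y z, x < y → y < z → q x < q y → q y < q z → z < k → E z (q x) → False :=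
    fun x y z h1 h2 h3 h4 h5 h6 =>
      H1 x y z h1 h2 h3 h4 h6 (.inl h5)
  intro x y z h1 h2 h3 h4 h5 h6
  have zk : z ≤ k := by
    rcases h6 with h | h
    · exact h.le
    · exact h.1.le
  have hyk := h2.trans_le zk
  have hxk := h1.trans hyk
  by_cases xj : x = j
  · subst xj
    have hiy := hij.trans h1
    have ey := off y hiy.ne' h1.ne' hyk.ne
    rcases last i y hiy hyk (by rwa [qi]) (by rwa [qi, ey]) with h | h
    · exact lt_irrefl _ h
    · exact h.2.not_gt h1
  by_cases yj : y = j
  · subst yj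
    rcases zk.lt_or_eq with hzk | rfl
    · have hiz := hij.trans h2
      have ez := off z hiz.ne' h2.ne' hzk.ne
      rcases lt_trichotomy (p z) (p k) with g | g | g
      · rcases last i z hiz hzk (by rwa [qi]) (by rwa [qi, ez]) with h | h
        · exact lt_irrefl _ h
        · exact h.2.not_gt h2
      · exact hzk.ne (hp g)
      · by_cases xi : x = i
        · subst xi
          exact HA x y z h1 h2 (by rwa [qi, qj]) (by rwa [qj, ez]) hzk (by rw [qi]; exact ab.le)
        · have ex := off x xi xj hxk.ne
          exact HC x y z h1 h2 (by rw [ex, qj]; exact h3.trans bc) (by rwa [qj, ez]) hzk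
            (by rwa [ex])
    · have hax : p i < p x := by simpa using h6
      have xi : x ≠ i := by rintro rfl; exact lt_irrefl _ hax
      have ex := off x xi xj hxk.ne
      rcases lt_or_gt_of_ne xi with g | g
      · exact HA x i y g hij (by rwa [ex, qi]) (by rwa [qi, qj]) hjk (by rw [ex]; exact hax.le)
      · rcases last x y h1 hjk (by rwa [ex]) (by rw [ex, qj]; exact h3.trans bc) with h | h
        · exact h.not_gt g
        · exact xi h.1
  by_cases xi : x = i
  · subst xi
    have hzk : z < k := by
      rcases h6 with h | h
      · exact h
      · exact absurd h.2 (lt_irrefl _)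
    have ey := off y h1.ne' yj hyk.ne
    rcases lt_trichotomy (p y) (p j) with g | g | g
    · rcases lt_or_gt_of_ne yj with g' | g'
      · rcases last y j g' hjk (by rwa [ey]) (by rw [ey, qj]; exact g.trans bc) with h | h
        · exact h.not_gt h1
        · exact h1.ne' h.1
      · have ez := off z (h1.trans h2).ne' (g'.trans h2).ne' hzk.ne
        rcases last y z h2 hzk (by rwa [ey]) (by rwa [ey, ez]) with h | h
        · exact h.not_gt h1
        · exact h1.ne' h.1
    · exact yj (hp g)
    · by_cases zj : z = j
      · subst zj
        exact h4.not_gt g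
      · have ez := off z (h1.trans h2).ne' zj hzk.ne
        exact HA x y z h1 h2 (by rwa [qi, ey]) (by rwa [ey, ez]) hzk (by rw [qi]; exact ab.le)
  have ex := off x xi xj hxk.ne
  by_cases yi : y = i
  · subst yi
    have hzk : z < k := by
      rcases h6 with h | h
      · exact h
      · exact absurd h3 h.2.not_gt
    have hxji : x < j → E j (p x) → False := fun _ hj =>
      HC x y j h1 hij (by rw [ex, qi]; exact h3.trans ab) (by rwa [qi, qj]) hjk (by rwa [ex])
    by_cases zj : z = j
    · subst zj
      exact hxji (h1.trans h2) h5
    have ez := off z h2.ne' zj hzk.ne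
    rcases lt_trichotomy (p z) (p j) with h | h | h
    · rcases lt_or_gt_of_ne zj with h' | h'
      · rcases last z j h' hjk (by rwa [ez]) (by rw [ez, qj]; exact h.trans bc) with g | g
        · exact g.not_gt h2
        · exact h2.ne' g.1
      · exact hxji (h1.trans hij) (hE _ _ _ _ h5 h'.le le_rfl)
    · exact zj (hp h)
    · exact HC x y z h1 h2 (by rw [ex, qi]; exact h3.trans ab) (by rwa [qi, ez]) hzk (by rwa [ex])
  have ey := off y yi yj hyk.ne
  have hxy : q x < q y := by rwa [ex, ey]
  by_cases zi : z = i
  · subst zi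
    exact HC x y z h1 h2 hxy (by rw [ey, qi]; exact h4.trans ab) (hij.trans hjk) (by rwa [ex])
  by_cases zj : z = j
  · subst zj
    exact HC x y z h1 h2 hxy (by rw [ey, qj]; exact h4.trans bc) hjk (by rwa [ex])
  rcases zk.lt_or_eq with hzk | rfl
  · have ez := off z zi zj hzk.ne
    exact HC x y z h1 h2 hxy (by rwa [ey, ez]) hzk (by rwa [ex])
  have hax : p i < p x := by simpa using h6
  have hxi : x < i := by
    rcases last x y h1 h2 (by rwa [ex]) hxy with h | h
    · exact h
    · exact absurd h.1 xi
  rcases lt_or_gt_of_ne yj with h | h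
  · exact HA x y j h1 h hxy (by rwa [ey, qj]) hjk (by rw [ex]; exact hax.le)
  · rcases lt_trichotomy (p x) (p j) with g | g | g
    · exact HA x i j hxi hij (by rwa [ex, qi]) (by rwa [qi, qj]) hjk (by rw [ex]; exact hax.le)
    · exact xj (hp g)
    · have hiy := hij.trans h
      rcases last i y hiy h2 (by rwa [qi]) (by rw [qi, ey]; exact g.trans h3) with g | g
      · exact lt_irrefl _ g
      · exact g.2.not_gt h

/-- Converse of `right_cyc`: undoing the move at the last ascending pair `(i, j)` creates no
pattern `231` with corner in a column after `k`. -/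
theorem left_cyc {E : Fin n → Fin n → Prop} {p q : Fin n → Fin n}
    {i j k : Fin n} (hp : Function.Injective p) (hM : Move p q i j k)
    (last : ∀ x y, x < y → y < k → p i < q x → q x < q y → x < i ∨ x = i ∧ y ≤ j)
    (H2 : ∀ x y z, x < y → y < z → q z < q x → q x < q y → E z (q z) → k < z → False) :
    ∀ x y z, x < y → y < z → p z < p x → p x < p y → E z (p z) → k < z → False := by
  obtain ⟨hij, hjk, ab, bc, qi, qj, qk, off⟩ := hM
  intro x y z h1 h2 h3 h4 h5 h6
  have HC : ∀ x y, x < y → y < z → q z < q x → q x < q y → False :=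
    fun x y h1 h2 h3 h4 =>
      H2 x y z h1 h2 h3 h4 (by grind) h6
  have inj : ∀ u v, p u = p v → u = v := fun u v h => hp h
  clear H2
  have hjz := hjk.trans h6
  have hiz := hij.trans hjz
  have hz : q z = p z := off z hiz.ne' hjz.ne' h6.ne'
  have a1 : p j < p z := by
    rcases lt_trichotomy (p z) (p j) with h | h | h
    · exact (HC i j hij hjz (by rwa [hz, qi]) (by rwa [qi, qj])).elim
    · exact absurd (inj _ _ h) hjz.ne'
    · exact h
  have xi : x ≠ i := by rintro rfl; grind
  have yi : y ≠ i := by rintro rfl; grind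
  have xj : x ≠ j := by rintro rfl; grind
  have yj : y ≠ j := by rintro rfl; grind
  by_cases xk : x = k
  · subst xk
    have ey := off y yi yj h1.ne'
    exact HC j y (hjk.trans h1) h2 (by grind) (by grind)
  have ex := off x xi xj xk
  by_cases yk : y = k
  · subst yk
    rcases lt_or_gt_of_ne xj with h | h
    · exact HC x j h hjz (by grind) (by grind)
    · have := last i x (hij.trans h) h1 (by grind) (by grind)
      grind
  have ey := off y yi yj yk
  exact HC x y h1 h2 (by grind) (by grind)

/-- After a move with the leftmost middle position, `(i, j)` is the last ascending pair to the
upper left of `(k, p i)`. This is what makes the move reversible. -/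
theorem right_last {E : Fin n → Fin n → Prop} (hE : IsBoard E) {p q : Fin n → Fin n}
    {i j k : Fin n} (hp : Function.Injective p) (hM : Move p q i j k) (hx : E k (p i))
    (first : ∀ m, i < m → m < j → p i < p m → p m < p k → False)
    (H1 : ∀ x y z, x < y → y < z → p x < p y → p y < p z →
      E z (p x) → (z < k ∨ z = k ∧ p i < p x) → False) :
    ∀ x y, x < y → y < k → p i < q x → q x < q y → x < i ∨ x = i ∧ y ≤ j := by
  obtain ⟨hij, hjk, ab, bc, qi, qj, qk, off⟩ := hM
  have HA : ∀ y z, i < y → y < z → p i < p y → p y < p z → z < k → False :=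
    fun y z h1 h2 h3 h4 h5 =>
      H1 i y z h1 h2 h3 h4 (hE _ _ _ _ hx h5.le le_rfl) (.inl h5)
  have inj : ∀ u v, p u = p v → u = v := fun u v h => hp h
  clear H1
  grind

/-- If `(i, j)` is the last ascending pair of `q`, then `j` is the leftmost middle position
in `p`. -/
theorem left_first {p q : Fin n → Fin n} {i j k : Fin n} (hM : Move p q i j k)
    (last : ∀ x y, x < y → y < k → p i < q x → q x < q y → x < i ∨ x = i ∧ y ≤ j) :
    ∀ m, i < m → m < j → p i < p m → p m < p k → False := by
  obtain ⟨hij, hjk, ab, bc, qi, qj, qk, off⟩ := hM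
  grind

/-! ### Processing one cell of the board -/

/-- The class at stage `(K, M)`: even permutations with board `E` that have no ascending triple
whose corner `(z, π x)` is among the cells processed so far, and no pattern `231` whose corner
`(z, π z)` is among the other cells. Cells on the board are processed by increasing column and,
within a column, by decreasing value; those processed are the ones in a column before `K` and
those in column `K` with value at least `M`. -/
structure InCls (E : Fin n → Fin n → Prop) (K M : ℕ) (π : Perm (Fin n)) : Prop where
  even : Perm.sign π = 1
  board : Board π = E
  asc : ∀ x y z, x < y → y < z → π x < π y → π y < π z → E z (π x) →
    (z.val < K ∨ z.val = K ∧ M ≤ (π x).val) → False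
  cyc : ∀ x y z, x < y → y < z → π z < π x → π x < π y → E z (π z) →
    ¬ (z.val < K ∨ z.val = K ∧ M ≤ (π z).val) → False

/-- The move at the cell `(k, a)` with the canonical choices: `j` is the leftmost middle position
in `p`, and `(i, j)` is the last ascending pair of `q` to the upper left of `(k, a)`. -/
structure Step (k a : Fin n) (p q : Perm (Fin n)) (i j : Fin n) : Prop where
  move : Move p q i j k
  val : p i = a
  first : ∀ m, i < m → m < j → p i < p m → p m < p k → False
  last : ∀ x y, x < y → y < k → p i < q x → q x < q y → x < i ∨ x = i ∧ y ≤ j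

theorem Step.right_unique {k a : Fin n} {p q q' : Perm (Fin n)} {i j i' j' : Fin n}
    (h : Step k a p q i j) (h' : Step k a p q' i' j') : q = q' := by
  obtain rfl : i = i' := p.injective (h.val.trans h'.val.symm)
  obtain rfl : j = j' := by
    rcases lt_trichotomy j j' with g | g | g
    · exact (h'.first j h.move.hij g h.move.ab h.move.bc).elim
    · exact g
    · exact (h.first j' h'.move.hij g h'.move.ab h'.move.bc).elim
  rw [h.move.eq_mul, h'.move.eq_mul]

theorem Step.left_unique {k a : Fin n} {p p' q : Perm (Fin n)} {i j i' j' : Fin n}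
    (h : Step k a p q i j) (h' : Step k a p' q i' j') : p = p' := by
  have key : ∀ {p p' : Perm (Fin n)} {i j i' j' : Fin n}, Step k a p q i j →
      Step k a p' q i' j' → i' < i ∨ i' = i ∧ j' ≤ j := by
    intro p p' i j i' j' h h'
    refine h.last i' j' h'.move.hij h'.move.hjk ?_ ?_
    · rw [h.val, h'.move.qi, ← h'.val]; exact h'.move.ab
    · rw [h'.move.qi, h'.move.qj]; exact h'.move.bc
  have g1 := key h h'
  have g2 := key h' h
  obtain rfl : i = i' := by grind
  obtain rfl : j = j' := by grind
  exact mul_right_cancel (h.move.eq_mul.symm.trans h'.move.eq_mul)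

/-- A permutation that leaves the class when the cell `(k, a)` is processed has an ascending triple
with this corner, and moving at it yields a permutation that enters the class. -/
theorem step_right {E : Fin n → Fin n → Prop} {k a : Fin n} {p : Perm (Fin n)}
    (hp : InCls E k (a + 1) p) (hp' : ¬ InCls E k a p) :
    ∃ q, (InCls E k a q ∧ ¬ InCls E k (a + 1) q) ∧ ∃ i j, Step k a p q i j := by
  classical
  have hE : IsBoard E := hp.board ▸ isBoard_board p
  obtain ⟨i, j₀, hi, hj₀, hk, hb₀, hc₀, hx⟩ : ∃ i j, p i = a ∧ i < j ∧ j < k ∧ p i < p j ∧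
      p j < p k ∧ E k (p i) := by
    by_contra hno
    refine hp' ⟨hp.even, hp.board, fun x y z h1 h2 h3 h4 h5 h6 => ?_,
      fun x y z h1 h2 h3 h4 h5 h6 => hp.cyc x y z h1 h2 h3 h4 h5 (by omega)⟩
    by_cases h : z = k ∧ p x = a
    · obtain ⟨rfl, h⟩ := h
      exact hno ⟨x, y, h, h1, h2, h3, h4, h5⟩
    · exact hp.asc x y z h1 h2 h3 h4 h5 (by rw [← Fin.val_inj, ← Fin.val_inj] at h; omega)
  obtain ⟨j, hj, hmin⟩ := Finset.exists_min_image
    (Finset.univ.filter fun j => i < j ∧ j < k ∧ p i < p j ∧ p j < p k) id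
    ⟨j₀, by simp only [Finset.mem_filter, Finset.mem_univ, true_and]; exact ⟨hj₀, hk, hb₀, hc₀⟩⟩
  simp only [Finset.mem_filter, Finset.mem_univ, true_and, id] at hj hmin
  obtain ⟨hij, hjk, ab, bc⟩ := hj
  have first : ∀ m, i < m → m < j → p i < p m → p m < p k → False := fun m g1 g2 g3 g4 =>
    (hmin m ⟨g1, g2.trans hjk, g3, g4⟩).not_gt g2
  obtain ⟨q, hM⟩ := exists_move_right p hij hjk ab bc
  have H1 : ∀ x y z, x < y → y < z → p x < p y → p y < p z → E z (p x) →
      (z < k ∨ z = k ∧ p i < p x) → False := fun x y z h1 h2 h3 h4 h5 h6 =>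
    hp.asc x y z h1 h2 h3 h4 h5 (by rw [hi] at h6; omega)
  have H2 : ∀ x y z, x < y → y < z → p z < p x → p x < p y → E z (p z) → k < z → False :=
    fun x y z h1 h2 h3 h4 h5 h6 => hp.cyc x y z h1 h2 h3 h4 h5 (by omega)
  have F1 := right_asc hE p.injective hM hx first H1
  have F2 := right_cyc hE p.injective hM hx first H1 H2
  have F3 := right_last hE p.injective hM hx first H1
  refine ⟨q, ⟨⟨?_, ?_, fun x y z h1 h2 h3 h4 h5 h6 => ?_, fun x y z h1 h2 h3 h4 h5 h6 => ?_⟩,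
    fun hq => ?_⟩, i, j, hM, hi, first, F3⟩
  · rw [hM.sign_eq, hp.even]
  · rw [hM.board_right (hp.board ▸ hx), hp.board]
  · refine F1 x y z h1 h2 h3 h4 h5 ?_
    rcases h6 with h6 | ⟨h6, h7⟩
    · exact .inl h6
    · obtain rfl : z = k := Fin.ext h6
      rw [hM.qk, hi] at h4
      exact absurd (h3.trans h4) (not_lt.2 h7)
  · refine F2 x y z h1 h2 h3 h4 h5 ?_
    by_contra hkz
    have hzk : z = k := by omega
    rw [hzk, hM.qk, hi] at h6
    omega
  · refine hq.cyc i j k hij hjk ?_ ?_ ?_ ?_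
    · rwa [hM.qk, hM.qi]
    · rwa [hM.qi, hM.qj]
    · rwa [hM.qk]
    · rw [hM.qk, hi]; omega

/-- A permutation that enters the class when the cell `(k, a)` is processed has a pattern `231`
with this corner, and comes from a move at it. -/
theorem step_left {E : Fin n → Fin n → Prop} {k a : Fin n} {q : Perm (Fin n)}
    (hq : InCls E k a q) (hq' : ¬ InCls E k (a + 1) q) :
    ∃ p, (InCls E k (a + 1) p ∧ ¬ InCls E k a p) ∧ ∃ i j, Step k a p q i j := by
  classical
  have hE : IsBoard E := hq.board ▸ isBoard_board q
  obtain ⟨i₀, j₀, hk, h₀, hx⟩ : ∃ i j, q k = a ∧ (i < j ∧ j < k ∧ a < q i ∧ q i < q j) ∧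
      E k a := by
    by_contra hno
    refine hq' ⟨hq.even, hq.board, fun x y z h1 h2 h3 h4 h5 h6 =>
      hq.asc x y z h1 h2 h3 h4 h5 (by omega), fun x y z h1 h2 h3 h4 h5 h6 => ?_⟩
    by_cases h : z = k ∧ q z = a
    · obtain ⟨rfl, rfl⟩ := h
      exact hno ⟨x, y, rfl, ⟨h1, h2, h3, h4⟩, h5⟩
    · exact hq.cyc x y z h1 h2 h3 h4 h5 (by rw [← Fin.val_inj, ← Fin.val_inj] at h; omega)
  obtain ⟨i, hi, imax⟩ := Finset.exists_max_image
    (Finset.univ.filter fun i => ∃ j, i < j ∧ j < k ∧ a < q i ∧ q i < q j) id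
    ⟨i₀, by simpa using ⟨j₀, h₀⟩⟩
  simp only [Finset.mem_filter, Finset.mem_univ, true_and, id] at hi imax
  obtain ⟨j₁, h₁⟩ := hi
  obtain ⟨j, hj, jmax⟩ := Finset.exists_max_image
    (Finset.univ.filter fun j => i < j ∧ j < k ∧ a < q i ∧ q i < q j) id
    ⟨j₁, by simpa using h₁⟩
  simp only [Finset.mem_filter, Finset.mem_univ, true_and, id] at hj jmax
  obtain ⟨hij, hjk, ai, bc⟩ := hj
  obtain ⟨p, hM⟩ := exists_move_left q hij hjk (hk ▸ ai) bc
  have hi : p i = a := by rw [← hM.qk, hk]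
  have last : ∀ x y, x < y → y < k → p i < q x → q x < q y → x < i ∨ x = i ∧ y ≤ j := by
    intro x y h1 h2 h3 h4
    rw [hi] at h3
    rcases (imax x ⟨y, h1, h2, h3, h4⟩).lt_or_eq with h | rfl
    · exact .inl h
    · exact .inr ⟨rfl, jmax y ⟨h1, h2, h3, h4⟩⟩
  have H1 : ∀ x y z, x < y → y < z → q x < q y → q y < q z → E z (q x) →
      (z < k ∨ z = k ∧ p i < q x) → False := fun x y z h1 h2 h3 h4 h5 h6 =>
    hq.asc x y z h1 h2 h3 h4 h5 (by rw [hi] at h6; omega)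
  have H2 : ∀ x y z, x < y → y < z → q z < q x → q x < q y → E z (q z) → k < z → False :=
    fun x y z h1 h2 h3 h4 h5 h6 => hq.cyc x y z h1 h2 h3 h4 h5 (by omega)
  have hx' : E k (p i) := hi ▸ hx
  have B1 := left_asc hE p.injective hM hx' last H1
  have B2 := left_cyc p.injective hM last H2
  have B3 := left_first hM last
  have hac : a < p k := hi ▸ hM.ab.trans hM.bc
  refine ⟨p, ⟨⟨?_, ?_, fun x y z h1 h2 h3 h4 h5 h6 => ?_, fun x y z h1 h2 h3 h4 h5 h6 => ?_⟩,
    fun hp => ?_⟩, i, j, hM, hi, B3, last⟩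
  · rw [← hM.sign_eq, hq.even]
  · rw [hM.board_left (hq.board ▸ hx'), hq.board]
  · exact B1 x y z h1 h2 h3 h4 h5 (by rw [hi]; omega)
  · refine B2 x y z h1 h2 h3 h4 h5 ?_
    by_contra hkz
    have hzk : z = k := by omega
    rw [hzk] at h6
    omega
  · exact hp.asc i j k hij hjk hM.ab hM.bc hx' (.inr ⟨rfl, by rw [hi]⟩)

/-! ### All classes with the same board are equinumerous -/

open Classical in
/-- The permutations satisfying `InCls E K M`, as a finite set. -/
noncomputable def cls (E : Fin n → Fin n → Prop) (K M : ℕ) : Finset (Perm (Fin n)) :=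
  Finset.univ.filter (InCls E K M)

open Classical in
theorem card_step (E : Fin n → Fin n → Prop) (k a : Fin n) :
    (cls E k (a + 1)).card = (cls E k a).card := by
  rw [← Finset.card_sdiff_eq_card_sdiff_iff]
  refine le_antisymm
    (Finset.card_le_card_of_forall_subsingleton (fun p q => ∃ i j, Step k a p q i j) ?_ ?_)
    (Finset.card_le_card_of_forall_subsingleton' (fun p q => ∃ i j, Step k a p q i j) ?_ ?_)
  · intro p hp
    simp only [cls, Finset.mem_sdiff, Finset.mem_filter, Finset.mem_univ, true_and] at hp ⊢
    exact step_right hp.1 hp.2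
  · rintro q - p ⟨-, _, _, h⟩ p' ⟨-, _, _, h'⟩
    exact h.left_unique h'
  · intro q hq
    simp only [cls, Finset.mem_sdiff, Finset.mem_filter, Finset.mem_univ, true_and] at hq ⊢
    exact step_left hq.1 hq.2
  · rintro p - q ⟨-, _, _, h⟩ q' ⟨-, _, _, h'⟩
    exact h.right_unique h'

theorem card_column (E : Fin n → Fin n → Prop) (k : Fin n) :
    ∀ m ≤ n, (cls E k m).card = (cls E k 0).card
  | 0, _ => rfl
  | m + 1, hm => (card_step E k ⟨m, hm⟩).trans (card_column E k m (Nat.le_of_succ_le hm))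

/-- All of column `K` being processed is the same as none of column `K + 1` having a cell
processed. -/
theorem cls_succ (E : Fin n → Fin n → Prop) (K : ℕ) : cls E (K + 1) n = cls E K 0 := by
  have h : ∀ (z v : Fin n), (z.val < K + 1 ∨ z.val = K + 1 ∧ n ≤ v.val) ↔
      (z.val < K ∨ z.val = K ∧ 0 ≤ v.val) := by
    intro z v
    have := v.isLt
    omega
  ext π
  simp only [cls, Finset.mem_filter, Finset.mem_univ, true_and]
  exact ⟨fun H => ⟨H.even, H.board, by simpa only [h] using H.asc, by simpa only [h] using H.cyc⟩,
    fun H => ⟨H.even, H.board, by simpa only [h] using H.asc, by simpa only [h] using H.cyc⟩⟩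

theorem card_cls (E : Fin n → Fin n → Prop) :
    ∀ K ≤ n, (cls E K n).card = (cls E 0 n).card
  | 0, _ => rfl
  | K + 1, hK => by
    rw [cls_succ, ← card_column E ⟨K, hK⟩ n le_rfl]
    exact card_cls E K (Nat.le_of_succ_le hK)

/-! ### Pattern containment in terms of the board -/

theorem contains_p34512 (π : Perm (Fin n)) : Pattern.Contains p34512 π ↔
    ∃ x y z, x < y ∧ y < z ∧ π x < π y ∧ π y < π z ∧ Board π z (π x) := by
  constructor
  · rintro ⟨f, hf, h⟩
    exact ⟨f 0, f 1, f 2, hf (by decide), hf (by decide), (h _ _).2 (by decide),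
      (h _ _).2 (by decide), f 3, f 4, hf (by decide), hf (by decide), (h _ _).2 (by decide),
      (h _ _).2 (by decide)⟩
  · rintro ⟨x, y, z, h1, h2, h3, h4, u, v, h5, h6, h7, h8⟩
    refine ⟨![x, y, z, u, v], ?_, ?_⟩
    · rw [Fin.strictMono_iff_lt_succ]
      intro i
      fin_cases i <;> assumption
    · have e : ∀ a b, p34512 a < p34512 b ↔
          (![2,3,4,0,1] : Fin 5 → Fin 5) a < (![2,3,4,0,1] : Fin 5 → Fin 5) b := fun _ _ => Iff.rfl
      intro a b
      rw [e]
      fin_cases a <;> fin_cases b <;> simp <;> order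

theorem contains_p45312 (π : Perm (Fin n)) : Pattern.Contains p45312 π ↔
    ∃ x y z, x < y ∧ y < z ∧ π z < π x ∧ π x < π y ∧ Board π z (π z) := by
  constructor
  · rintro ⟨f, hf, h⟩
    exact ⟨f 0, f 1, f 2, hf (by decide), hf (by decide), (h _ _).2 (by decide),
      (h _ _).2 (by decide), f 3, f 4, hf (by decide), hf (by decide), (h _ _).2 (by decide),
      (h _ _).2 (by decide)⟩
  · rintro ⟨x, y, z, h1, h2, h3, h4, u, v, h5, h6, h7, h8⟩
    refine ⟨![x, y, z, u, v], ?_, ?_⟩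
    · rw [Fin.strictMono_iff_lt_succ]
      intro i
      fin_cases i <;> assumption
    · have e : ∀ a b, p45312 a < p45312 b ↔
          (![3,4,2,0,1] : Fin 5 → Fin 5) a < (![3,4,2,0,1] : Fin 5 → Fin 5) b := fun _ _ => Iff.rfl
      intro a b
      rw [e]
      fin_cases a <;> fin_cases b <;> simp <;> order

open Classical in
theorem mem_cls_last (E : Fin n → Fin n → Prop) (π : Perm (Fin n)) :
    π ∈ cls E n n ↔ (Perm.sign π = 1 ∧ Pattern.Avoids p34512 π) ∧ Board π = E := by
  simp only [cls, Finset.mem_filter, Finset.mem_univ, true_and, Pattern.Avoids, contains_p34512]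
  constructor
  · rintro ⟨h1, rfl, h3, -⟩
    exact ⟨⟨h1, fun ⟨x, y, z, g1, g2, g3, g4, g5⟩ => h3 x y z g1 g2 g3 g4 g5 (.inl z.isLt)⟩, rfl⟩
  · rintro ⟨⟨h1, h2⟩, rfl⟩
    exact ⟨h1, rfl, fun x y z g1 g2 g3 g4 g5 _ => h2 ⟨x, y, z, g1, g2, g3, g4, g5⟩,
      fun x y z _ _ _ _ _ h => h (.inl z.isLt)⟩

open Classical in
theorem mem_cls_zero (E : Fin n → Fin n → Prop) (π : Perm (Fin n)) :
    π ∈ cls E 0 n ↔ (Perm.sign π = 1 ∧ Pattern.Avoids p45312 π) ∧ Board π = E := by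
  simp only [cls, Finset.mem_filter, Finset.mem_univ, true_and, Pattern.Avoids, contains_p45312]
  constructor
  · rintro ⟨h1, rfl, -, h4⟩
    refine ⟨⟨h1, fun ⟨x, y, z, g1, g2, g3, g4, g5⟩ => h4 x y z g1 g2 g3 g4 g5 ?_⟩, rfl⟩
    have := (π z).isLt
    omega
  · rintro ⟨⟨h1, h2⟩, rfl⟩
    refine ⟨h1, rfl, fun x y z _ _ _ _ _ h => ?_,
      fun x y z g1 g2 g3 g4 g5 _ => h2 ⟨x, y, z, g1, g2, g3, g4, g5⟩⟩
    have := (π x).isLt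
    omega

open Classical in
theorem eav_eq_sum {k : ℕ} (n : ℕ) (σ : Perm (Fin k)) :
    eav n σ = ∑ E : Fin n → Fin n → Prop, (Finset.univ.filter fun π : Perm (Fin n) =>
      (Perm.sign π = 1 ∧ Pattern.Avoids σ π) ∧ Board π = E).card := by
  rw [eav, Nat.card_eq_fintype_card, Fintype.card_subtype,
    Finset.card_eq_sum_card_fiberwise (f := Board) (t := Finset.univ) (fun _ _ => by simp)]
  simp only [Finset.filter_filter]

end EvenWilf

open EvenWilf

/-- The patterns 45312, 34512 are pairwise even-Wilf-equivalent. -/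
theorem stmt14 :
    (∀ n : ℕ, eav n p45312 = eav n p34512) := by
  classical
  intro n
  rw [eav_eq_sum, eav_eq_sum]
  refine Finset.sum_congr rfl fun E _ => ?_
  convert (card_cls E n le_rfl).symm using 2
  · ext π; simp [mem_cls_zero]
  · ext π; simp [mem_cls_last]
end

section
/- The patterns 15432 and 54321 are even-Wilf-equivalent: for all n ≥ 0, eav_n(15432) = eav_n(54321). -/
/-- The pattern `15432` (one-line notation, 1-indexed). -/
def p15432 : Equiv.Perm (Fin 5) :=
  ⟨![0,4,3,2,1], ![0,4,3,2,1], by decide, by decide⟩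

/-- The pattern `54321` (one-line notation, 1-indexed). -/
def p54321 : Equiv.Perm (Fin 5) :=
  ⟨![4,3,2,1,0], ![4,3,2,1,0], by decide, by decide⟩

/-! ### Occurrences and the greedy choice -/

/-- The height function of a finite relation: `h y` is the largest number of steps in an `R`-chain
ending at `y`. The function `f` only witnesses well-foundedness. -/
theorem exists_height {α : Type*} [Fintype α] (R : α → α → Prop) (f : α → ℕ)
    (hf : ∀ x y, R x y → f x < f y) :
    ∃ h : α → ℕ, (∀ x y, R x y → h x < h y) ∧ ∀ y k, h y = k + 1 → ∃ x, R x y ∧ h x = k := by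
  classical
  have wf : WellFounded R := Subrelation.wf (fun {x y} h => hf x y h) (measure f).wf
  let h : α → ℕ := wf.fix fun y ih => Finset.univ.sup fun x => if hx : R x y then ih x hx + 1 else 0
  have heq : ∀ y, h y = Finset.univ.sup fun x => if R x y then h x + 1 else 0 := by
    intro y
    have := wf.fix_eq (fun y ih => Finset.univ.sup fun x =>
      if hx : R x y then ih x hx + 1 else 0) y
    simpa [h] using this
  have h1 : ∀ x y, R x y → h x < h y := by
    intro x y hxy
    have : (if R x y then h x + 1 else 0) ≤ h y := by
      rw [heq y]
      exact Finset.le_sup (f := fun x => if R x y then h x + 1 else 0) (Finset.mem_univ x)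
    rw [if_pos hxy] at this
    exact this
  refine ⟨h, h1, fun y k hk => ?_⟩
  have hlt : k < Finset.univ.sup fun x => if R x y then h x + 1 else 0 := by
    rw [← heq y]; omega
  obtain ⟨x, -, hx⟩ := Finset.lt_sup_iff.1 hlt
  by_cases hR : R x y
  · rw [if_pos hR] at hx
    exact ⟨x, hR, by have := h1 x y hR; omega⟩
  · rw [if_neg hR] at hx
    omega

/-- The positions `a < b < e < f` carry a decreasing subsequence of `π`. -/
def Dec4 {n : ℕ} (π : Equiv.Perm (Fin n)) (a b e f : Fin n) : Prop :=
  a < b ∧ b < e ∧ e < f ∧ π b < π a ∧ π e < π b ∧ π f < π e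

/-- `π` has an occurrence of `54321` whose largest value is `c`. -/
def JTop {n : ℕ} (π : Equiv.Perm (Fin n)) (c : Fin n) : Prop :=
  ∃ x a b e f, Dec4 π a b e f ∧ x < a ∧ π a < c ∧ π x = c

/-- `π` has an occurrence of `43215` whose largest value is `c`. -/
def FTop {n : ℕ} (π : Equiv.Perm (Fin n)) (c : Fin n) : Prop :=
  ∃ a b e f y, Dec4 π a b e f ∧ f < y ∧ π a < c ∧ π y = c

/-- The positions `p 0, …, p 4` (other values of `p` are irrelevant) carry the greedily chosen
occurrence of `54321` in `π` topped by `c`, with respect to a labelling `g` of positions. The labelling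
increases along inversions among the values at most `c`. The field `first` says that `p (i + 1)`
is the next position of its label after `p i`; `below` says that an entry lying to the lower left of
the occurrence, with `p k` the first chosen position after it, has label larger than `k`. -/
structure Step {n : ℕ} (c : Fin n) (π : Equiv.Perm (Fin n)) (p : ℕ → Fin n) (g : Fin n → ℕ) :
    Prop where
  start : π (p 0) = c
  mono : ∀ i j, i < j → j ≤ 4 → p i < p j
  anti : ∀ i j, i < j → j ≤ 4 → π (p j) < π (p i)
  label : ∀ i, i ≤ 4 → g (p i) = i
  strict : ∀ x y, π x ≤ c → x < y → π y < π x → g x < g y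
  pos : ∀ x, π x < c → 1 ≤ g x
  le : ∀ x, g x ≤ 4
  first : ∀ i, i < 4 → ∀ x, p i < x → x < p (i + 1) → π x < c → g x ≠ i + 1
  below : ∀ k, k ≤ 4 → ∀ x, (∀ i, i < k → p i < x) → x < p k → π x < π (p k) → k < g x

/-- The labelling is `4 - r x`, where `r x` is the number of descents in a longest decreasing
subsequence starting at position `x`. -/
theorem exists_step {n : ℕ} {c : Fin n} {π : Equiv.Perm (Fin n)}
    (hZ : ∀ c' < c, ¬ JTop π c') (hJ : JTop π c) : ∃ p g, Step c π p g := by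
  obtain ⟨r, hr, hr'⟩ := exists_height (fun y x : Fin n => x < y ∧ π y < π x)
    (fun x => n - x) (by intro x y h; have := h.1; omega)
  have descend : ∀ m, ∀ x k, r x = k + m → ∃ z, (z = x ∨ (x < z ∧ π z < π x)) ∧ r z = k := by
    intro m
    induction m with
    | zero => exact fun x k h => ⟨x, Or.inl rfl, h⟩
    | succ m ih =>
      intro x k h
      obtain ⟨y, ⟨hxy, hyx⟩, hy⟩ := hr' x (k + m) h
      obtain ⟨z, hz, hzk⟩ := ih y k hy
      refine ⟨z, Or.inr ?_, hzk⟩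
      rcases hz with rfl | hz
      · exact ⟨hxy, hyx⟩
      · exact ⟨hxy.trans hz.1, hz.2.trans hyx⟩
  have low : ∀ x, π x < c → r x ≤ 3 := by
    intro x hx
    by_contra! h4
    obtain ⟨z, hz, hz4⟩ := descend (r x - 4) x 4 (by omega)
    obtain ⟨a, ha, ha'⟩ := hr' z 3 hz4
    obtain ⟨b, hb, hb'⟩ := hr' a 2 ha'
    obtain ⟨e, he, he'⟩ := hr' b 1 hb'
    obtain ⟨f, hf, -⟩ := hr' e 0 he'
    refine hZ (π z) ?_ ⟨z, a, b, e, f, ⟨hb.1, he.1, hf.1, hb.2, he.2, hf.2⟩, ha.1, ha.2, rfl⟩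
    rcases hz with rfl | hz
    · exact hx
    · exact hz.2.trans hx
  obtain ⟨x₀, a, b, e, f, ⟨h1, h2, h3, h4, h5, h6⟩, h7, h8, hc⟩ := hJ
  have hx₀ : r x₀ = 4 := by
    have := hr a x₀ ⟨h7, hc ▸ h8⟩
    have := hr b a ⟨h1, h4⟩
    have := hr e b ⟨h2, h5⟩
    have := hr f e ⟨h3, h6⟩
    by_contra hne
    obtain ⟨y, hy, hy'⟩ := hr' x₀ (r x₀ - 1) (by omega)
    have := low y (hc ▸ hy.2)
    omega
  have rle : ∀ x, π x ≤ c → r x ≤ 4 := by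
    intro x hx
    rcases hx.lt_or_eq with h | h
    · have := low x h; omega
    · have : x = x₀ := π.injective (h.trans hc.symm)
      subst this; omega
  have next : ∀ i x, i < 4 → π x ≤ c → r x = 4 - i → ∃ y, x < y ∧ π y < π x ∧ r y = 3 - i ∧
      ∀ z, x < z → z < y → π z < c → r z ≠ 3 - i := by
    intro i x hi hx hrx
    obtain ⟨y₀, ⟨hy₀, hy₀'⟩, hry₀⟩ := hr' x (3 - i) (by omega)
    let S := Finset.univ.filter fun y => x < y ∧ π y < c ∧ r y = 3 - i
    have hy₀S : y₀ ∈ S := by simp [S, hy₀, hry₀, hy₀'.trans_le hx]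
    obtain ⟨y, hyS, hmin⟩ := S.exists_minimal ⟨y₀, hy₀S⟩
    simp only [S, Finset.mem_filter, Finset.mem_univ, true_and] at hyS hmin
    have hmin' : ∀ z, x < z → z < y → π z < c → r z ≠ 3 - i := by
      intro z hz hzy hzc hrz
      exact absurd (hmin ⟨hz, hzc, hrz⟩ hzy.le) (not_le.2 hzy)
    refine ⟨y, hyS.1, ?_, hyS.2.2, hmin'⟩
    rcases lt_trichotomy y y₀ with h | h | h
    · by_contra hlt
      have := hr y₀ y ⟨h, by order⟩
      omega
    · rwa [h]
    · exact absurd hry₀ (hmin' y₀ hy₀ h (hy₀'.trans_le hx))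
  choose! F hF using next
  let p : ℕ → Fin n := fun i => Nat.rec x₀ (fun i x => F i x) i
  have p_succ : ∀ i, p (i + 1) = F i (p i) := fun i => rfl
  have hp : ∀ i, i ≤ 4 → π (p i) ≤ c ∧ r (p i) = 4 - i := by
    intro i
    induction i with
    | zero => exact fun _ => ⟨hc.le, hx₀⟩
    | succ i ih =>
      intro hi
      obtain ⟨ih1, ih2⟩ := ih (by omega)
      obtain ⟨-, h2, h3, -⟩ := hF i (p i) (by omega) ih1 ih2
      rw [p_succ]
      exact ⟨h2.le.trans ih1, by omega⟩
  have hpF : ∀ i, i < 4 → p i < p (i + 1) ∧ π (p (i + 1)) < π (p i) ∧ 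
      ∀ z, p i < z → z < p (i + 1) → π z < c → r z ≠ 3 - i := by
    intro i hi
    obtain ⟨h1, h2⟩ := hp i hi.le
    obtain ⟨h1, h2, -, h4⟩ := hF i (p i) hi h1 h2
    exact ⟨h1, h2, h4⟩
  refine ⟨p, fun x => 4 - r x, hc, ?_, ?_, ?_, ?_, ?_, ?_, ?_, ?_⟩
  · intro i j hij
    induction j, hij using Nat.le_induction with
    | base => exact fun h => (hpF i (by omega)).1
    | succ j hj ih => exact fun h => (ih (by omega)).trans (hpF j (by omega)).1
  · intro i j hij
    induction j, hij using Nat.le_induction with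
    | base => exact fun h => (hpF i (by omega)).2.1
    | succ j hj ih => exact fun h => (hpF j (by omega)).2.1.trans (ih (by omega))
  · intro i hi
    have := (hp i hi).2
    omega
  · intro x y hx hxy hyx
    have := hr y x ⟨hxy, hyx⟩
    have := rle x hx
    omega
  · intro x hx
    have := low x hx
    omega
  · intro x
    omega
  · intro i hi x h1 h2 h3
    have := (hpF i hi).2.2 x h1 h2 h3
    have := low x h3
    omega
  · intro k hk x hx hxk hxv
    obtain ⟨hkc, hrk⟩ := hp k hk
    have hxc := hxv.trans_le hkc
    have hxl := low x hxc
    by_contra hlt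
    rcases k with _ | i
    · omega
    obtain ⟨z, hz, hzr⟩ := descend (r x - (3 - i)) x (3 - i) (by omega)
    have hxz : x ≤ z ∧ π z ≤ π x := by
      rcases hz with rfl | hz
      · exact ⟨le_rfl, le_rfl⟩
      · exact ⟨hz.1.le, hz.2.le⟩
    rcases lt_trichotomy z (p (i + 1)) with h | h | h
    · exact (hpF i (by omega)).2.2 z ((hx i (by omega)).trans_le hxz.1) h
        (hxz.2.trans_lt hxc) hzr
    · rw [h] at hxz
      exact absurd hxv (not_lt.2 hxz.2)
    · have := hr z (p (i + 1)) ⟨h, hxz.2.trans_lt hxv⟩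
      omega

/-! ### The cyclic shift and its injectivity -/

/-- `π'` is obtained from `π` by shifting the values at the positions `p 0, …, p 4` cyclically, the
value at `p 0` going to `p 4`. -/
structure IsShift {n : ℕ} (π π' : Equiv.Perm (Fin n)) (p : ℕ → Fin n) : Prop where
  move : ∀ i, i < 4 → π' (p i) = π (p (i + 1))
  last : π' (p 4) = π (p 0)
  fix : ∀ x, (∀ i, i ≤ 4 → x ≠ p i) → π' x = π x

theorem moved_or_fixed {n : ℕ} (p : ℕ → Fin n) (x : Fin n) :
    (∃ i, i ≤ 4 ∧ x = p i) ∨ ∀ i, i ≤ 4 → x ≠ p i := by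
  by_cases h : ∃ i, i ≤ 4 ∧ x = p i
  · exact Or.inl h
  · exact Or.inr fun i hi hx => h ⟨i, hi, hx⟩

/-- The shift is composition with a 5-cycle, so it preserves the sign. -/
theorem exists_shift {n : ℕ} (π : Equiv.Perm (Fin n)) (p : ℕ → Fin n)
    (hp : ∀ i j, i < j → j ≤ 4 → p i < p j) :
    ∃ π', IsShift π π' p ∧ Equiv.Perm.sign π' = Equiv.Perm.sign π := by
  have hinj : Function.Injective fun i : Fin 5 => p i := by
    intro i j hij
    rcases lt_trichotomy i j with h | h | h
    · exact absurd hij (hp i j h (by omega)).ne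
    · exact h
    · exact absurd hij (hp j i h (by omega)).ne'
  let P : Fin 5 ↪ Fin n := ⟨fun i => p i, hinj⟩
  have key : ∀ i : Fin 5, (finRotate 5).viaFintypeEmbedding P (p i) = p (finRotate 5 i) :=
    fun i => Equiv.Perm.viaFintypeEmbedding_apply_image (finRotate 5) P i
  refine ⟨π * (finRotate 5).viaFintypeEmbedding P, ⟨?_, ?_, ?_⟩, ?_⟩
  · intro i hi
    have := key ⟨i, by omega⟩
    rw [finRotate_of_lt hi] at this
    simp only at this
    rw [Equiv.Perm.mul_apply, this]
  · have := key 4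
    rw [show finRotate 5 4 = 0 from rfl] at this
    rw [Equiv.Perm.mul_apply]
    exact congrArg π this
  · intro x hx
    rw [Equiv.Perm.mul_apply, Equiv.Perm.viaFintypeEmbedding_apply_notMem_range]
    rintro ⟨i, rfl⟩
    exact hx i (by omega) rfl
  · rw [map_mul, Equiv.Perm.viaFintypeEmbedding_sign, sign_finRotate]
    simp
    decide

theorem IsShift.unique {n : ℕ} {π ρ π' : Equiv.Perm (Fin n)} {p q : ℕ → Fin n}
    (h : IsShift π π' p) (h' : IsShift ρ π' q) (hpq : ∀ i, i ≤ 4 → p i = q i) : π = ρ := by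
  ext1 x
  rcases moved_or_fixed p x with ⟨i, hi, rfl⟩ | hx
  · rcases i with _ | i
    · rw [← h.last, hpq 0 hi, ← h'.last, hpq 4 le_rfl]
    · rw [← h.move i (by omega), hpq (i + 1) hi, ← h'.move i (by omega), hpq i (by omega)]
  · rw [← h.fix x hx, h'.fix x fun i hi => hpq i hi ▸ hx i hi]

namespace Step

variable {n : ℕ} {c : Fin n} {π π' : Equiv.Perm (Fin n)} {p : ℕ → Fin n} {g : Fin n → ℕ}

theorem val_le (S : Step c π p g) (i : ℕ) (hi : i ≤ 4) : π (p i) ≤ c := by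
  rcases i with _ | i
  · exact S.start.le
  · exact S.start ▸ (S.anti 0 (i + 1) (by omega) hi).le

theorem lt_of (S : Step c π p g) {i j : ℕ} (hi : i ≤ 4) (h : p i < p j) : i < j := by
  by_contra! hji
  rcases hji.lt_or_eq with h' | h'
  · exact absurd h (S.mono j i h' hi).not_gt
  · exact absurd h (h' ▸ lt_irrefl _)

theorem shift_lt (S : Step c π p g) (H : IsShift π π' p) (i : ℕ) (hi : i < 4) :
    π' (p i) < π (p i) := by
  rw [H.move i hi]
  exact S.anti i (i + 1) (by omega) (by omega)

theorem shift_low (S : Step c π p g) (H : IsShift π π' p) (i : ℕ) (hi : i < 4) :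
    π' (p i) < c :=
  (S.shift_lt H i hi).trans_le (S.val_le i hi.le)

theorem shift_anti (S : Step c π p g) (H : IsShift π π' p) (i j : ℕ) (hij : i < j) (hj : j < 4) :
    π' (p j) < π' (p i) := by
  rw [H.move j hj, H.move i (by omega)]
  exact S.anti _ _ (by omega) (by omega)

theorem shift_last (S : Step c π p g) (H : IsShift π π' p) : π' (p 4) = c :=
  H.last.trans S.start

/-- If each shifted value below `c` carries its old label along, the labels still increase along the
inversions of `π'` below `c`. -/
theorem exists_newLabel (S : Step c π p g) (H : IsShift π π' p) :
    ∃ G : Fin n → ℕ, (∀ i, i < 4 → G (p i) = i + 1) ∧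
      (∀ x, (∀ i, i ≤ 4 → x ≠ p i) → G x = g x) ∧
      (∀ x, π' x < c → 1 ≤ G x ∧ G x ≤ 4) ∧
      ∀ x y, π' x < c → x < y → π' y < π' x → G x < G y := by
  classical
  let G : Fin n → ℕ := fun x => if ∃ i, i ≤ 4 ∧ x = p i then g x + 1 else g x
  have G1 : ∀ i, i < 4 → G (p i) = i + 1 := by
    intro i hi
    simp only [G]
    rw [if_pos ⟨i, hi.le, rfl⟩, S.label i hi.le]
  have G2 : ∀ x, (∀ i, i ≤ 4 → x ≠ p i) → G x = g x := by
    intro x hx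
    simp only [G]
    rw [if_neg]
    rintro ⟨i, hi, h⟩
    exact hx i hi h
  have ne4 : ∀ i, i ≤ 4 → π' (p i) < c → i < 4 := by
    intro i hi h
    by_contra hlt
    have : i = 4 := by omega
    subst this
    exact h.ne (S.shift_last H)
  refine ⟨G, G1, G2, ?_, ?_⟩
  · intro x hx
    rcases moved_or_fixed p x with ⟨i, hi, rfl⟩ | hxf
    · have := ne4 i hi hx
      rw [G1 i this]; omega
    · rw [G2 x hxf]
      exact ⟨S.pos x (H.fix x hxf ▸ hx), S.le x⟩
  · intro x y hx hxy hyx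
    have hy := hyx.trans hx
    rcases moved_or_fixed p x with ⟨i, hi, rfl⟩ | hxf <;>
      rcases moved_or_fixed p y with ⟨j, hj, rfl⟩ | hyf
    · have hi4 := ne4 i hi hx
      have hj4 := ne4 j hj hy
      have := S.lt_of hi hxy
      rw [G1 i hi4, G1 j hj4]; omega
    · have hi4 := ne4 i hi hx
      rw [H.move i hi4, H.fix y hyf] at hyx
      rw [G1 i hi4, G2 y hyf]
      rcases lt_or_gt_of_ne (hyf (i + 1) (by omega)) with h | h
      · refine S.below (i + 1) (by omega) y (fun k hk => ?_) h hyx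
        rcases (show k ≤ i by omega).lt_or_eq with h' | rfl
        · exact (S.mono k i h' hi).trans hxy
        · exact hxy
      · have := S.strict (p (i + 1)) y (S.val_le _ (by omega)) h hyx
        rwa [S.label _ (by omega)] at this
    · have hj4 := ne4 j hj hy
      rw [H.fix x hxf] at hyx hx
      rw [H.move j hj4] at hyx
      rw [G2 x hxf, G1 j hj4]
      have := S.strict x (p (j + 1)) hx.le
        (hxy.trans (S.mono j (j + 1) (by omega) (by omega))) hyx
      rwa [S.label _ (by omega)] at this
    · rw [H.fix x hxf] at hyx hx
      rw [H.fix y hyf] at hyx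
      rw [G2 x hxf, G2 y hyf]
      exact S.strict x y hx.le hxy hyx

theorem not_jTop (S : Step c π p g) (H : IsShift π π' p) : ∀ c' < c, ¬ JTop π' c' := by
  rintro c' hc' ⟨x, a, b, e, f, ⟨h1, h2, h3, h4, h5, h6⟩, h7, h8, hx⟩
  obtain ⟨G, -, -, G3, G4⟩ := S.exists_newLabel H
  subst hx
  have ha := h8.trans hc'
  have hb := h4.trans ha
  have he := h5.trans hb
  have hf := h6.trans he
  have := G4 x a hc' h7 h8
  have := G4 a b ha h1 h4
  have := G4 b e hb h2 h5
  have := G4 e f he h3 h6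
  have := G3 x hc'
  have := G3 f hf
  omega

theorem fTop (S : Step c π p g) (H : IsShift π π' p) : FTop π' c :=
  ⟨p 0, p 1, p 2, p 3, p 4,
    ⟨S.mono _ _ (by omega) (by omega), S.mono _ _ (by omega) (by omega),
      S.mono _ _ (by omega) (by omega), S.shift_anti H _ _ (by omega) (by omega),
      S.shift_anti H _ _ (by omega) (by omega), S.shift_anti H _ _ (by omega) (by omega)⟩,
    S.mono _ _ (by omega) (by omega), S.shift_low H _ (by omega), S.shift_last H⟩

/-- If `L` counts the steps of a longest decreasing chain of `π'` below `c` ending at a given position,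
then `p i` is the last position before `p (i + 1)` with `L`-value `i`. -/
theorem index_eq (S : Step c π p g) (H : IsShift π π' p) {L : Fin n → ℕ}
    (hL : ∀ x y, x < y ∧ π' y < π' x ∧ π' x < c → L x < L y)
    (hL' : ∀ y k, L y = k + 1 → ∃ x, (x < y ∧ π' y < π' x ∧ π' x < c) ∧ L x = k)
    (i : ℕ) (hi : i < 4) :
    L (p i) = i ∧ ∀ y, p i < y → y < p (i + 1) → π' y < c → L y ≠ i := by
  obtain ⟨G, G1, G2, G3, G4⟩ := S.exists_newLabel H
  -- `G` increases along chains and starts at least at `1`, so it dominates `L + 1`.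
  have LG : ∀ k x, L x = k → π' x < c → k + 1 ≤ G x := by
    intro k
    induction k with
    | zero => exact fun x _ hx => (G3 x hx).1
    | succ k ih =>
      intro x hk hx
      obtain ⟨w, ⟨h1, h2, h3⟩, hw⟩ := hL' x k hk
      have := ih w hw h3
      have := G4 w x h3 h1 h2
      omega
  have ge : ∀ i, i < 4 → i ≤ L (p i) := by
    intro i
    induction i with
    | zero => exact fun _ => Nat.zero_le _
    | succ i ih =>
      intro hi
      have := ih (by omega)
      have := hL (p i) (p (i + 1)) ⟨S.mono _ _ (by omega) (by omega),
        S.shift_anti H _ _ (by omega) hi, S.shift_low H i (by omega)⟩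
      omega
  have hLi : L (p i) = i := by
    have h1 := LG _ (p i) rfl (S.shift_low H i hi)
    have h2 := ge i hi
    rw [G1 i hi] at h1
    omega
  refine ⟨hLi, fun y h1 h2 hy hLy => ?_⟩
  have hyf : ∀ j, j ≤ 4 → y ≠ p j := by
    rintro j hj rfl
    have := S.lt_of (by omega) h1
    have := S.lt_of hj h2
    omega
  have hG := LG i y hLy hy
  have hπ := H.fix y hyf
  have hy' : π y < c := hπ ▸ hy
  rw [G2 y hyf] at hG
  have hne := S.first i hi y h1 h2 hy'
  rcases lt_trichotomy (π y) (π (p (i + 1))) with h | h | h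
  · have := hL (p i) y ⟨h1, by rw [hπ, H.move i hi]; exact h, S.shift_low H i hi⟩
    omega
  · exact h2.ne (π.injective h)
  · have := S.strict y (p (i + 1)) hy'.le h2 h
    rw [S.label _ (by omega)] at this
    omega

/-- The shift is injective: `p 4` is the position of `c` in `π'`, and `index_eq` determines the other
positions successively. -/
theorem unique {ρ : Equiv.Perm (Fin n)} {q : ℕ → Fin n} {h : Fin n → ℕ}
    (S : Step c π p g) (H : IsShift π π' p) (S' : Step c ρ q h) (H' : IsShift ρ π' q) : π = ρ := by
  obtain ⟨L, hL, hL'⟩ := exists_height (fun x y : Fin n => x < y ∧ π' y < π' x ∧ π' x < c)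
    (fun x => (x : ℕ)) (fun x y h => h.1)
  have key : ∀ k, k ≤ 4 → p (4 - k) = q (4 - k) := by
    intro k
    induction k with
    | zero =>
      exact fun _ => π'.injective ((S.shift_last H).trans (S'.shift_last H').symm)
    | succ k ih =>
      intro hk
      have ih := ih (by omega)
      have hs : 4 - k = 4 - (k + 1) + 1 := by omega
      rw [hs] at ih
      set i := 4 - (k + 1)
      have hi : i < 4 := by omega
      obtain ⟨a1, a2⟩ := S.index_eq H hL hL' i hi
      obtain ⟨b1, b2⟩ := S'.index_eq H' hL hL' i hi
      rcases lt_trichotomy (p i) (q i) with h | h | h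
      · exact absurd b1 (a2 _ h (ih ▸ S'.mono i (i + 1) (by omega) (by omega))
          (S'.shift_low H' i hi))
      · exact h
      · exact absurd a1 (b2 _ h (ih ▸ S.mono i (i + 1) (by omega) (by omega))
          (S.shift_low H i hi))
  refine H.unique H' fun i hi => ?_
  have := key (4 - i) (by omega)
  rwa [show 4 - (4 - i) = i by omega] at this

end Step

/-! ### Occurrences of `43215` topped by a larger value -/

theorem fTop_of_height {n : ℕ} {π : Equiv.Perm (Fin n)} {y : Fin n} {m : Fin n → ℕ}
    (hm : ∀ x k, m x = k + 1 → ∃ w, (w < x ∧ π x < π w ∧ π w < π y) ∧ m w = k)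
    {f : Fin n} (hf : f < y) (h3 : 3 ≤ m f) : FTop π (π y) := by
  obtain ⟨e, he, he'⟩ := hm f (m f - 1) (by omega)
  obtain ⟨b, hb, hb'⟩ := hm e (m f - 2) (by omega)
  obtain ⟨a, ha, -⟩ := hm b (m f - 3) (by omega)
  exact ⟨a, b, e, f, y, ⟨ha.1, hb.1, he.1, ha.2.1, hb.2.1, he.2.1⟩, hf, ha.2.2, rfl⟩

namespace Step

variable {n : ℕ} {c : Fin n} {π π' : Equiv.Perm (Fin n)} {p : ℕ → Fin n} {g : Fin n → ℕ}

/-- An entry `x` to the lower left of the chosen occurrence has smaller `m`-height than the chosen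
entry with the same label, where `m` measures decreasing chains of values below `d` ending at a
position. The proof replaces a chain ending at `x`, from the point where it enters the lower left
region, by a part of the chosen occurrence. -/
theorem height_lt_of_below (S : Step c π p g) {d : Fin n} (hd : c < d) {m : Fin n → ℕ}
    (hm : ∀ x y, x < y ∧ π y < π x ∧ π x < d → m x < m y)
    (hm' : ∀ y k, m y = k + 1 → ∃ x, (x < y ∧ π y < π x ∧ π x < d) ∧ m x = k) :
    ∀ N x k, m x = N → (∀ i, i ≤ 4 → x ≠ p i) → k ≤ 4 → x < p k → π x < π (p k) →
      m x < m (p (g x)) := by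
  have mp : ∀ i j, i < j → j ≤ 4 → m (p i) < m (p j) := fun i j hij hj =>
    hm _ _ ⟨S.mono i j hij hj, S.anti i j hij hj, (S.val_le i (by omega)).trans_lt hd⟩
  intro N
  induction N with
  | zero =>
    intro x k hx hxf hk h1 h2
    have := S.pos x (h2.trans_le (S.val_le k hk))
    have := mp 0 (g x) this (S.le x)
    omega
  | succ N ih =>
    intro x k hx hxf hk h1 h2
    classical
    have hex : ∃ k, x < p k := ⟨k, h1⟩
    -- `p l` is the first chosen position to the right of `x`.
    obtain ⟨l, hl, hmin⟩ : ∃ l, x < p l ∧ ∀ i, i < l → ¬ x < p i :=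
      ⟨Nat.find hex, Nat.find_spec hex, fun i hi => Nat.find_min hex hi⟩
    have hlk : l ≤ k := by
      by_contra! h
      exact hmin k h h1
    have hxl : π x < π (p l) := by
      rcases hlk.lt_or_eq with h | h
      · exact h2.trans (S.anti l k h hk)
      · exact h ▸ h2
    have hlg : l < g x := S.below l (by omega) x
      (fun i hi => lt_of_le_of_ne (not_lt.1 (hmin i hi)) (hxf i (by omega)).symm) hl hxl
    have hlg' := mp l (g x) hlg (S.le x)
    obtain ⟨w, ⟨hw1, hw2, hw3⟩, hw⟩ := hm' x N hx
    have hwl := hw1.trans hl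
    rcases lt_trichotomy (π w) (π (p l)) with h | h | h
    · have hwf : ∀ i, i ≤ 4 → w ≠ p i := by
        rintro i hi rfl
        have := S.lt_of hi hwl
        exact absurd h (S.anti i l this (by omega)).not_gt
      have hwc := h.le.trans (S.val_le l (by omega))
      have h3 := ih w l hw hwf (by omega) hwl h
      have h4 := mp _ _ (S.strict w x hwc hw1 hw2) (S.le x)
      omega
    · exact absurd (π.injective h) hwl.ne
    · have := hm w (p l) ⟨hwl, h, hw3⟩
      omega

/-- The shift creates no occurrence of `43215` topped by `d > c`. If the position `y` of `d` is beyond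
`p 3`, the chosen entries already form one in `π`. Otherwise, the height `m` of `π`, read by positions,
still increases along decreasing pairs of `π'` before `y`. -/
theorem fTop_of_shift (S : Step c π p g) (H : IsShift π π' p) {d : Fin n} (hd : c < d)
    (hF : FTop π' d) : FTop π d := by
  obtain ⟨a, b, e, f, y, ⟨h1, h2, h3, h4, h5, h6⟩, hfy, had, hy⟩ := hF
  have hyf : ∀ i, i ≤ 4 → y ≠ p i := by
    rintro i hi rfl
    rcases hi.lt_or_eq with h | rfl
    · exact absurd hd (hy ▸ (S.shift_low H i h).not_gt)
    · exact hd.ne ((S.shift_last H).symm.trans hy)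
  rw [H.fix y hyf] at hy
  rcases lt_or_gt_of_ne (hyf 3 (by omega)) with hy3 | hy3
  swap
  · exact ⟨p 0, p 1, p 2, p 3, y, ⟨S.mono _ _ (by omega) (by omega),
      S.mono _ _ (by omega) (by omega), S.mono _ _ (by omega) (by omega),
      S.anti _ _ (by omega) (by omega), S.anti _ _ (by omega) (by omega),
      S.anti _ _ (by omega) (by omega)⟩, hy3, S.start ▸ hd, hy⟩
  obtain ⟨m, hm, hm'⟩ := exists_height (fun x y : Fin n => x < y ∧ π y < π x ∧ π x < d)
    (fun x => (x : ℕ)) (fun x y h => h.1)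
  have key : ∀ x z, x < z → z < y → π' z < π' x → π' x < d → m x < m z := by
    intro x z hxz hzy hzx hxd
    have idx : ∀ i, i ≤ 4 → p i < y → i < 3 := fun i hi h => S.lt_of hi (h.trans hy3)
    rcases moved_or_fixed p x with ⟨i, hi, rfl⟩ | hxf <;>
      rcases moved_or_fixed p z with ⟨j, hj, rfl⟩ | hzf
    · have := S.lt_of hi hxz
      exact hm _ _ ⟨hxz, S.anti i j this hj, (S.val_le i hi).trans_lt hd⟩
    · have hi3 := idx i hi (hxz.trans hzy)
      rw [H.fix z hzf] at hzx
      exact hm _ _ ⟨hxz, hzx.trans (S.shift_lt H i (by omega)), (S.val_le i hi).trans_lt hd⟩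
    · have hj3 := idx j hj hzy
      rw [H.fix x hxf] at hzx hxd
      rw [H.move j (by omega)] at hzx
      rcases lt_trichotomy (π x) (π (p j)) with h | h | h
      · have h7 := S.height_lt_of_below hd hm hm' (m x) x j rfl hxf hj hxz h
        have h8 := S.strict x (p (j + 1)) (h.le.trans (S.val_le j hj))
          (hxz.trans (S.mono j (j + 1) (by omega) (by omega))) hzx
        rw [S.label _ (by omega)] at h8
        rcases (show g x ≤ j by omega).lt_or_eq with h9 | h9
        · exact h7.trans (hm _ _ ⟨S.mono _ _ h9 hj, S.anti _ _ h9 hj,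
            (S.val_le _ (by omega)).trans_lt hd⟩)
        · rwa [h9] at h7
      · exact absurd (π.injective h) hxz.ne
      · exact hm _ _ ⟨hxz, h, hxd⟩
    · rw [H.fix x hxf] at hzx hxd
      rw [H.fix z hzf] at hzx
      exact hm _ _ ⟨hxz, hzx, hxd⟩
  have k1 := key a b h1 (by order) h4 had
  have k2 := key b e h2 (by order) h5 (by order)
  have k3 := key e f h3 (by order) h6 (by order)
  subst hy
  exact fTop_of_height hm' hfy (by omega)

/-- The shift destroys no value `d > c` topping an occurrence of `43215`. If the position `y` of `d` is
beyond `p 3`, the shifted entries form an occurrence in `π'`. Otherwise, the height `m` of `π'` is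
modified to a labelling `l` which increases along decreasing pairs of `π` before `y` and whose values
are still attained by `m` before `y`. -/
theorem shift_fTop (S : Step c π p g) (H : IsShift π π' p) {d : Fin n} (hd : c < d)
    (hF : FTop π d) : FTop π' d := by
  obtain ⟨a, b, e, f, y, ⟨h1, h2, h3, h4, h5, h6⟩, hfy, had, hy⟩ := hF
  have hyf : ∀ i, i ≤ 4 → y ≠ p i := by
    rintro i hi rfl
    exact absurd hd (hy ▸ (S.val_le i hi).not_gt)
  have hy' : π' y = d := (H.fix y hyf).trans hy
  rcases lt_or_gt_of_ne (hyf 3 (by omega)) with hy3 | hy3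
  swap
  · exact ⟨p 0, p 1, p 2, p 3, y, ⟨S.mono _ _ (by omega) (by omega),
      S.mono _ _ (by omega) (by omega), S.mono _ _ (by omega) (by omega),
      S.shift_anti H _ _ (by omega) (by omega), S.shift_anti H _ _ (by omega) (by omega),
      S.shift_anti H _ _ (by omega) (by omega)⟩, hy3, (S.shift_low H 0 (by omega)).trans hd, hy'⟩
  obtain ⟨m, hm, hm'⟩ := exists_height (fun x y : Fin n => x < y ∧ π' y < π' x ∧ π' x < d)
    (fun x => (x : ℕ)) (fun x y h => h.1)
  classical
  -- `A x`: the entry is at most `c` and on or above the staircase of the chosen occurrence. Read by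
  -- positions, a decreasing pair of `π` before `y` is lost in `π'` only if it starts at a chosen
  -- position and ends at an unmoved one in `A`; hence the maximum in `l`.
  let A : Fin n → Prop := fun x => π x ≤ c ∧ ∀ k, k ≤ 4 → x < p k → π (p k) ≤ π x
  have Ap : ∀ i, i ≤ 4 → A (p i) := fun i hi =>
    ⟨S.val_le i hi, fun k hk h => (S.anti i k (S.lt_of hi h) hk).le⟩
  have Ale : ∀ x, A x → p (g x) ≤ x := by
    rintro x ⟨hx, hA⟩
    by_contra! h
    have h7 := lt_of_le_of_ne (hA (g x) (S.le x) h) (π.injective.ne h.ne')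
    have := S.strict x _ hx h h7
    rw [S.label _ (S.le x)] at this
    omega
  let l : Fin n → ℕ := fun x => if A x then max (m x) (m (p (g x))) else m x
  have l1 : ∀ x, A x → l x = max (m x) (m (p (g x))) := fun x h => if_pos h
  have l2 : ∀ x, ¬ A x → l x = m x := fun x h => if_neg h
  have l3 : ∀ x, m x ≤ l x := by
    intro x
    by_cases h : A x
    · rw [l1 x h]; exact le_max_left _ _
    · rw [l2 x h]
  have idx : ∀ i, i ≤ 4 → p i < y → i < 3 := fun i hi h => S.lt_of hi (h.trans hy3)
  have fixed_lt : ∀ x z, (∀ i, i ≤ 4 → x ≠ p i) → x < z → z < y → π z < π x → π x < d →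
      m x < m z := by
    intro x z hxf hxz hzy hzx hxd
    have hx := H.fix x hxf
    rcases moved_or_fixed p z with ⟨j, hj, rfl⟩ | hzf
    · have := idx j hj hzy
      exact hm _ _ ⟨hxz, hx ▸ (S.shift_lt H j (by omega)).trans hzx, hx ▸ hxd⟩
    · exact hm _ _ ⟨hxz, by rwa [hx, H.fix z hzf], hx ▸ hxd⟩
  have key : ∀ x z, x < z → z < y → π z < π x → π x < d → l x < l z := by
    intro x z hxz hzy hzx hxd
    by_cases hA : A x
    · rw [l1 x hA]
      have hgx := Ale x hA
      have hg3 := idx _ (S.le x) (by order)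
      have second : m (p (g x)) < l z := by
        by_cases hB : A z
        · have h7 := S.strict x z hA.1 hxz hzx
          have h8 := idx _ (S.le z) ((Ale z hB).trans_lt hzy)
          rw [l1 z hB]
          refine lt_max_of_lt_right (hm _ _ ⟨S.mono _ _ h7 (by omega),
            S.shift_anti H _ _ h7 (by omega), (S.shift_low H _ (by omega)).trans hd⟩)
        · rw [l2 z hB]
          have hB' : ∃ k, k ≤ 4 ∧ z < p k ∧ π z < π (p k) := by
            by_contra! h
            exact hB ⟨hzx.le.trans hA.1, h⟩
          obtain ⟨k, hk, hzk, hzk'⟩ := hB'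
          have hzf : ∀ i, i ≤ 4 → z ≠ p i := by
            rintro i hi rfl
            exact hB (Ap i hi)
          have h7 : g x < k := S.lt_of (S.le x) (by order)
          have h8 : π (p k) ≤ π (p (g x + 1)) := by
            rcases (show g x + 1 ≤ k by omega).lt_or_eq with h | h
            · exact (S.anti _ _ h hk).le
            · rw [h]
          refine hm _ _ ⟨hgx.trans_lt hxz, ?_, (S.shift_low H _ (by omega)).trans hd⟩
          rw [H.fix z hzf, H.move _ (by omega)]
          exact hzk'.trans_le h8
      refine max_lt ?_ second
      rcases moved_or_fixed p x with ⟨i, hi, rfl⟩ | hxf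
      · rwa [S.label i hi] at second
      · exact (fixed_lt x z hxf hxz hzy hzx hxd).trans_le (l3 z)
    · rw [l2 x hA]
      have hxf : ∀ i, i ≤ 4 → x ≠ p i := by
        rintro i hi rfl
        exact hA (Ap i hi)
      exact (fixed_lt x z hxf hxz hzy hzx hxd).trans_le (l3 z)
  have k1 := key a b h1 (by order) h4 had
  have k2 := key b e h2 (by order) h5 (by order)
  have k3 := key e f h3 (by order) h6 (by order)
  subst hy'
  by_cases hA : A f
  · rw [l1 f hA] at k3
    rcases le_total (m f) (m (p (g f))) with h | h
    · rw [max_eq_right h] at k3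
      exact fTop_of_height hm' ((Ale f hA).trans_lt hfy) (by omega)
    · rw [max_eq_left h] at k3
      exact fTop_of_height hm' hfy (by omega)
  · rw [l2 f hA] at k3
    exact fTop_of_height hm' hfy (by omega)

end Step

/-! ### The mirror symmetry -/

/-- The involution `x ↦ c - 1 - x` on the values below `c`, fixing all other values. -/
def flipBelow {n : ℕ} (c : Fin n) : Equiv.Perm (Fin n) :=
  Function.Involutive.toPerm
    (fun x => if x < c then ⟨c - 1 - x, by omega⟩ else x) (by
      intro x
      by_cases h : x < c
      · have h' : (⟨c - 1 - x, by omega⟩ : Fin n) < c := by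
          rw [Fin.lt_def] at h ⊢; simp only; omega
        simp only [if_pos h, if_pos h']
        ext
        rw [Fin.lt_def] at h
        simp only
        omega
      · simp only [if_neg h])

theorem flipBelow_lt {n : ℕ} {c x : Fin n} (h : x < c) : (flipBelow c x : ℕ) = c - 1 - x := by
  change ((if x < c then ⟨c - 1 - x, by omega⟩ else x : Fin n) : ℕ) = c - 1 - x
  rw [if_pos h]

theorem flipBelow_self {n : ℕ} (c : Fin n) : flipBelow c c = c :=
  if_neg (lt_irrefl c)

theorem flipBelow_flipBelow {n : ℕ} (c x : Fin n) : flipBelow c (flipBelow c x) = x :=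
  Function.Involutive.toPerm_involutive _ x

theorem flipBelow_lt_self {n : ℕ} {c x : Fin n} (h : x < c) : flipBelow c x < c := by
  have := flipBelow_lt h
  rw [Fin.lt_def] at *
  omega

theorem flipBelow_anti {n : ℕ} {c x y : Fin n} (hy : y < c) (h : x < y) :
    flipBelow c y < flipBelow c x := by
  have h1 := flipBelow_lt hy
  have h2 := flipBelow_lt (h.trans hy)
  rw [Fin.lt_def] at *
  omega

/-- Reversal of positions combined with complementation of the values below `c`. It exchanges
`54321` topped by `c` and `43215` topped by `c`. -/
def mirror {n : ℕ} (c : Fin n) (π : Equiv.Perm (Fin n)) : Equiv.Perm (Fin n) :=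
  flipBelow c * π * Fin.revPerm

theorem mirror_apply {n : ℕ} (c : Fin n) (π : Equiv.Perm (Fin n)) (x : Fin n) :
    mirror c π x = flipBelow c (π x.rev) := rfl

theorem mirror_rev {n : ℕ} (c : Fin n) (π : Equiv.Perm (Fin n)) (x : Fin n) :
    mirror c π x.rev = flipBelow c (π x) := by
  rw [mirror_apply, Fin.rev_rev]

theorem flipBelow_mirror {n : ℕ} (c : Fin n) (π : Equiv.Perm (Fin n)) (x : Fin n) :
    flipBelow c (mirror c π x) = π x.rev := by
  rw [mirror_apply, flipBelow_flipBelow]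

theorem mirror_injective {n : ℕ} (c : Fin n) : Function.Injective (mirror c) := by
  intro π ρ h
  exact mul_left_cancel (mul_right_cancel h)

theorem mirror_not_jTop {n : ℕ} {c : Fin n} {π : Equiv.Perm (Fin n)}
    (hZ : ∀ c' < c, ¬ JTop π c') : ∀ c' < c, ¬ JTop (mirror c π) c' := by
  rintro c' hc' ⟨x, a, b, e, f, ⟨h1, h2, h3, h4, h5, h6⟩, h7, h8, hx⟩
  subst hx
  have ha := h8.trans hc'
  have hb := h4.trans ha
  have he := h5.trans hb
  have hf := h6.trans he
  have k1 := flipBelow_anti hc' h8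
  have k2 := flipBelow_anti ha h4
  have k3 := flipBelow_anti hb h5
  have k4 := flipBelow_anti he h6
  have k5 := flipBelow_lt_self hf
  simp only [flipBelow_mirror] at k1 k2 k3 k4 k5
  exact hZ _ k5 ⟨f.rev, e.rev, b.rev, a.rev, x.rev,
    ⟨Fin.rev_lt_rev.2 h2, Fin.rev_lt_rev.2 h1, Fin.rev_lt_rev.2 h7, k3, k2, k1⟩,
    Fin.rev_lt_rev.2 h3, k4, rfl⟩

theorem mirror_jTop {n : ℕ} {c : Fin n} {π : Equiv.Perm (Fin n)} (hF : FTop π c) :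
    JTop (mirror c π) c := by
  obtain ⟨a, b, e, f, y, ⟨h1, h2, h3, h4, h5, h6⟩, h7, h8, hy⟩ := hF
  have hb := h4.trans h8
  have he := h5.trans hb
  have hf := h6.trans he
  refine ⟨y.rev, f.rev, e.rev, b.rev, a.rev, ⟨Fin.rev_lt_rev.2 h3, Fin.rev_lt_rev.2 h2,
    Fin.rev_lt_rev.2 h1, ?_, ?_, ?_⟩, Fin.rev_lt_rev.2 h7, ?_, ?_⟩ <;> rw [mirror_rev]
  · rw [mirror_rev]; exact flipBelow_anti he h6
  · rw [mirror_rev]; exact flipBelow_anti hb h5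
  · rw [mirror_rev]; exact flipBelow_anti h8 h4
  · exact flipBelow_lt_self hf
  · rw [hy, flipBelow_self]

/-! ### Counting -/

open Classical in
theorem card_jTop_eq_card_fTop {n : ℕ} (c : Fin n) :
    (Finset.univ.filter fun π : Equiv.Perm (Fin n) =>
      (Equiv.Perm.sign π = 1 ∧ (∀ c' < c, ¬ JTop π c') ∧ ∀ d, c < d → ¬ FTop π d) ∧
        JTop π c).card =
    (Finset.univ.filter fun π : Equiv.Perm (Fin n) =>
      (Equiv.Perm.sign π = 1 ∧ (∀ c' < c, ¬ JTop π c') ∧ ∀ d, c < d → ¬ FTop π d) ∧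
        FTop π c).card := by
  let J := Finset.univ.filter fun π : Equiv.Perm (Fin n) => (∀ c' < c, ¬ JTop π c') ∧ JTop π c
  let F := Finset.univ.filter fun π : Equiv.Perm (Fin n) => (∀ c' < c, ¬ JTop π c') ∧ FTop π c
  have hJ : ∀ π, π ∈ J ↔ (∀ c' < c, ¬ JTop π c') ∧ JTop π c := fun π => by simp [J]
  have hF : ∀ π, π ∈ F ↔ (∀ c' < c, ¬ JTop π c') ∧ FTop π c := fun π => by simp [F]
  have ex : ∀ π, π ∈ J → ∃ π' p g, Step c π p g ∧ IsShift π π' p ∧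
      Equiv.Perm.sign π' = Equiv.Perm.sign π := by
    intro π hπ
    obtain ⟨h1, h2⟩ := (hJ π).1 hπ
    obtain ⟨p, g, S⟩ := exists_step h1 h2
    obtain ⟨π', H, hs⟩ := exists_shift π p S.mono
    exact ⟨π', p, g, S, H, hs⟩
  choose! φ p g S H hs using ex
  have maps : ∀ π, π ∈ J → φ π ∈ F := fun π hπ =>
    (hF _).2 ⟨(S π hπ).not_jTop (H π hπ), (S π hπ).fTop (H π hπ)⟩
  have inj : Set.InjOn φ J := by
    intro π hπ ρ hρ h
    exact (S π hπ).unique (H π hπ) (S ρ hρ) (h ▸ H ρ hρ)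
  -- The mirror symmetry bounds `F` by `J`, so that the injection `φ` from `J` to `F` is onto.
  have le : F.card ≤ J.card := by
    refine Finset.card_le_card_of_injOn (mirror c) (fun π hπ => ?_) (mirror_injective c).injOn
    obtain ⟨h1, h2⟩ := (hF π).1 hπ
    exact (hJ _).2 ⟨mirror_not_jTop h1, mirror_jTop h2⟩
  have img : J.image φ = F := by
    refine Finset.eq_of_subset_of_card_le (fun ρ hρ => ?_) ?_
    · obtain ⟨π, hπ, rfl⟩ := Finset.mem_image.1 hρ
      exact maps π hπ
    · rw [Finset.card_image_of_injOn inj]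
      exact le
  have fiff : ∀ π, π ∈ J → ((∀ d, c < d → ¬ FTop (φ π) d) ↔ ∀ d, c < d → ¬ FTop π d) :=
    fun π hπ => ⟨fun h d hd hf => h d hd ((S π hπ).shift_fTop (H π hπ) hd hf),
      fun h d hd hf => h d hd ((S π hπ).fTop_of_shift (H π hπ) hd hf)⟩
  refine Finset.card_bij (fun π _ => φ π) ?_ ?_ ?_
  · intro π hπ
    simp only [Finset.mem_filter, Finset.mem_univ, true_and] at hπ ⊢
    obtain ⟨⟨h1, h2, h3⟩, h4⟩ := hπ
    have hπJ := (hJ π).2 ⟨h2, h4⟩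
    obtain ⟨h5, h6⟩ := (hF _).1 (maps π hπJ)
    exact ⟨⟨(hs π hπJ).trans h1, h5, (fiff π hπJ).2 h3⟩, h6⟩
  · intro π hπ ρ hρ h
    simp only [Finset.mem_filter, Finset.mem_univ, true_and] at hπ hρ
    exact inj ((hJ π).2 ⟨hπ.1.2.1, hπ.2⟩) ((hJ ρ).2 ⟨hρ.1.2.1, hρ.2⟩) h
  · intro ρ hρ
    simp only [Finset.mem_filter, Finset.mem_univ, true_and] at hρ
    obtain ⟨⟨h1, h2, h3⟩, h4⟩ := hρ
    have hρF := (hF ρ).2 ⟨h2, h4⟩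
    rw [← img] at hρF
    obtain ⟨π, hπ, rfl⟩ := Finset.mem_image.1 hρF
    obtain ⟨h5, h6⟩ := (hJ π).1 hπ
    refine ⟨π, ?_, rfl⟩
    simp only [Finset.mem_filter, Finset.mem_univ, true_and]
    exact ⟨⟨(hs π hπ).symm.trans h1, h5, (fiff π hπ).1 h3⟩, h6⟩

open Classical in
/-- The even permutations in which every occurrence of `54321` is topped by a value `≥ k` and every
occurrence of `43215` by a value `< k`. -/
noncomputable def level (n k : ℕ) : Finset (Equiv.Perm (Fin n)) :=
  Finset.univ.filter fun π => Equiv.Perm.sign π = 1 ∧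
    (∀ v : Fin n, (v : ℕ) < k → ¬ JTop π v) ∧ ∀ v : Fin n, k ≤ v → ¬ FTop π v

theorem card_level_succ {n k : ℕ} (hk : k < n) : (level n k).card = (level n (k + 1)).card := by
  classical
  let c : Fin n := ⟨k, hk⟩
  let Y := Finset.univ.filter fun π : Equiv.Perm (Fin n) =>
    Equiv.Perm.sign π = 1 ∧ (∀ c' < c, ¬ JTop π c') ∧ ∀ d, c < d → ¬ FTop π d
  have hlt : ∀ v : Fin n, v < c ↔ (v : ℕ) < k := fun v => Iff.rfl
  have hgt : ∀ v : Fin n, c < v ↔ k < (v : ℕ) := fun v => Iff.rfl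
  have hcv : ∀ v : Fin n, (v : ℕ) = k → v = c := fun v h => Fin.ext h
  have e1 : level n k = Y.filter fun π => ¬ FTop π c := by
    ext π
    simp only [level, Y, Finset.mem_filter, Finset.mem_univ, true_and]
    constructor
    · rintro ⟨h1, h2, h3⟩
      exact ⟨⟨h1, h2, fun d hd => h3 d ((hgt d).1 hd).le⟩, h3 c le_rfl⟩
    · rintro ⟨⟨h1, h2, h3⟩, h4⟩
      refine ⟨h1, h2, fun v hv => ?_⟩
      rcases hv.lt_or_eq with h | h
      · exact h3 v h
      · rwa [hcv v h.symm]
  have e2 : level n (k + 1) = Y.filter fun π => ¬ JTop π c := by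
    ext π
    simp only [level, Y, Finset.mem_filter, Finset.mem_univ, true_and]
    constructor
    · rintro ⟨h1, h2, h3⟩
      exact ⟨⟨h1, fun v hv => h2 v (((hlt v).1 hv).trans (Nat.lt_succ_self k)), fun d hd => h3 d hd⟩,
        h2 c (Nat.lt_succ_self k)⟩
    · rintro ⟨⟨h1, h2, h3⟩, h4⟩
      refine ⟨h1, fun v hv => ?_, h3⟩
      rcases (Nat.lt_succ_iff.1 hv).lt_or_eq with h | h
      · exact h2 v h
      · rwa [hcv v h]
  have a1 := Y.card_filter_add_card_filter_not (fun π => FTop π c)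
  have a2 := Y.card_filter_add_card_filter_not (fun π => JTop π c)
  rw [e1, e2]
  have h : (Y.filter fun π => JTop π c).card = (Y.filter fun π => FTop π c).card := by
    simp only [Y, Finset.filter_filter]
    convert card_jTop_eq_card_fTop c
  omega

theorem card_level_zero (n : ℕ) : (level n 0).card = (level n n).card := by
  have : ∀ k, k ≤ n → (level n 0).card = (level n k).card := by
    intro k
    induction k with
    | zero => exact fun _ => rfl
    | succ k ih => exact fun h => (ih (by omega)).trans (card_level_succ h)
  exact this n le_rfl

/-! ### The patterns -/

theorem contains_p54321 {n : ℕ} (π : Equiv.Perm (Fin n)) :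
    Pattern.Contains p54321 π ↔ ∃ v, JTop π v := by
  constructor
  · rintro ⟨f, hf, h⟩
    have k : ∀ i j : Fin 5, p54321 i < p54321 j → π (f i) < π (f j) := fun i j => (h i j).2
    exact ⟨_, f 0, f 1, f 2, f 3, f 4, ⟨hf (by decide), hf (by decide), hf (by decide),
      k _ _ (by decide), k _ _ (by decide), k _ _ (by decide)⟩, hf (by decide),
      k _ _ (by decide), rfl⟩
  · rintro ⟨v, x, a, b, e, f, ⟨h1, h2, h3, h4, h5, h6⟩, h7, h8, rfl⟩
    have hm : StrictMono ![x, a, b, e, f] := by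
      rw [Fin.strictMono_iff_lt_succ]
      intro i
      fin_cases i <;> simp <;> assumption
    refine ⟨_, hm, ?_⟩
    have ha : StrictAnti fun i => π (![x, a, b, e, f] i) := by
      rw [Fin.strictAnti_iff_succ_lt]
      intro i
      fin_cases i <;> simp <;> assumption
    intro i j
    refine (ha.lt_iff_gt).trans ?_
    revert i j
    decide

/-- The reverse-complement of a permutation. -/
def revComp {n : ℕ} (π : Equiv.Perm (Fin n)) : Equiv.Perm (Fin n) :=
  Fin.revPerm * π * Fin.revPerm

theorem revComp_revComp {n : ℕ} (π : Equiv.Perm (Fin n)) : revComp (revComp π) = π := by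
  ext1 x
  simp [revComp]

theorem sign_revComp {n : ℕ} (π : Equiv.Perm (Fin n)) :
    Equiv.Perm.sign (revComp π) = Equiv.Perm.sign π := by
  rw [revComp, map_mul, map_mul, mul_right_comm, Int.units_mul_self, one_mul]

theorem contains_p15432 {n : ℕ} (π : Equiv.Perm (Fin n)) :
    Pattern.Contains p15432 (revComp π) ↔ ∃ v, FTop π v := by
  have hr : ∀ x, revComp π x = (π x.rev).rev := fun x => rfl
  constructor
  · rintro ⟨f, hf, h⟩
    have k : ∀ i j : Fin 5, p15432 i < p15432 j → π (f j).rev < π (f i).rev := by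
      intro i j hij
      have := (h i j).2 hij
      rw [hr, hr] at this
      exact Fin.rev_lt_rev.1 this
    have r : ∀ i j : Fin 5, i < j → (f j).rev < (f i).rev := fun i j hij => Fin.rev_lt_rev.2 (hf hij)
    exact ⟨_, (f 4).rev, (f 3).rev, (f 2).rev, (f 1).rev, (f 0).rev,
      ⟨r _ _ (by decide), r _ _ (by decide), r _ _ (by decide),
      k _ _ (by decide), k _ _ (by decide), k _ _ (by decide)⟩, r _ _ (by decide),
      k _ _ (by decide), rfl⟩
  · rintro ⟨v, a, b, e, f, y, ⟨h1, h2, h3, h4, h5, h6⟩, h7, h8, rfl⟩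
    have hm : StrictMono ![y.rev, f.rev, e.rev, b.rev, a.rev] := by
      rw [Fin.strictMono_iff_lt_succ]
      intro i
      fin_cases i <;> simp <;> assumption
    refine ⟨_, hm, ?_⟩
    have hu : StrictMono ![π f, π e, π b, π a, π y] := by
      rw [Fin.strictMono_iff_lt_succ]
      intro i
      fin_cases i <;> simp <;> assumption
    have hv : ∀ i, π (![y.rev, f.rev, e.rev, b.rev, a.rev] i).rev =
        ![π f, π e, π b, π a, π y] (p15432 i).rev := by
      intro i
      fin_cases i <;> simp [p15432]
    intro i j
    rw [hr, hr, Fin.rev_lt_rev, hv, hv, hu.lt_iff_lt, Fin.rev_lt_rev]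

/-- The patterns 15432, 54321 are pairwise even-Wilf-equivalent. -/
theorem stmt15 :
    (∀ n : ℕ, eav n p15432 = eav n p54321) := by
  classical
  intro n
  have hJ : eav n p54321 = (level n n).card := by
    rw [eav, Nat.card_eq_fintype_card, Fintype.card_subtype]
    congr 1
    ext π
    simp only [level, Finset.mem_filter, Finset.mem_univ, true_and, Pattern.Avoids,
      contains_p54321, not_exists]
    exact and_congr_right fun _ => ⟨fun h => ⟨fun v _ => h v, fun v hv => absurd v.2 hv.not_gt⟩,
      fun h v => h.1 v v.2⟩
  have hF : eav n p15432 = (level n 0).card := by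
    rw [eav, Nat.card_eq_fintype_card, Fintype.card_subtype]
    have hmem : ∀ π : Equiv.Perm (Fin n), π ∈ level n 0 ↔
        Equiv.Perm.sign (revComp π) = 1 ∧ Pattern.Avoids p15432 (revComp π) := by
      intro π
      simp only [level, Finset.mem_filter, Finset.mem_univ, true_and, Pattern.Avoids,
        contains_p15432, not_exists, sign_revComp]
      exact and_congr_right fun _ => ⟨fun h v => h.2 v (Nat.zero_le _),
        fun h => ⟨fun v hv => absurd hv (Nat.not_lt_zero _), fun v _ => h v⟩⟩
    refine Finset.card_nbij' revComp revComp ?_ ?_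
      (fun π _ => revComp_revComp π) (fun π _ => revComp_revComp π)
    · intro π hπ
      rw [Finset.mem_coe, hmem, revComp_revComp]
      simpa using hπ
    · intro π hπ
      rw [Finset.mem_coe, hmem] at hπ
      simpa using hπ
  rw [hJ, hF, card_level_zero]
end

section
/- The patterns 12354 and 12543 are even-Wilf-equivalent: for all n ≥ 0, eav_n(12354) = eav_n(12543). -/
/-- The pattern `12354` (one-line notation, 1-indexed). -/
def p12354 : Equiv.Perm (Fin 5) :=
  ⟨![0,1,2,4,3], ![0,1,2,4,3], by decide, by decide⟩

/-- The pattern `12543` (one-line notation, 1-indexed). -/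
def p12543 : Equiv.Perm (Fin 5) :=
  ⟨![0,1,4,3,2], ![0,1,4,3,2], by decide, by decide⟩

namespace EvenWilf
variable {n m : ℕ}

/-! ### Patterns inside a region -/

/-- No occurrence of `321` in `f` has its lower left corner in the region `D` and its smallest
letter in `S`. -/
def NoDec (D : Fin n → Fin m → Prop) (S : Fin m → Prop) (f : Fin n → Fin m) : Prop :=
  ∀ x y z, x < y → y < z → f z < f y → f y < f x → S (f z) → ¬ D x (f z)

/-- No occurrence of `132` in `f` has its lower left corner, which is the cell of its first letter,
in the region `D` and its smallest letter in `S`. -/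
def NoUp (D : Fin n → Fin m → Prop) (S : Fin m → Prop) (f : Fin n → Fin m) : Prop :=
  ∀ x y z, x < y → y < z → f x < f z → f z < f y → S (f x) → ¬ D x (f x)

/-- The region `D` of cells `(position, value)` is closed under going right and up. -/
def UpClosed (D : Fin n → Fin m → Prop) : Prop :=
  ∀ i i' v v', i ≤ i' → v ≤ v' → D i v → D i' v'

/-- The positions `i < j < k` carry the canonical `321` of `f` with smallest letter `a` and corner in
`D`: `i` is as far right as possible, then `f j` as large as possible. The last three fields encode
this choice through the letters `> a` strictly between `i` and `k`. -/
structure Dec (D : Fin n → Fin m → Prop) (a : Fin m) (f : Fin n → Fin m) (i j k : Fin n) :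
    Prop where
  ij : i < j
  jk : j < k
  fk : f k = a
  fj : a < f j
  fi : f j < f i
  mem : D i a
  left : ∀ x, i < x → x < j → a < f x → f x < f j
  right : ∀ x, j < x → x < k → a < f x → f i < f x
  incr : ∀ x y, i < x → x < y → y < k → a < f x → a < f y → f x < f y

/-- The positions `i < j < k` carry the canonical `132` of `g` with smallest letter `a` and corner in
`D`: `k` is as far left as possible, then `g j` as small as possible. The last three fields encode
this choice through the letters `> a` strictly between `i` and `k`. -/
structure Up (D : Fin n → Fin m → Prop) (a : Fin m) (g : Fin n → Fin m) (i j k : Fin n) :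
    Prop where
  ij : i < j
  jk : j < k
  gi : g i = a
  gk : a < g k
  gj : g k < g j
  mem : D i a
  left : ∀ x, i < x → x < j → a < g x → g x < g k
  right : ∀ x, j < x → x < k → a < g x → g j < g x
  incr : ∀ x y, i < x → x < y → y < k → a < g x → a < g y → g x < g y

/-- `g` arises from `f` by replacing the letters `c, b, a` at positions `i, j, k` by `a, c, b`. -/
structure Rot (f g : Fin n → Fin m) (i j k : Fin n) : Prop where
  gi : g i = f k
  gj : g j = f i
  gk : g k = f j
  rest : ∀ x, x ≠ i → x ≠ j → x ≠ k → g x = f x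

variable {D : Fin n → Fin m → Prop} {a : Fin m} {f g : Fin n → Fin m} {i j k : Fin n}

/-! ### Uniqueness and existence of the canonical occurrences -/

theorem Dec.unique {i' j' k' : Fin n} (hf : f.Injective) (h : Dec D a f i j k)
    (h' : Dec D a f i' j' k') : i = i' ∧ j = j' ∧ k = k' := by
  have hk : k = k' := hf (h.fk.trans h'.fk.symm)
  subst hk
  have hi : i = i' := by
    rcases lt_trichotomy i i' with c | c | c
    · have := h.incr i' j' c h'.ij h'.jk (h'.fj.trans h'.fi) h'.fj
      exact absurd h'.fi this.asymm
    · exact c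
    · have := h'.incr i j c h.ij h.jk (h.fj.trans h.fi) h.fj
      exact absurd h.fi this.asymm
  subst hi
  refine ⟨rfl, ?_, rfl⟩
  rcases lt_trichotomy j j' with c | c | c
  · exact absurd h'.fi (h.right j' c h'.jk h'.fj).asymm
  · exact c
  · exact absurd h.fi (h'.right j c h.jk h.fj).asymm

theorem Up.unique {i' j' k' : Fin n} (hg : g.Injective) (h : Up D a g i j k)
    (h' : Up D a g i' j' k') : i = i' ∧ j = j' ∧ k = k' := by
  have hi : i = i' := hg (h.gi.trans h'.gi.symm)
  subst hi
  have hk : k = k' := by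
    rcases lt_trichotomy k k' with c | c | c
    · have := h'.incr j k h.ij h.jk c (h.gk.trans h.gj) h.gk
      exact absurd h.gj this.asymm
    · exact c
    · have := h.incr j' k' h'.ij h'.jk c (h'.gk.trans h'.gj) h'.gk
      exact absurd h'.gj this.asymm
  subst hk
  refine ⟨rfl, ?_, rfl⟩
  rcases lt_trichotomy j j' with c | c | c
  · exact absurd h.gj (h'.left j h.ij c (h.gk.trans h.gj)).asymm
  · exact c
  · exact absurd h'.gj (h.left j' h'.ij c (h'.gk.trans h'.gj)).asymm

theorem Dec.exists (hD : UpClosed D) (hf : f.Injective) {x y z : Fin n} (hxy : x < y) (hyz : y < z)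
    (hz : f z < f y) (hy : f y < f x) (hx : D x (f z)) : ∃ i j, Dec D (f z) f i j z := by
  classical
  obtain ⟨i, hi, hmax⟩ := Finset.exists_max_image
    (Finset.univ.filter fun i => D i (f z) ∧ ∃ j, i < j ∧ j < z ∧ f z < f j ∧ f j < f i) id
    ⟨x, by simpa using ⟨hx, y, hxy, hyz, hz, hy⟩⟩
  simp only [Finset.mem_filter, Finset.mem_univ, true_and, id] at hi hmax
  obtain ⟨hDi, j₀, h₀⟩ := hi
  obtain ⟨j, hj, hjmax⟩ := Finset.exists_max_image
    (Finset.univ.filter fun j => i < j ∧ j < z ∧ f z < f j ∧ f j < f i) f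
    ⟨j₀, by simpa using h₀⟩
  simp only [Finset.mem_filter, Finset.mem_univ, true_and] at hj hjmax
  obtain ⟨h1, h2, h3, h4⟩ := hj
  have incr : ∀ x y, i < x → x < y → y < z → f z < f x → f z < f y → f x < f y := by
    intro x y hix hxy hyz hx hy
    by_contra hc
    have hlt : f y < f x := lt_of_le_of_ne (not_lt.1 hc) fun e => hxy.ne (hf e).symm
    exact absurd (hmax x ⟨hD _ _ _ _ hix.le le_rfl hDi, y, hxy, hyz, hy, hlt⟩) (not_le.2 hix)
  refine ⟨i, j, h1, h2, rfl, h3, h4, hDi, fun x hix hxj hx => incr x j hix hxj h2 hx h3, ?_, incr⟩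
  intro x hjx hxz hx
  by_contra hc
  have hlt : f x < f i := lt_of_le_of_ne (not_lt.1 hc) fun e => (h1.trans hjx).ne (hf e).symm
  exact absurd (hjmax x ⟨h1.trans hjx, hxz, hx, hlt⟩) (not_le.2 (incr j x h1 hjx hxz h3 hx))

theorem Up.exists (hg : g.Injective) {x y z : Fin n} (hxy : x < y) (hyz : y < z)
    (hz : g x < g z) (hy : g z < g y) (hx : D x (g x)) : ∃ j k, Up D (g x) g x j k := by
  classical
  obtain ⟨k, hk, hmin⟩ := Finset.exists_min_image
    (Finset.univ.filter fun k => ∃ j, x < j ∧ j < k ∧ g x < g k ∧ g k < g j) id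
    ⟨z, by simpa using ⟨y, hxy, hyz, hz, hy⟩⟩
  simp only [Finset.mem_filter, Finset.mem_univ, true_and, id] at hk hmin
  obtain ⟨j₀, h₀⟩ := hk
  obtain ⟨j, hj, hjmin⟩ := Finset.exists_min_image
    (Finset.univ.filter fun j => x < j ∧ j < k ∧ g x < g k ∧ g k < g j) g
    ⟨j₀, by simpa using h₀⟩
  simp only [Finset.mem_filter, Finset.mem_univ, true_and] at hj hjmin
  obtain ⟨h1, h2, h3, h4⟩ := hj
  have incr : ∀ u v, x < u → u < v → v < k → g x < g u → g x < g v → g u < g v := by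
    intro u v hxu huv hvk hu hv
    by_contra hc
    have hlt : g v < g u := lt_of_le_of_ne (not_lt.1 hc) fun e => huv.ne (hg e).symm
    exact absurd (hmin v ⟨u, hxu, huv, hv, hlt⟩) (not_le.2 hvk)
  refine ⟨j, k, h1, h2, rfl, h3, h4, hx, ?_,
    fun u hju huk hu => incr j u h1 hju huk (h3.trans h4) hu, incr⟩
  intro u hxu huj hu
  by_contra hc
  have hlt : g k < g u := lt_of_le_of_ne (not_lt.1 hc) fun e => (huj.trans h2).ne (hg e).symm
  exact absurd (hjmin u ⟨hxu, huj.trans h2, h3, hlt⟩)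
    (not_le.2 (incr u j hxu huj h2 hu (h3.trans h4)))

/-! ### The replacement preserves the forbidden patterns -/

theorem Dec.up (h : Dec D a f i j k) (r : Rot f g i j k) : Up D a g i j k := by
  have := h.1; have := h.2
  have hgi := r.gi; have hgj := r.gj; have hgk := r.gk
  have e : ∀ x, i < x → x < k → x ≠ j → g x = f x := fun x h1 h2 h3 => r.rest x h1.ne' h3 h2.ne
  obtain ⟨_, _, _, _, _, _, hl, hr, hinc⟩ := h
  constructor <;> grind

theorem Up.dec (h : Up D a g i j k) (r : Rot f g i j k) : Dec D a f i j k := by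
  have := h.1; have := h.2
  have hgi := r.gi; have hgj := r.gj; have hgk := r.gk
  have e : ∀ x, i < x → x < k → x ≠ j → g x = f x := fun x h1 h2 h3 => r.rest x h1.ne' h3 h2.ne
  obtain ⟨_, _, _, _, _, _, hl, hr, hinc⟩ := h
  constructor <;> grind


/-- Right of `k` no letter lies strictly between `a` and `f j`, since it would complete a `321`
with smallest letter `> a`. -/
theorem Dec.gap (hD : UpClosed D) (h : Dec D a f i j k) (hP : NoDec D (a < ·) f) {y : Fin n}
    (hky : k < y) (hay : a < f y) : f j ≤ f y := by
  by_contra hc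
  exact hP i j y h.ij (h.jk.trans hky) (not_le.1 hc) h.fi hay (hD _ _ _ _ le_rfl hay.le h.mem)

/-- A `132` with first letter `f s < a` in `D` is excluded exactly when the letters `> f s` right of
`s` increase. As `f` satisfies this, `s` cannot precede the descent at `j < k`; if `s` lies between
`j` and `k`, the only change to its right is that `a` at `k` becomes `f j`, which keeps the order by
`Dec.gap`. -/
theorem Dec.noUp (hD : UpClosed D) (hf : f.Injective) (h : Dec D a f i j k) (r : Rot f g i j k)
    (hP : NoDec D (a < ·) f) (hQ : NoUp D (· < a) f) : NoUp D (· < a) g := by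
  intro s x y hsx hxy hsy hyx hsa hDs
  have gap := fun hk => h.gap hD hP (y := y) hk
  obtain ⟨h1, h2, h3, h4, h5, h6, hl, hr, hinc⟩ := h
  obtain ⟨hgi, hgj, hgk, e⟩ := r
  have hs : g s = f s := e s (by grind) (by grind) (by grind)
  rw [hs] at hsy hsa hDs
  replace hsa : f s < a := hsa
  have hQ' : ∀ x y, s < x → x < y → f s < f y → f x ≤ f y := by
    intro x y h1 h2 h3
    by_contra hc
    exact hQ s x y h1 h2 h3 (not_le.1 hc) hsa hDs
  clear hinc hl hr hQ hP hD hDs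
  have hsj : j ≤ s := by
    by_contra hc
    have := hQ' j k (not_le.1 hc) h2
    grind
  have := hQ' x y hsx hxy
  have := hQ' x k hsx
  have := hQ' k y
  have := e x
  have := e y
  have : f y = a → y = k := fun h => hf (h.trans h3.symm)
  clear e hQ'
  grind

/-- As for `Dec.noUp`: the relevant `s` lies at or right of `j`, and to its right at most the letter at
`k` changes, now from `g k` down to `a`. -/
theorem Up.noUp (h : Up D a g i j k)
    (r : Rot f g i j k) (hQ : NoUp D (· < a) g) : NoUp D (· < a) f := by
  intro s x y hsx hxy hsy hyx hsa hDs
  obtain ⟨h1, h2, h3, h4, h5, h6, hl, hr, hinc⟩ := h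
  obtain ⟨hgi, hgj, hgk, e⟩ := r
  have hs : g s = f s := e s (by grind) (by grind) (by grind)
  rw [← hs] at hsy hsa hDs
  replace hsa : g s < a := hsa
  have hQ' : ∀ x y, s < x → x < y → g s < g y → g x ≤ g y := by
    intro x y h1 h2 h3
    by_contra hc
    exact hQ s x y h1 h2 h3 (not_le.1 hc) hsa hDs
  have hsj : j ≤ s := by
    by_contra hc
    have := hQ' j k (not_le.1 hc) h2
    grind
  have := hQ' x y hsx hxy
  have := hQ' x k hsx
  have := hQ' k y
  have := e x
  have := e y
  have := hr x
  clear e hQ' hinc hl hr hQ hDs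
  grind



/-- Position in `f` of the letter that `Rot f g i j k` puts at position `x ≠ i` of `g`; at `i` the
value is not used. -/
def oldPos (i j k x : Fin n) : Fin n := if x = j then i else if x = k then j else x

/-- Position in `g` of the letter at position `x ≠ k` of `f`; at `k` the value is not used. -/
def newPos (i j k x : Fin n) : Fin n := if x = i then j else if x = j then k else x

theorem Rot.apply_oldPos (r : Rot f g i j k) {x : Fin n} (hx : x ≠ i) : f (oldPos i j k x) = g x := by
  obtain ⟨hgi, hgj, hgk, e⟩ := r
  have := e x
  unfold oldPos
  split_ifs <;> grind

theorem Rot.apply_newPos (r : Rot f g i j k) {x : Fin n} (hx : x ≠ k) : g (newPos i j k x) = f x := by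
  obtain ⟨hgi, hgj, hgk, e⟩ := r
  have := e x
  unfold newPos
  split_ifs <;> grind

/-- An inversion of `g` among letters `> a` comes from an inversion of `f`, unless its smaller letter
is `b = g k`, which moved right past the larger one. -/
theorem Dec.inv (h : Dec D a f i j k) (r : Rot f g i j k) {p q : Fin n} (hpq : p < q)
    (hlt : g q < g p) (ha : a < g q) :
    oldPos i j k p < oldPos i j k q ∨ q = k ∧ j < p ∧ f i < g p := by
  obtain ⟨h1, h2, h3, h4, h5, h6, hl, hr, hinc⟩ := h
  obtain ⟨hgi, hgj, hgk, e⟩ := r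
  have := e p
  have := hl p
  have := hr p
  clear hinc hr hl e
  unfold oldPos
  split_ifs <;> grind

/-- An inversion of `f` among letters `> a` comes from an inversion of `g`, unless its larger letter
is `c = f i`, which moved left past the smaller one. -/
theorem Up.inv (h : Up D a g i j k) (r : Rot f g i j k) {p q : Fin n} (hpq : p < q)
    (hlt : f q < f p) (ha : a < f q) :
    newPos i j k p < newPos i j k q ∨ p = i ∧ q < j ∧ f q < g k := by
  obtain ⟨h1, h2, h3, h4, h5, h6, hl, hr, hinc⟩ := h
  obtain ⟨hgi, hgj, hgk, e⟩ := r
  have := e q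
  have := hl q
  have := hr q
  clear hinc hr hl e
  unfold newPos
  split_ifs <;> grind

theorem Dec.noDec (hD : UpClosed D) (h : Dec D a f i j k) (r : Rot f g i j k)
    (hP : NoDec D (a < ·) f) : NoDec D (a < ·) g := by
  intro x y z hxy hyz hzy hyx haz hd
  replace haz : a < g z := haz
  have hne : ∀ w, a < g w → w ≠ i := by
    rintro w hw rfl
    exact hw.ne (r.gi.trans h.fk).symm
  have hx := hne x (haz.trans (hzy.trans hyx))
  have hy := hne y (haz.trans hzy)
  have hz := hne z haz
  rcases h.inv r hxy hyx (haz.trans hzy) with h1 | ⟨rfl, hjx, hfx⟩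
  · rcases h.inv r hyz hzy haz with h2 | ⟨rfl, hjy, hfy⟩
    · refine hP _ _ _ h1 h2 ?_ ?_ ?_ ?_
      · rwa [r.apply_oldPos hy, r.apply_oldPos hz]
      · rwa [r.apply_oldPos hx, r.apply_oldPos hy]
      · show a < _
        rwa [r.apply_oldPos hz]
      · rw [r.apply_oldPos hz]
        by_cases c : x = j ∨ x = k
        · refine hD _ _ _ _ ?_ haz.le h.mem
          have := h.ij
          unfold oldPos
          split_ifs <;> grind
        · have : oldPos i j k x = x := by
            unfold oldPos
            split_ifs <;> grind
          rwa [this]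
    · -- the inversion `(y, z)` is new, so `z = k`: `f x, f i, f j` is a `321` if `x < i`,
      -- and otherwise `x < y` is a descent between `i` and `k`
      have gy : g y = f y := r.rest y hy hjy.ne' hyz.ne
      rcases lt_or_gt_of_ne hx with hxi | hxi
      · have gx : g x = f x := r.rest x hx (hxi.trans h.ij).ne (hxy.trans hyz).ne
        rw [r.gk] at hd
        refine hP x i j hxi h.ij h.fi ?_ h.fj hd
        rw [← gx]
        exact hfy.trans hyx
      · have hxj : x ≠ j := by
          rintro rfl
          rw [r.gj] at hyx
          exact hfy.asymm hyx
        have gx : g x = f x := r.rest x hx hxj (hxy.trans hyz).ne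
        have ay := haz.trans hzy
        have ax := ay.trans hyx
        rw [gx] at ax hyx
        rw [gy] at ay hyx
        exact hyx.asymm (h.incr x y hxi hxy hyz ax ay)
  · -- the inversion `(x, y)` is new, so `y = k`, and `z` contradicts the gap
    have gz : g z = f z := r.rest z hz (h.jk.trans hyz).ne' hyz.ne'
    rw [r.gk, gz] at hzy
    exact absurd hzy (not_lt.2 (h.gap hD hP hyz (gz ▸ haz)))

theorem Up.noDec (hD : UpClosed D) (h : Up D a g i j k) (r : Rot f g i j k)
    (hP : NoDec D (a < ·) g) : NoDec D (a < ·) f := by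
  intro x y z hxy hyz hzy hyx haz hd
  replace haz : a < f z := haz
  have hne : ∀ w, a < f w → w ≠ k := by
    rintro w hw rfl
    exact hw.ne (r.gi.symm.trans h.gi).symm
  have hx := hne x (haz.trans (hzy.trans hyx))
  have hy := hne y (haz.trans hzy)
  have hz := hne z haz
  rcases h.inv r hxy hyx (haz.trans hzy) with h1 | ⟨rfl, hyj, hfy⟩
  · rcases h.inv r hyz hzy haz with h2 | ⟨rfl, hzj, hfz⟩
    · refine hP _ _ _ h1 h2 ?_ ?_ ?_ ?_
      · rwa [r.apply_newPos hy, r.apply_newPos hz]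
      · rwa [r.apply_newPos hx, r.apply_newPos hy]
      · show a < _
        rwa [r.apply_newPos hz]
      · rw [r.apply_newPos hz]
        refine hD _ _ _ _ ?_ le_rfl hd
        have := h.ij
        have := h.jk
        unfold newPos
        split_ifs <;> grind
    · -- the inversion `(y, z)` is new, so `y = i`, and `g x, g j, g k` is a `321`
      have gx : g x = f x := r.rest x hxy.ne (hxy.trans h.ij).ne hx
      refine hP x j k (hxy.trans h.ij) h.jk h.gj ?_ h.gk (hD _ _ _ _ le_rfl hfz.le hd)
      rwa [gx, r.gj]
  · -- the inversion `(x, y)` is new, so `x = i`: `y < z` is a descent between `i` and `k`,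
    -- or `z > k` and `g j, g k, g z` is a `321`
    have gy : g y = f y := r.rest y hxy.ne' hyj.ne hy
    have hzj : z ≠ j := by
      rintro rfl
      rw [← r.gk] at hzy
      exact hfy.asymm hzy
    have gz : g z = f z := r.rest z (hxy.trans hyz).ne' hzj hz
    rcases lt_or_gt_of_ne hz with hzk | hzk
    · have ay := haz.trans hzy
      rw [← gz] at haz hzy
      rw [← gy] at ay hzy
      exact hzy.asymm (h.incr y z hxy hyz hzk ay haz)
    · refine hP j k z h.jk hzk ?_ h.gj ?_ (hD _ _ _ _ h.ij.le gz.ge hd)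
      · rw [gz]
        exact hzy.trans hfy
      · show a < _
        rwa [gz]


/-! ### The shape of a permutation -/

/-- The cells having an occurrence of `12` strictly to their left and strictly below. -/
def shape (f : Fin n → Fin m) (i : Fin n) (v : Fin m) : Prop :=
  ∃ p q, p < q ∧ q < i ∧ f p < f q ∧ f q < v

theorem shape_upClosed (f : Fin n → Fin m) : UpClosed (shape f) := by
  rintro i i' v v' hi hv ⟨p, q, h1, h2, h3, h4⟩
  exact ⟨p, q, h1, h2.trans_le hi, h3, h4.trans_le hv⟩

/-- Changing letters that lie in the shape, so that they stay in it, does not change the shape: every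
cell of the shape is witnessed by a `12` whose two letters lie outside the shape. -/
theorem shape_eq (h : ∀ x, g x = f x ∨ shape f x (f x) ∧ shape f x (g x)) : shape g = shape f := by
  have up := shape_upClosed f
  have up' := shape_upClosed g
  funext i v
  refine propext ⟨?_, ?_⟩
  · rintro ⟨p, q, h1, h2, h3, h4⟩
    rcases h q with hq | ⟨-, hq⟩
    · rcases h p with hp | ⟨-, hp⟩
      · exact ⟨p, q, h1, h2, hp ▸ hq ▸ h3, hq ▸ h4⟩
      · exact up _ _ _ _ (h1.trans h2).le (h3.trans h4).le hp
    · exact up _ _ _ _ h2.le h4.le hq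
  · induction i using WellFoundedLT.induction generalizing v with | ind i ih => ?_
    rintro ⟨p, q, h1, h2, h3, h4⟩
    -- a letter of the `12` lying in the shape has a witness further left
    rcases h q with hq | ⟨hq, -⟩
    · rcases h p with hp | ⟨hp, -⟩
      · exact ⟨p, q, h1, h2, by rwa [hp, hq], by rwa [hq]⟩
      · exact up' _ _ _ _ (h1.trans h2).le (h3.trans h4).le (ih p (h1.trans h2) _ hp)
    · exact up' _ _ _ _ h2.le h4.le (ih q h2 _ hq)

theorem Rot.shape_eq (r : Rot f g i j k) (hij : i < j) (hjk : j < k) {a : Fin m}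
    (hi : a ≤ f i) (hj : a ≤ f j) (hk : a ≤ f k) (hD : shape f i a) : shape g = shape f := by
  have up : ∀ x v, i ≤ x → a ≤ v → shape f x v :=
    fun x v hx hv => shape_upClosed f _ _ _ _ hx hv hD
  refine EvenWilf.shape_eq fun x => ?_
  by_cases xi : x = i
  · subst xi
    exact Or.inr ⟨up _ _ le_rfl hi, up _ _ le_rfl (r.gi ▸ hk)⟩
  by_cases xj : x = j
  · subst xj
    exact Or.inr ⟨up _ _ hij.le hj, up _ _ hij.le (r.gj ▸ hi)⟩
  by_cases xk : x = k
  · subst xk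
    exact Or.inr ⟨up _ _ (hij.trans hjk).le hk, up _ _ (hij.trans hjk).le (r.gk ▸ hj)⟩
  exact Or.inl (r.rest x xi xj xk)

theorem Rot.symm_shape_eq (r : Rot f g i j k) (hij : i < j) (hjk : j < k) {a : Fin m}
    (hi : a ≤ g i) (hj : a ≤ g j) (hk : a ≤ g k) (hD : shape g i a) : shape f = shape g := by
  have up : ∀ x v, i ≤ x → a ≤ v → shape g x v :=
    fun x v hx hv => shape_upClosed g _ _ _ _ hx hv hD
  refine EvenWilf.shape_eq fun x => ?_
  by_cases xi : x = i
  · subst xi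
    exact Or.inr ⟨up _ _ le_rfl hi, up _ _ le_rfl (r.gj ▸ hj)⟩
  by_cases xj : x = j
  · subst xj
    exact Or.inr ⟨up _ _ hij.le hj, up _ _ hij.le (r.gk ▸ hk)⟩
  by_cases xk : x = k
  · subst xk
    exact Or.inr ⟨up _ _ (hij.trans hjk).le hk, up _ _ (hij.trans hjk).le (r.gi ▸ hi)⟩
  exact Or.inl (r.rest x xi xj xk).symm

/-! ### The bijection and the interpolating families -/

/-- The 3-cycle `i ↦ k`, `k ↦ j`, `j ↦ i`. -/
def rot (i j k : Fin n) : Equiv.Perm (Fin n) := Equiv.swap i j * Equiv.swap i k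

theorem rot_spec (hij : i < j) (hjk : j < k) (π : Equiv.Perm (Fin n)) :
    Rot π (π * rot i j k : Equiv.Perm (Fin n)) i j k := by
  have hik := hij.trans hjk
  constructor
  · simp [rot, Equiv.swap_apply_of_ne_of_ne hik.ne' hjk.ne']
  · simp [rot, Equiv.swap_apply_of_ne_of_ne hij.ne' hjk.ne]
  · simp [rot]
  · intro x h1 h2 h3
    simp [rot, Equiv.swap_apply_of_ne_of_ne h1 h2, Equiv.swap_apply_of_ne_of_ne h1 h3]

theorem sign_rot (hij : i < j) (hjk : j < k) : Equiv.Perm.sign (rot i j k) = 1 := by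
  simp [rot, Equiv.Perm.sign_mul, Equiv.Perm.sign_swap hij.ne, Equiv.Perm.sign_swap (hij.trans hjk).ne]

open scoped Classical in
/-- Even permutations avoiding, in their shape, `321` with smallest letter `≥ t` and `132` with
smallest letter `< t`. Letters are 0-indexed. -/
noncomputable def mixed (n t : ℕ) : Finset (Equiv.Perm (Fin n)) :=
  Finset.univ.filter fun π => Equiv.Perm.sign π = 1 ∧
    NoDec (shape π) (fun v => t ≤ v.val) π ∧ NoUp (shape π) (fun v => v.val < t) π

open scoped Classical in
/-- As `mixed`, but with no condition on occurrences whose smallest letter is `a` itself. -/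
noncomputable def ambient (a : Fin n) : Finset (Equiv.Perm (Fin n)) :=
  Finset.univ.filter fun π => Equiv.Perm.sign π = 1 ∧
    NoDec (shape π) (a < ·) π ∧ NoUp (shape π) (· < a) π

open scoped Classical in
theorem mixed_eq (a : Fin n) :
    mixed n a = (ambient a).filter fun π : Equiv.Perm (Fin n) => ¬ ∃ i j k, Dec (shape π) a π i j k := by
  ext π
  simp only [mixed, ambient, Finset.mem_filter, Finset.mem_univ, true_and, and_assoc]
  refine and_congr_right fun _ => ⟨fun ⟨hP, hQ⟩ => ⟨fun x y z h1 h2 h3 h4 h5 =>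
    hP x y z h1 h2 h3 h4 h5.le, hQ, ?_⟩, fun ⟨hP, hQ, hn⟩ => ⟨?_, hQ⟩⟩
  · rintro ⟨i, j, k, h⟩
    refine hP i j k h.ij h.jk (h.fk ▸ h.fj) h.fi (h.fk ▸ le_rfl) (h.fk ▸ h.mem)
  · intro x y z h1 h2 h3 h4 h5 hd
    rcases lt_or_eq_of_le (show a ≤ π z from h5) with h | h
    · exact hP x y z h1 h2 h3 h4 h hd
    · subst h
      obtain ⟨i, j, h⟩ := Dec.exists (shape_upClosed _) π.injective h1 h2 h3 h4 hd
      exact hn ⟨i, j, z, h⟩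

open scoped Classical in
theorem mixed_succ_eq (a : Fin n) :
    mixed n (a + 1) = (ambient a).filter fun π : Equiv.Perm (Fin n) => ¬ ∃ i j k, Up (shape π) a π i j k := by
  ext π
  simp only [mixed, ambient, Finset.mem_filter, Finset.mem_univ, true_and, and_assoc]
  refine and_congr_right fun _ => ⟨fun ⟨hP, hQ⟩ => ⟨hP, fun x y z h1 h2 h3 h4 h5 =>
    hQ x y z h1 h2 h3 h4 (Nat.lt_succ_of_lt h5), ?_⟩, fun ⟨hP, hQ, hn⟩ => ⟨hP, ?_⟩⟩
  · rintro ⟨i, j, k, h⟩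
    exact hQ i j k h.ij h.jk (h.gi ▸ h.gk) h.gj (h.gi ▸ Nat.lt_succ_self _) (h.gi.symm ▸ h.mem)
  · intro x y z h1 h2 h3 h4 h5 hd
    rcases lt_or_eq_of_le (show π x ≤ a from Nat.le_of_lt_succ h5) with h | h
    · exact hQ x y z h1 h2 h3 h4 h hd
    · subst h
      obtain ⟨j, k, h⟩ := Up.exists π.injective h1 h2 h3 h4 hd
      exact hn ⟨x, j, k, h⟩

theorem Dec.step {a : Fin n} {π σ : Equiv.Perm (Fin n)} (h : Dec (shape π) a π i j k)
    (r : Rot π σ i j k) (hP : NoDec (shape π) (a < ·) π) (hQ : NoUp (shape π) (· < a) π) :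
    Up (shape σ) a σ i j k ∧ NoDec (shape σ) (a < ·) σ ∧ NoUp (shape σ) (· < a) σ := by
  have hD := shape_upClosed π
  rw [r.shape_eq h.ij h.jk (h.fj.trans h.fi).le h.fj.le h.fk.ge h.mem]
  exact ⟨h.up r, h.noDec hD r hP, h.noUp hD π.injective r hP hQ⟩

theorem Up.step {a : Fin n} {π σ : Equiv.Perm (Fin n)} (h : Up (shape σ) a σ i j k)
    (r : Rot π σ i j k) (hP : NoDec (shape σ) (a < ·) σ) (hQ : NoUp (shape σ) (· < a) σ) :
    Dec (shape π) a π i j k ∧ NoDec (shape π) (a < ·) π ∧ NoUp (shape π) (· < a) π := by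
  have hD := shape_upClosed σ
  rw [r.symm_shape_eq h.ij h.jk h.gi.ge (h.gk.trans h.gj).le h.gk.le h.mem]
  exact ⟨h.dec r, h.noDec hD r hP, h.noUp r hQ⟩

open scoped Classical in
/-- The replacement matches the members of `ambient a` having a `321` with smallest letter `a` in
their shape with those having such a `132`. -/
theorem card_dec_eq_card_up (a : Fin n) :
    ((ambient a).filter fun π : Equiv.Perm (Fin n) => ∃ i j k, Dec (shape π) a π i j k).card =
      ((ambient a).filter fun π : Equiv.Perm (Fin n) => ∃ i j k, Up (shape π) a π i j k).card := by
  have key : ∀ π ∈ (ambient a).filter fun π : Equiv.Perm (Fin n) => ∃ i j k, Dec (shape π) a π i j k,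
      ∃ σ ∈ ambient a, ∃ i j k, Dec (shape π) a π i j k ∧ Up (shape σ) a σ i j k ∧
        σ = π * rot i j k := by
    simp only [ambient, Finset.mem_filter, Finset.mem_univ, true_and]
    rintro π ⟨⟨hs, hP, hQ⟩, i, j, k, h⟩
    obtain ⟨h1, h2, h3⟩ := h.step (rot_spec h.ij h.jk π) hP hQ
    exact ⟨_, ⟨by rw [Equiv.Perm.sign_mul, hs, sign_rot h.ij h.jk, one_mul], h2, h3⟩,
      i, j, k, h, h1, rfl⟩
  choose F hF i j k hd hu he using key
  refine Finset.card_bij F (fun π hπ => Finset.mem_filter.2 ⟨hF π hπ, _, _, _, hu π hπ⟩) ?_ ?_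
  · intro π hπ ρ hρ e
    have h1 := hu π hπ
    rw [e] at h1
    obtain ⟨e1, e2, e3⟩ := h1.unique (F ρ hρ).injective (hu ρ hρ)
    rw [he π hπ, he ρ hρ, e1, e2, e3] at e
    exact mul_right_cancel e
  · simp only [Finset.mem_filter]
    rintro σ ⟨hσ, x, y, z, h⟩
    simp only [ambient, Finset.mem_filter, Finset.mem_univ, true_and] at hσ
    obtain ⟨hs, hP, hQ⟩ := hσ
    have r := rot_spec h.ij h.jk (σ * (rot x y z)⁻¹)
    rw [inv_mul_cancel_right] at r
    obtain ⟨h1, h2, h3⟩ := h.step r hP hQ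
    have hm : σ * (rot x y z)⁻¹ ∈ (ambient a).filter fun π : Equiv.Perm (Fin n) => ∃ i j k, Dec (shape π) a π i j k := by
      simp only [ambient, Finset.mem_filter, Finset.mem_univ, true_and]
      refine ⟨⟨?_, h2, h3⟩, x, y, z, h1⟩
      rw [Equiv.Perm.sign_mul, Equiv.Perm.sign_inv, hs, sign_rot h.ij h.jk, one_mul]
    refine ⟨_, by simpa only [Finset.mem_filter] using hm, ?_⟩
    obtain ⟨e1, e2, e3⟩ := (hd _ hm).unique (Equiv.injective _) h1
    rw [he, e1, e2, e3, inv_mul_cancel_right]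

theorem card_mixed_succ (a : Fin n) : (mixed n a).card = (mixed n (a + 1)).card := by
  classical
  have h1 := Finset.card_filter_add_card_filter_not (s := ambient a)
    fun π : Equiv.Perm (Fin n) => ∃ i j k, Dec (shape π) a π i j k
  have h2 := Finset.card_filter_add_card_filter_not (s := ambient a)
    fun π : Equiv.Perm (Fin n) => ∃ i j k, Up (shape π) a π i j k
  have h3 := card_dec_eq_card_up a
  rw [mixed_eq, mixed_succ_eq]
  omega

theorem card_mixed (n t : ℕ) (ht : t ≤ n) : (mixed n t).card = (mixed n 0).card := by
  induction t with
  | zero => rfl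
  | succ t ih => rw [← ih (by omega), ← card_mixed_succ ⟨t, ht⟩]

/-! ### Translation of the patterns -/

theorem contains_iff {σ : Equiv.Perm (Fin 5)} {π : Equiv.Perm (Fin n)} :
    Pattern.Contains σ π ↔ ∃ p q x y z, p < q ∧ q < x ∧ x < y ∧ y < z ∧
      ∀ a b : Fin 5, π (![p, q, x, y, z] a) < π (![p, q, x, y, z] b) ↔ σ a < σ b := by
  constructor
  · rintro ⟨f, hf, h⟩
    refine ⟨f 0, f 1, f 2, f 3, f 4, hf (by decide), hf (by decide), hf (by decide),
      hf (by decide), ?_⟩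
    have : ![f 0, f 1, f 2, f 3, f 4] = f := by
      funext a
      fin_cases a <;> rfl
    rwa [this]
  · rintro ⟨p, q, x, y, z, h1, h2, h3, h4, h⟩
    refine ⟨_, Fin.strictMono_iff_lt_succ.2 fun a => ?_, h⟩
    fin_cases a
    exacts [h1, h2, h3, h4]

theorem avoids_12543 (π : Equiv.Perm (Fin n)) :
    Pattern.Avoids p12543 π ↔ NoDec (shape π) (fun _ => True) π := by
  rw [Pattern.Avoids, contains_iff, ← not_iff_not, not_not]
  constructor
  · rintro ⟨p, q, x, y, z, h1, h2, h3, h4, h⟩ hn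
    exact hn x y z h3 h4 ((h 4 3).2 (by decide)) ((h 3 2).2 (by decide)) trivial
      ⟨p, q, h1, h2, (h 0 1).2 (by decide), (h 1 4).2 (by decide)⟩
  · unfold NoDec
    push Not
    rintro ⟨x, y, z, h1, h2, h3, h4, -, p, q, h5, h6, h7, h8⟩
    refine ⟨p, q, x, y, z, h5, h6, h1, h2, fun a b => ?_⟩
    fin_cases a <;> fin_cases b <;> simp [p12543] <;> order

theorem avoids_12354 (π : Equiv.Perm (Fin n)) :
    Pattern.Avoids p12354 π ↔ NoUp (shape π) (fun _ => True) π := by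
  rw [Pattern.Avoids, contains_iff, ← not_iff_not, not_not]
  constructor
  · rintro ⟨p, q, x, y, z, h1, h2, h3, h4, h⟩ hn
    exact hn x y z h3 h4 ((h 2 4).2 (by decide)) ((h 4 3).2 (by decide)) trivial
      ⟨p, q, h1, h2, (h 0 1).2 (by decide), (h 1 2).2 (by decide)⟩
  · unfold NoUp
    push Not
    rintro ⟨x, y, z, h1, h2, h3, h4, -, p, q, h5, h6, h7, h8⟩
    refine ⟨p, q, x, y, z, h5, h6, h1, h2, fun a b => ?_⟩
    fin_cases a <;> fin_cases b <;> simp [p12354] <;> order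

theorem eav_12543 (n : ℕ) : eav n p12543 = (mixed n 0).card := by
  classical
  rw [eav, Nat.card_eq_fintype_card, Fintype.card_subtype, mixed]
  congr 1
  ext π
  simp [avoids_12543, NoUp]

theorem eav_12354 (n : ℕ) : eav n p12354 = (mixed n n).card := by
  classical
  rw [eav, Nat.card_eq_fintype_card, Fintype.card_subtype, mixed]
  congr 1
  ext π
  simp [avoids_12354, NoDec, NoUp]

end EvenWilf

/-- The patterns 12354, 12543 are pairwise even-Wilf-equivalent. -/
theorem stmt17 :
    (∀ n : ℕ, eav n p12354 = eav n p12543) := by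
  intro n
  rw [EvenWilf.eav_12354, EvenWilf.eav_12543, EvenWilf.card_mixed n n le_rfl]
end
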